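/- arXiv:2010.15073 — 2 statements merged into one kernel-verified Lean document; each statement's English description precedes it below -/
import Mathlib

section
/- Let d ∈ ℕ with d ≥ 2, let (c_n) be a sequence of real numbers with c_n ≥ (1 + 2^(d+7)/log₂ n)^(1/d) for every n ≥ 2 (and c_1 ≥ 1), and let q ∈ ℝ with q ≥ 1 and q > 3/d. Then a random sequence (S_n) in the probability space 𝒢_{(c_n)} almost surely satisfies limsup_{n→∞} F_n(S_n)·(log₂ n)^(−q) < ∞; that is, ℙ[ limsup_{n→∞} F_n(S_n)·(log₂ n)^(−q) < ∞ ] = 1. -/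
open MeasureTheory
/-- Euclidean distance between two points of the integer lattice `ℤ^d`. -/
noncomputable def zdist {d : ℕ} (x y : Fin d → ℤ) : ℝ :=
  Real.sqrt (∑ i, ((x i : ℝ) - (y i : ℝ)) ^ 2)

/-- The grid `{1,…,n}^d` as a finset of `ℤ^d`. -/
noncomputable def grid (d n : ℕ) : Finset (Fin d → ℤ) :=
  Fintype.piFinset fun _ => Finset.Icc 1 (n : ℤ)

/-- `F_n(S)`: the least Lipschitz constant (Euclidean metric) of a surjection of `S`
onto the grid `{1,…,n}^d`. -/
noncomputable def Fleast (d n : ℕ) (S : Finset (Fin d → ℤ)) : ℝ :=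
  sInf {L : ℝ | ∃ f : (Fin d → ℤ) → (Fin d → ℤ),
    (∀ x ∈ S, f x ∈ grid d n) ∧
    (∀ y ∈ grid d n, ∃ x ∈ S, f x = y) ∧
    (∀ x ∈ S, ∀ y ∈ S, zdist (f x) (f y) ≤ L * zdist x y)}

/-- The grid `{1,…,m}^d` (with `m : ℤ`), as a finite type. -/
abbrev gridPt (d : ℕ) (m : ℤ) : Type := Fin d → (Finset.Icc (1 : ℤ) m : Finset ℤ)

/-- The space of configurations of `N` points inside the grid `{1,…,m}^d`. -/
abbrev Config (d : ℕ) (m : ℤ) (N : ℕ) : Type := {S : Finset (gridPt d m) // S.card = N}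

/-- A configuration in `gridPt d m`, regarded as a finset of the integer lattice. -/
def toLattice {d : ℕ} {m : ℤ} (S : Finset (gridPt d m)) : Finset (Fin d → ℤ) :=
  S.image fun x i => (x i : ℤ)

instance (d : ℕ) (m : ℤ) (N : ℕ) : MeasurableSpace (Config d m N) := ⊤

noncomputable def esy {X : Type*} (z : X → ℝ) (k : ℕ) (s : Finset X) : ℝ :=
  ∑ S ∈ s.powersetCard k, ∏ x ∈ S, z x

lemma esy_nonneg {X : Type*} (z : X → ℝ) (hz : ∀ x, 0 ≤ z x) (k : ℕ) (s : Finset X) :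
    0 ≤ esy z k s :=
  Finset.sum_nonneg fun _ _ => Finset.prod_nonneg fun x _ => hz x

lemma esy_insert {X : Type*} [DecidableEq X] (z : X → ℝ) (k : ℕ) (s : Finset X) (x : X)
    (hx : x ∉ s) : esy z (k+1) (insert x s) = esy z (k+1) s + z x * esy z k s := by
  unfold esy
  rw [Finset.powersetCard_succ_insert hx, Finset.sum_union, Finset.sum_image, Finset.mul_sum]
  · congr 1
    refine Finset.sum_congr rfl fun S hS => ?_
    rw [Finset.prod_insert]
    exact fun h => hx ((Finset.mem_powersetCard.1 hS).1 h)
  · intro S hS T hT h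
    have h1 : x ∉ S := fun h => hx ((Finset.mem_powersetCard.1 hS).1 h)
    have h2 : x ∉ T := fun h => hx ((Finset.mem_powersetCard.1 hT).1 h)
    rw [← Finset.erase_insert h1, ← Finset.erase_insert h2, h]
  · rw [Finset.disjoint_left]
    intro S hS hT
    obtain ⟨T, hT, rfl⟩ := Finset.mem_image.1 hT
    exact hx ((Finset.mem_powersetCard.1 hS).1 (Finset.mem_insert_self _ _))

lemma esy_erase {X : Type*} [DecidableEq X] (z : X → ℝ) (k : ℕ) (s : Finset X) (x : X)
    (hx : x ∈ s) : esy z (k+1) s = esy z (k+1) (s.erase x) + z x * esy z k (s.erase x) := by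
  rw [← esy_insert z k _ x (Finset.notMem_erase x s), Finset.insert_erase hx]

lemma esy_sum_erase {X : Type*} [DecidableEq X] (z : X → ℝ) (k : ℕ) (s : Finset X) :
    ∑ x ∈ s, esy z k (s.erase x) = ((s.card : ℝ) - k) * esy z k s := by
  unfold esy
  rw [Finset.sum_comm' (t' := s.powersetCard k) (s' := fun S => s \ S)]
  · rw [Finset.mul_sum]
    refine Finset.sum_congr rfl fun S hS => ?_
    obtain ⟨h1, h2⟩ := Finset.mem_powersetCard.1 hS
    rw [Finset.sum_const, Finset.card_sdiff_of_subset h1, nsmul_eq_mul, Nat.cast_sub (Finset.card_le_card h1), h2]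
  · intro x S
    simp only [Finset.mem_powersetCard, Finset.mem_sdiff, Finset.subset_erase]
    tauto

lemma esy_antitone {X : Type*} [DecidableEq X] (z : X → ℝ) (hz : ∀ x, 0 ≤ z x) (k : ℕ)
    (s : Finset X) (x y : X) (hx : x ∈ s) (hy : y ∈ s) (h : z x ≤ z y) :
    esy z k (s.erase y) ≤ esy z k (s.erase x) := by
  rcases eq_or_ne x y with rfl | hne
  · rfl
  cases k with
  | zero => simp [esy]
  | succ k =>
    rw [esy_erase z k (s.erase y) x (Finset.mem_erase.2 ⟨hne, hx⟩),
      esy_erase z k (s.erase x) y (Finset.mem_erase.2 ⟨hne.symm, hy⟩), Finset.erase_right_comm]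
    have := esy_nonneg z hz k ((s.erase x).erase y)
    gcongr

lemma esy_step {X : Type*} [DecidableEq X] (z : X → ℝ) (hz : ∀ x, 0 ≤ z x) (k : ℕ)
    (s : Finset X) :
    (s.card : ℝ) * (((k:ℝ) + 1) * esy z (k+1) s) ≤ (∑ x ∈ s, z x) * (((s.card : ℝ) - k) * esy z k s) := by
  have h1 : ∑ x ∈ s, z x * esy z k (s.erase x) = ((k:ℝ) + 1) * esy z (k+1) s := by
    have : ∀ x ∈ s, z x * esy z k (s.erase x) = esy z (k+1) s - esy z (k+1) (s.erase x) := by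
      intro x hx
      rw [esy_erase z k s x hx]; ring
    rw [Finset.sum_congr rfl this, Finset.sum_sub_distrib, esy_sum_erase]
    simp; ring
  rw [← h1, ← esy_sum_erase]
  apply AntivaryOn.card_mul_sum_le_sum_mul_sum
  intro x hx y hy h
  by_contra hlt
  push Not at hlt
  exact absurd h (not_lt.2 (esy_antitone z hz k s x y hx hy hlt.le))

lemma esy_le {X : Type*} [DecidableEq X] (z : X → ℝ) (hz : ∀ x, 0 ≤ z x) (s : Finset X)
    (hs : s.Nonempty) (k : ℕ) (hk : k ≤ s.card) :
    esy z k s ≤ (s.card.choose k) * ((∑ x ∈ s, z x) / s.card) ^ k := by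
  induction k with
  | zero => simp [esy]
  | succ k ih =>
    have ih := ih (by omega)
    have h := esy_step z hz k s
    have hc : (0:ℝ) < s.card := by exact_mod_cast hs.card_pos
    have hk1 : (0:ℝ) < (k:ℝ) + 1 := by positivity
    have hkc : (0:ℝ) ≤ (s.card:ℝ) - k := by
      have : ((k:ℕ):ℝ) ≤ s.card := by exact_mod_cast (by omega : k ≤ s.card)
      linarith
    have hch : ((s.card.choose (k+1) : ℕ):ℝ) * ((k:ℝ)+1) = (s.card.choose k) * ((s.card:ℝ) - k) := by
      have := Nat.choose_succ_right_eq s.card k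
      have h2 : ((s.card.choose (k+1) * (k+1) : ℕ):ℝ) = ((s.card.choose k * (s.card - k) : ℕ) : ℝ) := by rw [this]
      push_cast [Nat.cast_sub (by omega : k ≤ s.card)] at h2
      exact h2
    have hm : 0 ≤ ∑ x ∈ s, z x := Finset.sum_nonneg fun x _ => hz x
    have h3 : (s.card:ℝ) * (((k:ℝ)+1) * esy z (k+1) s) ≤ s.card * (((k:ℝ)+1) * ((s.card.choose (k+1)) * ((∑ x ∈ s, z x) / s.card) ^ (k+1))) := by
      calc _ ≤ _ := h
        _ ≤ (∑ x ∈ s, z x) * (((s.card : ℝ) - k) * ((s.card.choose k) * ((∑ x ∈ s, z x) / s.card) ^ k)) := by gcongr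
        _ = (((s.card.choose k) * ((s.card:ℝ) - k))) * ((∑ x ∈ s, z x) * ((∑ x ∈ s, z x) / s.card) ^ k) := by ring
        _ = _ := by rw [← hch, pow_succ]; field_simp
    exact le_of_mul_le_mul_left (le_of_mul_le_mul_left h3 hc) hk1

/-- exponential moment -/
lemma mgf_bound {X : Type*} [Fintype X] [DecidableEq X] [Nonempty X] (W : X → ℝ) (h0 : ∀ x, 0 ≤ W x)
    (h1 : ∀ x, W x ≤ 1) (N : ℕ) (hN : N ≤ Fintype.card X) (mu : ℝ)
    (hmu : mu = N * ((∑ x, W x) / Fintype.card X)) (l : ℝ) (hl : |l| ≤ 1) :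
    ∑ S ∈ (Finset.univ : Finset X).powersetCard N, Real.exp (l * ((∑ x ∈ S, W x) - mu)) ≤
      ((Fintype.card X).choose N) * Real.exp (mu * l ^ 2) := by
  have hcp : (0:ℝ) < Fintype.card X := by exact_mod_cast Fintype.card_pos
  have key := esy_le (fun x => Real.exp (l * W x)) (fun x => (Real.exp_pos _).le) Finset.univ
    Finset.univ_nonempty N (by simpa using hN)
  have hb : (∑ x, Real.exp (l * W x)) / Fintype.card X ≤ Real.exp ((Real.exp l - 1) * ((∑ x, W x) / Fintype.card X)) := by
    have h2 : ∀ x, Real.exp (l * W x) ≤ 1 + (Real.exp l - 1) * W x := by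
      intro x
      have := convexOn_exp.2 (Set.mem_univ l) (Set.mem_univ 0) (h0 x) (sub_nonneg.2 (h1 x)) (by ring)
      simp only [smul_eq_mul, mul_zero, add_zero, Real.exp_zero, mul_one] at this
      rw [mul_comm]; linarith
    calc (∑ x, Real.exp (l * W x)) / Fintype.card X ≤ (∑ x, (1 + (Real.exp l - 1) * W x)) / Fintype.card X := by
          gcongr with x; exact h2 x
      _ = (Real.exp l - 1) * ((∑ x, W x) / Fintype.card X) + 1 := by
          rw [Finset.sum_add_distrib, ← Finset.mul_sum]; simp; field_simp; ring
      _ ≤ _ := Real.add_one_le_exp _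
  have hexp : Real.exp l - 1 ≤ l + l ^ 2 := by
    have := Real.abs_exp_sub_one_sub_id_le hl
    have := (abs_le.1 this).2
    linarith
  have hmu0 : 0 ≤ mu := by
    rw [hmu]
    have : 0 ≤ ∑ x, W x := Finset.sum_nonneg fun x _ => h0 x
    positivity
  have hE : esy (fun x => Real.exp (l * W x)) N Finset.univ ≤ ((Fintype.card X).choose N) * Real.exp (mu * l + mu * l ^ 2) := by
    refine key.trans ?_
    rw [Finset.card_univ]
    gcongr
    calc _ ≤ (Real.exp ((Real.exp l - 1) * ((∑ x, W x) / Fintype.card X))) ^ N := by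
          apply pow_le_pow_left₀ _ hb
          have : 0 ≤ ∑ x, Real.exp (l * W x) := Finset.sum_nonneg fun x _ => (Real.exp_pos _).le
          positivity
      _ = Real.exp (mu * (Real.exp l - 1)) := by rw [← Real.exp_nat_mul, hmu]; ring_nf
      _ ≤ _ := by
          apply Real.exp_le_exp.2
          nlinarith
  have : ∑ S ∈ (Finset.univ : Finset X).powersetCard N, Real.exp (l * ((∑ x ∈ S, W x) - mu)) = esy (fun x => Real.exp (l * W x)) N Finset.univ * Real.exp (- (mu * l)) := by
    unfold esy
    rw [Finset.sum_mul]
    refine Finset.sum_congr rfl fun S _ => ?_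
    rw [← Real.exp_sum, ← Real.exp_add, ← Finset.mul_sum]; ring_nf
  rw [this]
  calc _ ≤ ((Fintype.card X).choose N) * Real.exp (mu * l + mu * l ^ 2) * Real.exp (- (mu * l)) := by gcongr
    _ = _ := by rw [mul_assoc, ← Real.exp_add]; ring_nf

lemma conc {X : Type*} [Fintype X] [DecidableEq X] [Nonempty X] (W : X → ℝ) (h0 : ∀ x, 0 ≤ W x)
    (h1 : ∀ x, W x ≤ 1) (N : ℕ) (hN : N ≤ Fintype.card X) (mu : ℝ)
    (hmu : mu = N * ((∑ x, W x) / Fintype.card X)) (hpos : 0 < mu) (t : ℝ) (ht0 : 0 ≤ t) (ht : t ≤ 2 * mu) :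
    ((((Finset.univ : Finset X).powersetCard N).filter
      (fun S => t < |(∑ x ∈ S, W x) - mu|)).card : ℝ) ≤
      2 * Real.exp (- (t ^ 2 / (4 * mu))) * ((Fintype.card X).choose N) := by
  set l := t / (2 * mu) with hl
  have hl0 : 0 ≤ l := by positivity
  have hl1 : l ≤ 1 := by rw [hl, div_le_one (by positivity)]; exact ht
  have a1 := mgf_bound W h0 h1 N hN mu hmu l (by rw [abs_le]; constructor <;> linarith)
  have a2 := mgf_bound W h0 h1 N hN mu hmu (-l) (by rw [abs_le]; constructor <;> linarith)
  have e1 : mu * l ^ 2 - l * t = - (t ^ 2 / (4 * mu)) := by rw [hl]; field_simp; ring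
  have : (((((Finset.univ : Finset X).powersetCard N).filter
      (fun S => t < |(∑ x ∈ S, W x) - mu|)).card : ℝ)) * Real.exp (l * t) ≤ 
      ∑ S ∈ (Finset.univ : Finset X).powersetCard N, (Real.exp (l * ((∑ x ∈ S, W x) - mu)) + Real.exp (-l * ((∑ x ∈ S, W x) - mu))) := by
    rw [← nsmul_eq_mul, ← Finset.sum_const]
    refine (Finset.sum_le_sum ?_).trans (Finset.sum_le_sum_of_subset_of_nonneg (Finset.filter_subset _ _) ?_)
    · intro S hS
      have hS := (Finset.mem_filter.1 hS).2
      rcases lt_abs.1 hS with h | h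
      · have : Real.exp (l * t) ≤ Real.exp (l * ((∑ x ∈ S, W x) - mu)) := Real.exp_le_exp.2 (by gcongr)
        have := Real.exp_pos (-l * ((∑ x ∈ S, W x) - mu))
        linarith
      · have : Real.exp (l * t) ≤ Real.exp (-l * ((∑ x ∈ S, W x) - mu)) := Real.exp_le_exp.2 (by nlinarith)
        have := Real.exp_pos (l * ((∑ x ∈ S, W x) - mu))
        linarith
    · intros; positivity
  rw [Finset.sum_add_distrib] at this
  rw [neg_sq] at a2
  have h3 := this.trans (add_le_add a1 a2)
  rw [← e1, Real.exp_sub]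
  have := Real.exp_pos (l*t)
  rw [mul_div_assoc', div_mul_eq_mul_div, le_div_iff₀ this]
  linarith
abbrev Cell (d K : ℕ) : Type := Fin d → Fin (2 ^ K)

def cbox {d K : ℕ} (a : Fin d → ℕ) (x : Cell d K) : Finset (Cell d K) :=
  Fintype.piFinset fun i => Finset.univ.filter fun z : Fin (2 ^ K) => (z : ℕ) / 2 ^ a i = (x i : ℕ) / 2 ^ a i

lemma mem_cbox {d K : ℕ} (a : Fin d → ℕ) (x y : Cell d K) :
    y ∈ cbox a x ↔ ∀ i, (y i : ℕ) / 2 ^ a i = (x i : ℕ) / 2 ^ a i := by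
  simp [cbox, Fintype.mem_piFinset]

lemma count_div {K k : ℕ} (hk : k ≤ K) (y : Fin (2 ^ K)) :
    (Finset.univ.filter fun z : Fin (2 ^ K) => (z : ℕ) / 2 ^ k = (y : ℕ) / 2 ^ k).card = 2 ^ k := by
  have hp : 0 < 2 ^ k := by positivity
  have h1 : ((Finset.univ.filter fun z : Fin (2 ^ K) => (z : ℕ) / 2 ^ k = (y : ℕ) / 2 ^ k).map Fin.valEmbedding)
      = Finset.Ico ((y : ℕ) / 2 ^ k * 2 ^ k) (((y : ℕ) / 2 ^ k + 1) * 2 ^ k) := by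
    ext z
    simp only [Finset.mem_map, Finset.mem_filter, Finset.mem_univ, true_and, Fin.valEmbedding_apply, Finset.mem_Ico]
    constructor
    · rintro ⟨w, hw, rfl⟩
      rw [← hw]
      exact ⟨Nat.div_mul_le_self _ _, Nat.lt_mul_of_div_lt (Nat.lt_succ_self _) hp⟩
    · rintro ⟨h1, h2⟩
      have hz : z / 2 ^ k = (y : ℕ) / 2 ^ k := by
        apply le_antisymm
        · exact Nat.lt_succ_iff.1 ((Nat.div_lt_iff_lt_mul hp).2 h2)
        · exact (Nat.le_div_iff_mul_le hp).2 h1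
      have hzK : z < 2 ^ K := by
        have hy : (y : ℕ) / 2 ^ k < 2 ^ (K - k) := by
          rw [Nat.div_lt_iff_lt_mul hp, ← pow_add, Nat.sub_add_cancel hk]; exact y.2
        calc z < _ := h2
          _ ≤ 2 ^ (K - k) * 2 ^ k := Nat.mul_le_mul_right _ hy
          _ = 2 ^ K := by rw [← pow_add, Nat.sub_add_cancel hk]
      exact ⟨⟨z, hzK⟩, hz, rfl⟩
  rw [← Finset.card_map Fin.valEmbedding, h1, Nat.card_Ico, add_mul]; simp

lemma card_cbox {d K : ℕ} (a : Fin d → ℕ) (ha : ∀ i, a i ≤ K) (x : Cell d K) :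
    (cbox a x).card = 2 ^ (∑ i, a i) := by
  rw [cbox, Fintype.card_piFinset, Finset.prod_congr rfl (fun i _ => count_div (ha i) (x i)),
    Finset.prod_pow_eq_pow_sum]

/-- projection whose fibres are the segments in direction `i` -/
def cproj {d K : ℕ} (i : Fin d) (k : ℕ) (x : Cell d K) : Fin d → ℕ :=
  fun j => if j = i then (x j : ℕ) / 2 ^ k else x j

lemma cproj_eq {d K : ℕ} (i : Fin d) (k : ℕ) (x y : Cell d K) :
    cproj i k x = cproj i k y ↔ (x i : ℕ) / 2 ^ k = (y i : ℕ) / 2 ^ k ∧ ∀ j, j ≠ i → x j = y j := by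
  constructor
  · intro h
    refine ⟨by simpa [cproj] using congrFun h i, fun j hj => ?_⟩
    have := congrFun h j
    simp only [cproj, hj, if_false] at this
    exact Fin.ext this
  · rintro ⟨h1, h2⟩
    ext j
    by_cases hj : j = i
    · subst hj; simpa [cproj] using h1
    · simp [cproj, hj, h2 j hj]

lemma card_line {d K : ℕ} (i : Fin d) (k : ℕ) (hk : k ≤ K) (x y : Cell d K) :
    (Finset.univ.filter fun z : Cell d K => (z i : ℕ) / 2 ^ k = (y i : ℕ) / 2 ^ k ∧ ∀ j, j ≠ i → z j = x j).card = 2 ^ k := by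
  have : (Finset.univ.filter fun z : Cell d K => (z i : ℕ) / 2 ^ k = (y i : ℕ) / 2 ^ k ∧ ∀ j, j ≠ i → z j = x j)
      = Fintype.piFinset (fun j => if j = i then (Finset.univ.filter fun z : Fin (2 ^ K) => (z : ℕ) / 2 ^ k = (y i : ℕ) / 2 ^ k) else {x j}) := by
    ext z
    simp only [Finset.mem_filter, Finset.mem_univ, true_and, Fintype.mem_piFinset]
    constructor
    · rintro ⟨h1, h2⟩ j
      by_cases hj : j = i
      · subst hj; simpa using h1
      · simpa [hj] using h2 j hj
    · intro h
      refine ⟨by simpa using h i, fun j hj => by simpa [hj] using h j⟩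
  rw [this, Fintype.card_piFinset, Finset.prod_eq_single i]
  · simp [count_div hk]
  · intro j _ hj; simp [hj]
  · simp

lemma card_fib {d K : ℕ} (i : Fin d) (k : ℕ) (hk : k ≤ K) (x : Cell d K) :
    (Finset.univ.filter fun z : Cell d K => cproj i k z = cproj i k x).card = 2 ^ k := by
  simp_rw [cproj_eq]
  exact card_line i k hk x x

lemma zero_sum {d K : ℕ} (s : Cell d K → ℝ) (a : Fin d → ℕ) (i : Fin d) (hi : a i + 1 ≤ K) (x : Cell d K) :
    ∑ z ∈ Finset.univ.filter (fun z : Cell d K => cproj i (a i + 1) z = cproj i (a i + 1) x),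
      (2 * (∑ y ∈ cbox a z, s y) - ∑ y ∈ cbox (Function.update a i (a i + 1)) z, s y) = 0 := by
  rw [Finset.sum_sub_distrib, ← Finset.mul_sum]
  have key : ∀ y z : Cell d K, cproj i (a i + 1) z = cproj i (a i + 1) x → 
      (y ∈ cbox a z ↔ y ∈ cbox (Function.update a i (a i + 1)) x ∧ (y i : ℕ) / 2 ^ a i = (z i : ℕ) / 2 ^ a i) := by
    intro y z hz
    rw [cproj_eq] at hz
    obtain ⟨h1, h2⟩ := hz
    simp only [mem_cbox]
    constructor
    · intro h
      refine ⟨fun j => ?_, h i⟩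
      by_cases hj : j = i
      · subst hj
        simp only [Function.update_self]
        rw [← h1, pow_succ, ← Nat.div_div_eq_div_mul, ← Nat.div_div_eq_div_mul, h j]
      · simp only [Function.update_of_ne hj, h j, h2 j hj]
    · rintro ⟨h, hyi⟩ j
      by_cases hj : j = i
      · subst hj; exact hyi
      · have := h j
        simp only [Function.update_of_ne hj] at this
        rw [this, h2 j hj]
  have e1 : ∑ z ∈ Finset.univ.filter (fun z : Cell d K => cproj i (a i + 1) z = cproj i (a i + 1) x),
      ∑ y ∈ cbox a z, s y = 2 ^ (a i) * ∑ y ∈ cbox (Function.update a i (a i + 1)) x, s y := by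
    rw [Finset.sum_comm' (t' := cbox (Function.update a i (a i + 1)) x)
      (s' := fun y => Finset.univ.filter fun z : Cell d K => (z i : ℕ) / 2 ^ a i = (y i : ℕ) / 2 ^ a i ∧ ∀ j, j ≠ i → z j = x j)]
    · rw [Finset.mul_sum]
      refine Finset.sum_congr rfl fun y _ => ?_
      rw [Finset.sum_const, card_line i _ (by omega)]; simp
    · intro z y
      simp only [Finset.mem_filter, Finset.mem_univ, true_and]
      constructor
      · rintro ⟨h1, h2⟩
        have := (key y z h1).1 h2
        rw [cproj_eq] at h1
        exact ⟨⟨this.2.symm, h1.2⟩, this.1⟩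
      · rintro ⟨⟨h1, h2⟩, h3⟩
        have h4 : cproj i (a i + 1) z = cproj i (a i + 1) x := by
          rw [cproj_eq]
          refine ⟨?_, h2⟩
          have := (mem_cbox _ _ _).1 h3 i
          simp only [Function.update_self] at this
          rw [← this, pow_succ, ← Nat.div_div_eq_div_mul, ← Nat.div_div_eq_div_mul, h1]
        exact ⟨h4, (key y z h4).2 ⟨h3, h1.symm⟩⟩
  have e2 : ∀ z ∈ Finset.univ.filter (fun z : Cell d K => cproj i (a i + 1) z = cproj i (a i + 1) x),
      ∑ y ∈ cbox (Function.update a i (a i + 1)) z, s y = ∑ y ∈ cbox (Function.update a i (a i + 1)) x, s y := by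
    intro z hz
    simp only [Finset.mem_filter, Finset.mem_univ, true_and, cproj_eq] at hz
    congr 1
    ext y
    simp only [mem_cbox]
    refine forall_congr' fun j => ?_
    by_cases hj : j = i
    · subst hj; simp only [Function.update_self, hz.1]
    · rw [hz.2 j hj]
  rw [e1, Finset.sum_congr rfl e2, Finset.sum_const, card_fib i _ hi]
  simp only [nsmul_eq_mul, Nat.cast_pow, Nat.cast_ofNat]
  ring

def Adj {d K : ℕ} (x y : Cell d K) : Prop := ∀ i, (x i : ℕ) ≤ y i + 1 ∧ (y i : ℕ) ≤ x i + 1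

open Classical in
noncomputable def bdry {d K : ℕ} (A : Finset (Cell d K)) : Finset (Cell d K) :=
  Finset.univ.filter fun x => x ∉ A ∧ ∃ y ∈ A, Adj x y

lemma mixed {d K : ℕ} (A : Finset (Cell d K)) (i : Fin d) (k : ℕ) (p : Cell d K) (hp : p ∈ A) (n : ℕ) :
    ∀ r : Cell d K, r ∉ A → cproj i k r = cproj i k p → (p i : ℕ) ≤ r i + n → (r i : ℕ) ≤ p i + n →
    ∃ z ∈ bdry A, cproj i k z = cproj i k p := by
  induction n with
  | zero =>
    intro r hr h h1 h2
    exfalso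
    apply hr
    have : r = p := by
      rw [cproj_eq] at h
      ext j
      by_cases hj : j = i
      · subst hj; omega
      · rw [h.2 j hj]
    rwa [this]
  | succ n ih =>
    intro r hr h h1 h2
    have hne : (p i : ℕ) ≠ r i := by
      intro he
      apply hr
      have : r = p := by
        rw [cproj_eq] at h
        ext j
        by_cases hj : j = i
        · subst hj; omega
        · rw [h.2 j hj]
      rwa [this]
    obtain ⟨w, hw1, hw2, hw3, hw4, hw5⟩ : ∃ w : Fin (2 ^ K), (p i : ℕ) ≤ w + n ∧ (w : ℕ) ≤ p i + n ∧
        (w : ℕ) ≤ r i + 1 ∧ (r i : ℕ) ≤ w + 1 ∧ (w : ℕ) / 2 ^ k = (p i : ℕ) / 2 ^ k := by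
      have hd := ((cproj_eq i k r p).1 h).1
      rcases lt_or_gt_of_ne hne with hlt | hlt
      · refine ⟨⟨r i - 1, by have := (r i).2; omega⟩, by simp; omega, by simp; omega, by simp; omega, by simp; omega, ?_⟩
        simp only
        apply le_antisymm
        · rw [← hd]; exact Nat.div_le_div_right (by omega)
        · exact Nat.div_le_div_right (by omega)
      · refine ⟨⟨r i + 1, by have := (p i).2; omega⟩, by simp; omega, by simp; omega, by simp, by simp; omega, ?_⟩
        simp only
        apply le_antisymm
        · exact Nat.div_le_div_right (by omega)
        · rw [← hd]; exact Nat.div_le_div_right (by omega)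
    have hr' : cproj i k (Function.update r i w) = cproj i k p := by
      rw [cproj_eq] at h ⊢
      refine ⟨by simpa using hw5, fun j hj => ?_⟩
      rw [Function.update_of_ne hj]; exact h.2 j hj
    by_cases hA : Function.update r i w ∈ A
    · refine ⟨r, ?_, h⟩
      simp only [bdry, Finset.mem_filter, Finset.mem_univ, true_and]
      refine ⟨hr, _, hA, fun j => ?_⟩
      by_cases hj : j = i
      · subst hj; simp; omega
      · simp [Function.update_of_ne hj]
    · exact ih _ hA hr' (by simpa using hw1) (by simpa using hw2)

lemma line_bound {d K : ℕ} (h : Cell d K → ℝ) (i : Fin d) (k : ℕ) (hk : k ≤ K) (H : ℝ)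
    (hH : ∀ x, |h x| ≤ H)
    (h0 : ∀ x : Cell d K, ∑ z ∈ Finset.univ.filter (fun z : Cell d K => cproj i k z = cproj i k x), h z = 0)
    (A : Finset (Cell d K)) :
    |∑ x ∈ A, h x| ≤ 2 ^ k * H * (bdry A).card := by
  classical
  rw [← Finset.sum_fiberwise_of_maps_to (s := A) (t := Finset.univ.image (cproj i k)) (g := cproj i k)
    (fun x _ => Finset.mem_image_of_mem _ (Finset.mem_univ x)),
    Finset.card_eq_sum_card_fiberwise (s := bdry A) (t := Finset.univ.image (cproj i k)) (f := cproj i k)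
    (fun x _ => Finset.mem_image_of_mem _ (Finset.mem_univ x))]
  push_cast
  rw [Finset.mul_sum]
  refine (Finset.abs_sum_le_sum_abs _ _).trans (Finset.sum_le_sum fun b hb => ?_)
  obtain ⟨x, -, rfl⟩ := Finset.mem_image.1 hb
  have hH0 : 0 ≤ H := (abs_nonneg _).trans (hH x)
  by_cases hE : ∃ p ∈ A, cproj i k p = cproj i k x
  · obtain ⟨p, hpA, hp⟩ := hE
    by_cases hF : ∃ r, r ∉ A ∧ cproj i k r = cproj i k x
    · obtain ⟨r, hrA, hr⟩ := hF
      obtain ⟨z, hz, hzp⟩ := mixed A i k p hpA (p i + r i) r hrA (hr.trans hp.symm) (by omega) (by omega)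
      have c1 : (1 : ℝ) ≤ ((bdry A).filter (fun a => cproj i k a = cproj i k x)).card := by
        have : 0 < ((bdry A).filter (fun a => cproj i k a = cproj i k x)).card :=
          Finset.card_pos.2 ⟨z, Finset.mem_filter.2 ⟨hz, hzp.trans hp⟩⟩
        exact_mod_cast this
      have c2 : ((A.filter (fun a => cproj i k a = cproj i k x)).card : ℝ) ≤ 2 ^ k := by
        have := Finset.card_le_card (Finset.filter_subset_filter (fun a => cproj i k a = cproj i k x) (Finset.subset_univ A))
        rw [card_fib i k hk] at this
        exact_mod_cast this
      calc |∑ z ∈ A.filter (fun a => cproj i k a = cproj i k x), h z| 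
          ≤ ∑ z ∈ A.filter (fun a => cproj i k a = cproj i k x), H :=
            (Finset.abs_sum_le_sum_abs _ _).trans (Finset.sum_le_sum fun z _ => hH z)
        _ = ((A.filter (fun a => cproj i k a = cproj i k x)).card : ℝ) * H := by simp
        _ ≤ 2 ^ k * H := by gcongr
        _ ≤ _ := le_mul_of_one_le_right (by positivity) c1
    · push Not at hF
      have : A.filter (fun a => cproj i k a = cproj i k x) = Finset.univ.filter (fun a => cproj i k a = cproj i k x) := by
        ext z
        simp only [Finset.mem_filter, Finset.mem_univ, true_and, and_iff_right_iff_imp]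
        intro hz
        by_contra hzA
        exact hF z hzA hz
      rw [this, h0 x, abs_zero]
      positivity
  · push Not at hE
    rw [Finset.filter_false_of_mem hE]
    simp; positivity

/-- exponent vectors -/
def av (d t : ℕ) : Fin d → ℕ := fun i => (t + (d - 1 - i)) / d

lemma mul_add_div_lt (d q r : ℕ) (h : r < d) : (d * q + r) / d = q := by
  rw [Nat.mul_add_div (by omega), Nat.div_eq_of_lt h]; rfl

lemma av_zero (d : ℕ) (i : Fin d) : av d 0 i = 0 := by
  simp only [av]
  apply Nat.div_eq_of_lt
  have := i.2; omega

lemma av_top (d K : ℕ) (i : Fin d) : av d (d * K) i = K := by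
  simp only [av]
  have := i.2
  exact mul_add_div_lt _ _ _ (by omega)

lemma av_mono (d : ℕ) {t t' : ℕ} (h : t ≤ t') (i : Fin d) : av d t i ≤ av d t' i :=
  Nat.div_le_div_right (by omega)

lemma av_self (d t : ℕ) (hd : 0 < d) : av d t ⟨t % d, Nat.mod_lt _ hd⟩ = t / d := by
  simp only [av]
  have h1 := Nat.mod_lt t hd
  have h2 := Nat.div_add_mod t d
  have : t + (d - 1 - t % d) = d * (t / d) + (d - 1) := by omega
  rw [this, mul_add_div_lt _ _ _ (by omega)]

lemma av_succ (d t : ℕ) (hd : 0 < d) : av d (t + 1) =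
    Function.update (av d t) ⟨t % d, Nat.mod_lt _ hd⟩ (av d t ⟨t % d, Nat.mod_lt _ hd⟩ + 1) := by
  ext j
  have h1 := Nat.mod_lt t hd
  have h2 := Nat.div_add_mod t d
  have hj2 := j.2
  by_cases hj : j = ⟨t % d, Nat.mod_lt _ hd⟩
  · rw [hj, Function.update_self, av_self _ _ hd]
    simp only [av]
    have : t + 1 + (d - 1 - t % d) = d * (t / d + 1) + 0 := by rw [mul_add]; omega
    rw [this, mul_add_div_lt _ _ _ (by omega)]
  · rw [Function.update_of_ne hj]
    simp only [av]
    have hne : (j : ℕ) ≠ t % d := fun h => hj (Fin.ext h)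
    rcases lt_or_gt_of_ne hne with hlt | hlt
    · have e1 : t + 1 + (d - 1 - j) = d * (t / d + 1) + (t % d - j) := by rw [mul_add]; omega
      have e2 : t + (d - 1 - j) = d * (t / d + 1) + (t % d - j - 1) := by rw [mul_add]; omega
      rw [e1, e2, mul_add_div_lt _ _ _ (by omega), mul_add_div_lt _ _ _ (by omega)]
    · have e1 : t + 1 + (d - 1 - j) = d * (t / d) + (t % d + d - j) := by omega
      have e2 : t + (d - 1 - j) = d * (t / d) + (t % d + d - j - 1) := by omega
      rw [e1, e2, mul_add_div_lt _ _ _ (by omega), mul_add_div_lt _ _ _ (by omega)]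

lemma av_sum (d t : ℕ) (hd : 0 < d) : ∑ i, av d t i = t := by
  induction t with
  | zero => simp [av_zero]
  | succ t ih =>
    rw [av_succ d t hd, Finset.sum_update_of_mem (Finset.mem_univ _), add_right_comm, 
      ← Finset.erase_eq, Finset.add_sum_erase _ _ (Finset.mem_univ _), ih]

lemma step_bound {d K : ℕ} (hd : 2 ≤ d) (s : Cell d K → ℝ) (v B : ℝ) (hB : 0 ≤ B) (t : ℕ) (ht : t < d * K)
    (h1 : ∀ x, |∑ y ∈ cbox (av d t) x, s y - v * 2 ^ t| ≤ B * Real.sqrt (2 ^ t))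
    (h2 : ∀ x, |∑ y ∈ cbox (av d (t + 1)) x, s y - v * 2 ^ (t + 1)| ≤ B * Real.sqrt (2 ^ (t + 1)))
    (A : Finset (Cell d K)) :
    |∑ x ∈ A, ((∑ y ∈ cbox (av d t) x, s y) / 2 ^ t - (∑ y ∈ cbox (av d (t + 1)) x, s y) / 2 ^ (t + 1))|
      ≤ 4 * B * (bdry A).card := by
  have hd0 : 0 < d := by omega
  set i : Fin d := ⟨t % d, Nat.mod_lt _ hd0⟩ with hi
  have hai : av d t i = t / d := av_self d t hd0
  have hiK : av d t i + 1 ≤ K := by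
    rw [hai]; exact (Nat.div_lt_iff_lt_mul hd0).2 (by rwa [mul_comm])
  have hs2 : Real.sqrt (2 ^ (t + 1)) ≤ 2 * Real.sqrt (2 ^ t) := by
    rw [pow_succ, Real.sqrt_mul (by positivity), mul_comm]
    gcongr
    rw [Real.sqrt_le_left (by norm_num)]; norm_num
  have lb := line_bound (fun x => 2 * (∑ y ∈ cbox (av d t) x, s y) - ∑ y ∈ cbox (av d (t + 1)) x, s y) i
    (av d t i + 1) hiK (4 * B * Real.sqrt (2 ^ t)) ?_ ?_ A
  · have e : ∑ x ∈ A, ((∑ y ∈ cbox (av d t) x, s y) / 2 ^ t - (∑ y ∈ cbox (av d (t + 1)) x, s y) / 2 ^ (t + 1))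
      = (∑ x ∈ A, (2 * (∑ y ∈ cbox (av d t) x, s y) - ∑ y ∈ cbox (av d (t + 1)) x, s y)) / 2 ^ (t + 1) := by
      rw [Finset.sum_div]
      refine Finset.sum_congr rfl fun x _ => ?_
      rw [pow_succ]; field_simp
    rw [e, abs_div, abs_of_pos (by positivity : (0:ℝ) < 2 ^ (t+1)), div_le_iff₀ (by positivity)]
    refine lb.trans ?_
    have hp : (2:ℝ) ^ (av d t i) ≤ Real.sqrt (2 ^ t) := by
      apply Real.le_sqrt_of_sq_le
      rw [← pow_mul]
      apply pow_le_pow_right₀ (by norm_num)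
      rw [hai]
      calc t / d * 2 ≤ t / d * d := Nat.mul_le_mul_left _ hd
        _ ≤ t := Nat.div_mul_le_self _ _
    have hsq : Real.sqrt (2 ^ t) * Real.sqrt (2 ^ t) = 2 ^ t := Real.mul_self_sqrt (by positivity)
    calc (2:ℝ) ^ (av d t i + 1) * (4 * B * Real.sqrt (2 ^ t)) * (bdry A).card
        = 8 * B * (bdry A).card * Real.sqrt (2 ^ t) * 2 ^ (av d t i) := by ring
      _ ≤ 8 * B * (bdry A).card * Real.sqrt (2 ^ t) * Real.sqrt (2 ^ t) := by gcongr
      _ = 8 * B * (bdry A).card * (Real.sqrt (2 ^ t) * Real.sqrt (2 ^ t)) := by ring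
      _ = _ := by rw [hsq]; ring
  · intro x
    have a1 := abs_le.1 (h1 x)
    have a2 := abs_le.1 (h2 x)
    have : B * Real.sqrt (2 ^ (t + 1)) ≤ B * (2 * Real.sqrt (2 ^ t)) := by gcongr
    have e : v * 2 ^ (t + 1) = 2 * (v * 2 ^ t) := by ring
    rw [e] at a2
    rw [abs_le]
    constructor <;> linarith [a1.1, a1.2, a2.1, a2.2]
  · intro x
    have := zero_sum s (av d t) i hiK x
    rw [← av_succ d t hd0] at this
    exact this

lemma core {d K : ℕ} (hd : 2 ≤ d) (s : Cell d K → ℝ) (v B : ℝ) (hB : 0 ≤ B)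
    (h1 : ∀ t ≤ d * K, ∀ x, |∑ y ∈ cbox (av d t) x, s y - v * 2 ^ t| ≤ B * Real.sqrt (2 ^ t))
    (htot : ∑ y, s y = v * 2 ^ (d * K)) (hBv : 4 * B * (d * K) ≤ v / 2) (hBv' : B ≤ v / 2)
    (A : Finset (Cell d K)) :
    (A.card : ℝ) * v ≤ ∑ x ∈ A, s x + ∑ x ∈ bdry A, s x := by
  set g : ℕ → Cell d K → ℝ := fun t x => (∑ y ∈ cbox (av d t) x, s y) / 2 ^ t with hg
  have g0 : ∀ x, g 0 x = s x := by
    intro x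
    have : cbox (av d 0) x = {x} := by
      ext y
      simp only [mem_cbox, av_zero, pow_zero, Nat.div_one, Finset.mem_singleton]
      constructor
      · intro h; ext i; exact h i
      · rintro rfl i; rfl
    simp [hg, this]
  have gT : ∀ x, g (d * K) x = v := by
    intro x
    have : cbox (av d (d * K)) x = Finset.univ := by
      ext y
      simp only [mem_cbox, av_top, Finset.mem_univ, iff_true]
      intro i
      rw [Nat.div_eq_of_lt (y i).2, Nat.div_eq_of_lt (x i).2]
    simp [hg, this, htot]
  have tel : ∀ T ≤ d * K, ∑ x ∈ A, g T x - ∑ x ∈ A, g 0 x ≤ 4 * B * T * (bdry A).card := by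
    intro T
    induction T with
    | zero => simp
    | succ T ih =>
      intro hT
      have i1 := ih (by omega)
      have i2 := step_bound hd s v B hB T (by omega) (h1 T (by omega)) (h1 (T+1) hT) A
      rw [Finset.sum_sub_distrib] at i2
      have i3 := (abs_le.1 i2).1
      push_cast
      simp only [hg] at i1 ⊢
      linarith
  have t1 := tel (d * K) le_rfl
  simp only [g0, gT] at t1
  rw [Finset.sum_const, nsmul_eq_mul] at t1
  have hs : ∀ x, v / 2 ≤ s x := by
    intro x
    have := h1 0 (by omega) x
    have e := g0 x
    simp only [hg, pow_zero, div_one] at e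
    rw [e] at this
    simp only [pow_zero, mul_one, Real.sqrt_one] at this
    linarith [(abs_le.1 this).1]
  have t2 : v / 2 * (bdry A).card ≤ ∑ x ∈ bdry A, s x := by
    rw [mul_comm, ← nsmul_eq_mul, ← Finset.sum_const]
    exact Finset.sum_le_sum fun x _ => hs x
  have t3 : 4 * B * ((d * K : ℕ):ℝ) * (bdry A).card ≤ v / 2 * (bdry A).card := by
    gcongr; push_cast; exact hBv
  linarith
noncomputable def kset (m M : ℕ) (x : ℤ) (j : ℕ) : Finset ℕ :=
  (Finset.range (m * M)).filter fun u => ((u / M : ℕ) : ℤ) + 1 = x ∧ u / m = j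

noncomputable def kern1 (m M : ℕ) (x : ℤ) (j : ℕ) : ℝ := ((kset m M x j).card : ℝ) / M

lemma kern1_nonneg (m M : ℕ) (x : ℤ) (j : ℕ) : 0 ≤ kern1 m M x j := by unfold kern1; positivity

lemma count_div' (m M j : ℕ) (hm : 0 < m) (hj : j < M) :
    ((Finset.range (m * M)).filter fun u => u / m = j).card = m := by
  have : (Finset.range (m * M)).filter (fun u => u / m = j) = Finset.Ico (m * j) (m * (j + 1)) := by
    ext u
    simp only [Finset.mem_filter, Finset.mem_range, Finset.mem_Ico]
    constructor
    · rintro ⟨-, rfl⟩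
      exact ⟨Nat.mul_div_le _ _, Nat.lt_mul_div_succ _ hm⟩
    · rintro ⟨h1, h2⟩
      refine ⟨h2.trans_le (Nat.mul_le_mul_left _ hj), ?_⟩
      apply le_antisymm
      · exact Nat.lt_succ_iff.1 ((Nat.div_lt_iff_lt_mul hm).2 (by rwa [mul_comm] at h2))
      · exact (Nat.le_div_iff_mul_le hm).2 (by rwa [mul_comm] at h1)
  rw [this, Nat.card_Ico, mul_add]; simp

lemma kern1_row (m M : ℕ) (hm : 0 < m) (hM : 0 < M) (x : ℤ) (hx : x ∈ Finset.Icc (1:ℤ) m) :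
    ∑ j : Fin M, kern1 m M x j = 1 := by
  have hx := Finset.mem_Icc.1 hx
  unfold kern1
  rw [← Finset.sum_div, Fin.sum_univ_eq_sum_range (fun j => ((kset m M x j).card : ℝ)) M, div_eq_one_iff_eq (by positivity)]
  rw [← Nat.cast_sum]
  norm_cast
  have h1 : ((Finset.range (m * M)).filter fun u => ((u / M : ℕ) : ℤ) + 1 = x).card = M := by
    have := count_div' M m (x - 1).toNat hM (by omega)
    rw [mul_comm M m] at this
    convert this using 3
    generalize _ / M = w
    omega
  have hmap : ∀ u ∈ (Finset.range (m * M)).filter (fun u => ((u / M : ℕ) : ℤ) + 1 = x), u / m ∈ Finset.range M := by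
    intro u hu
    rw [Finset.mem_range, Nat.div_lt_iff_lt_mul hm, mul_comm]
    exact Finset.mem_range.1 (Finset.mem_filter.1 hu).1
  rw [Finset.card_eq_sum_card_fiberwise hmap] at h1
  conv_rhs => rw [← h1]
  refine Finset.sum_congr rfl fun j _ => ?_
  rw [kset, Finset.filter_filter]

lemma kern1_col (m M : ℕ) (hm : 0 < m) (hM : 0 < M) (j : Fin M) :
    ∑ x : (Finset.Icc (1:ℤ) m : Finset ℤ), kern1 m M x j = m / M := by
  unfold kern1
  rw [← Finset.sum_div, Finset.sum_coe_sort (Finset.Icc (1:ℤ) m) (fun x => ((kset m M x j).card : ℝ))]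
  congr 1
  rw [← Nat.cast_sum]
  norm_cast
  have h1 := count_div' m M j hm j.2
  have hmap : ∀ u ∈ (Finset.range (m * M)).filter (fun u => u / m = j), ((u / M : ℕ) : ℤ) + 1 ∈ Finset.Icc (1:ℤ) m := by
    intro u hu
    have : u / M < m := by
      rw [Nat.div_lt_iff_lt_mul hM]
      exact Finset.mem_range.1 (Finset.mem_filter.1 hu).1
    generalize u / M = w at *
    rw [Finset.mem_Icc]; omega
  rw [Finset.card_eq_sum_card_fiberwise hmap] at h1
  conv_rhs => rw [← h1]
  refine Finset.sum_congr rfl fun x _ => ?_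
  rw [kset, Finset.filter_filter]
  congr 1
  ext u; simp [and_comm]

lemma kern1_supp (m M : ℕ) (hm : 0 < m) (hM : 0 < M) (x : ℤ) (j : ℕ) (h : kern1 m M x j ≠ 0) :
    (j : ℝ) * m < x * M ∧ ((x:ℝ) - 1) * M < (j + 1) * m := by
  have : (kset m M x j).card ≠ 0 := by
    intro h0; apply h; simp [kern1, h0]
  obtain ⟨u, hu⟩ := Finset.card_ne_zero.1 this
  simp only [kset, Finset.mem_filter] at hu
  obtain ⟨-, h1, h2⟩ := hu
  have a1 : ((u / M : ℕ):ℝ) * M ≤ u := by exact_mod_cast Nat.div_mul_le_self u M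
  have a2 : (u:ℝ) < ((u / M : ℕ) + 1 : ℝ) * M := by
    have := Nat.lt_mul_div_succ u hM
    rw [mul_comm] at this; exact_mod_cast this
  have a3 : (j:ℝ) * m ≤ u := by rw [← h2]; exact_mod_cast Nat.div_mul_le_self u m
  have a4 : (u:ℝ) < ((j:ℝ) + 1) * m := by
    rw [← h2]
    have := Nat.lt_mul_div_succ u hm
    rw [mul_comm] at this; exact_mod_cast this
  have h1 : (((u / M : ℕ):ℝ)) + 1 = x := by
    rw [← h1]; simp only [Int.cast_add, Int.cast_natCast, Int.cast_one]
  rw [← h1]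
  constructor
  · linarith
  · rw [add_sub_cancel_right]; linarith

noncomputable def kern {d K m : ℕ} (p : gridPt d m) (Q : Cell d K) : ℝ :=
  ∏ i, kern1 m (2 ^ K) (p i) (Q i)

lemma kern_nonneg {d K m : ℕ} (p : gridPt d m) (Q : Cell d K) : 0 ≤ kern p Q :=
  Finset.prod_nonneg fun _ _ => kern1_nonneg _ _ _ _

lemma kern_row {d K m : ℕ} (hm : 0 < m) (p : gridPt d m) : ∑ Q : Cell d K, kern p Q = 1 := by
  unfold kern
  rw [← Fintype.prod_sum (fun i (j : Fin (2 ^ K)) => kern1 m (2 ^ K) (p i) j)]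
  exact Finset.prod_eq_one fun i _ => kern1_row m (2 ^ K) hm (by positivity) _ (p i).2

lemma kern_col {d K m : ℕ} (hm : 0 < m) (Q : Cell d K) :
    ∑ p : gridPt d m, kern p Q = ((m:ℝ) / 2 ^ K) ^ d := by
  unfold kern
  rw [← Fintype.prod_sum (fun i (x : (Finset.Icc (1:ℤ) m : Finset ℤ)) => kern1 m (2 ^ K) x (Q i))]
  rw [Finset.prod_congr rfl fun i _ => kern1_col m (2 ^ K) hm (by positivity) (Q i)]
  simp [div_pow]

lemma kern_supp {d K m : ℕ} (hm : 0 < m) (p : gridPt d m) (Q : Cell d K) (h : kern p Q ≠ 0) (i : Fin d) :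
    ((Q i : ℕ) : ℝ) * m < (p i : ℤ) * 2 ^ K ∧ (((p i : ℤ) : ℝ) - 1) * 2 ^ K < ((Q i : ℕ) + 1) * m := by
  have := kern1_supp m (2 ^ K) hm (by positivity) (p i) (Q i) (Finset.prod_ne_zero_iff.1 h i (Finset.mem_univ i))
  push_cast at this
  exact this

lemma card_gridPt (d m : ℕ) : Fintype.card (gridPt d m) = m ^ d := by
  simp

/-- the bad event -/
def BadS (d K n m : ℕ) (B : ℝ) (S : Finset (gridPt d m)) : Prop :=
  ∃ t ≤ d * K, ∃ x : Cell d K, B * Real.sqrt (2 ^ t) <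
    |∑ p ∈ S, (∑ y ∈ cbox (av d t) x, kern p y) - ((n:ℝ) / 2 ^ K) ^ d * 2 ^ t|

open Classical in
lemma bad_count (d K n m : ℕ) (hd : 2 ≤ d) (hn : 0 < n) (hnm : n ≤ m) (B : ℝ) (hB : 0 ≤ B)
    (hB2 : B ≤ ((n:ℝ) / 2 ^ K) ^ d) :
    (((Finset.univ : Finset (gridPt d m)).powersetCard (n ^ d)).filter (BadS d K n m B)).card ≤
      ((d * K + 1) * (2 ^ K) ^ d : ℝ) * (2 * Real.exp (-(B ^ 2 / (4 * ((n:ℝ) / 2 ^ K) ^ d))) *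
        ((m ^ d).choose (n ^ d))) := by
  have hm : 0 < m := by omega
  set v := ((n:ℝ) / 2 ^ K) ^ d with hv
  have hv0 : 0 < v := by positivity
  have : Nonempty (gridPt d m) := by
    rw [← Fintype.card_pos_iff, card_gridPt]; positivity
  set U := (Finset.univ : Finset (gridPt d m)).powersetCard (n ^ d)
  have hsub : U.filter (BadS d K n m B) ⊆ (Finset.range (d * K + 1) ×ˢ (Finset.univ : Finset (Cell d K))).biUnion
      (fun tx => U.filter fun S => B * Real.sqrt (2 ^ tx.1) < |∑ p ∈ S, (∑ y ∈ cbox (av d tx.1) tx.2, kern p y) - v * 2 ^ tx.1|) := by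
    intro S hS
    obtain ⟨hS1, t, ht, x, hx⟩ := Finset.mem_filter.1 hS
    rw [Finset.mem_biUnion]
    exact ⟨(t, x), Finset.mem_product.2 ⟨Finset.mem_range.2 (by omega), Finset.mem_univ _⟩, Finset.mem_filter.2 ⟨hS1, hx⟩⟩
  have h1 := (Finset.card_le_card hsub).trans Finset.card_biUnion_le
  have h2 : ((U.filter (BadS d K n m B)).card : ℝ) ≤ ∑ tx ∈ (Finset.range (d * K + 1) ×ˢ (Finset.univ : Finset (Cell d K))),
    ((U.filter fun S => B * Real.sqrt (2 ^ tx.1) < |∑ p ∈ S, (∑ y ∈ cbox (av d tx.1) tx.2, kern p y) - v * 2 ^ tx.1|).card : ℝ) := by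
    exact_mod_cast h1
  refine h2.trans ?_
  have hcard : ((Finset.range (d * K + 1) ×ˢ (Finset.univ : Finset (Cell d K))).card : ℝ) = (d * K + 1) * (2 ^ K) ^ d := by
    simp
  rw [← hcard, ← nsmul_eq_mul, ← Finset.sum_const]
  refine Finset.sum_le_sum ?_
  rintro ⟨t, x⟩ htx
  have ht : t ≤ d * K := by
    have := Finset.mem_range.1 (Finset.mem_product.1 htx).1
    simp only at this; omega
  simp only
  have hs1 : 1 ≤ Real.sqrt (2 ^ t) := by
    rw [Real.one_le_sqrt]; exact one_le_pow₀ (by norm_num)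
  have hsq : Real.sqrt (2 ^ t) * Real.sqrt (2 ^ t) = 2 ^ t := Real.mul_self_sqrt (by positivity)
  have hsum : ∑ p : gridPt d m, ∑ y ∈ cbox (av d t) x, kern p y = 2 ^ t * ((m:ℝ) / 2 ^ K) ^ d := by
    rw [Finset.sum_comm, Finset.sum_congr rfl (fun y _ => kern_col hm y), Finset.sum_const, card_cbox _ _ x, av_sum d t (by omega)]
    · simp
    · intro i
      have := av_mono d ht i
      rwa [av_top] at this
  have := conc (fun p : gridPt d m => ∑ y ∈ cbox (av d t) x, kern p y)
    (fun p => Finset.sum_nonneg fun y _ => kern_nonneg p y)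
    (fun p => by
      rw [← kern_row (K := K) hm p]
      exact Finset.sum_le_sum_of_subset_of_nonneg (Finset.subset_univ _) fun y _ _ => kern_nonneg p y)
    (n ^ d) (by rw [card_gridPt]; exact Nat.pow_le_pow_left hnm d) (v * 2 ^ t)
    (by
      rw [hsum, card_gridPt, hv]; push_cast
      have : (m:ℝ) ≠ 0 := by positivity
      rw [div_pow, div_pow]; field_simp)
    (by positivity) (B * Real.sqrt (2 ^ t)) (by positivity)
    (by
      calc B * Real.sqrt (2 ^ t) ≤ v * (Real.sqrt (2 ^ t) * Real.sqrt (2 ^ t)) := by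
            gcongr; nlinarith
        _ = v * 2 ^ t := by rw [hsq]
        _ ≤ _ := by have : 0 < v * 2 ^ t := by positivity
                    linarith)
  rw [card_gridPt] at this
  have e : (B * Real.sqrt (2 ^ t)) ^ 2 / (4 * (v * 2 ^ t)) = B ^ 2 / (4 * v) := by
    rw [mul_pow, sq (Real.sqrt _), hsq]; field_simp
  rw [e] at this
  exact this

lemma zdist_nonneg {d : ℕ} (x y : Fin d → ℤ) : 0 ≤ zdist x y := Real.sqrt_nonneg _

lemma abs_le_zdist {d : ℕ} (x y : Fin d → ℤ) (i : Fin d) : |(x i : ℝ) - y i| ≤ zdist x y := by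
  unfold zdist
  apply Real.le_sqrt_of_sq_le
  rw [sq_abs]
  exact Finset.single_le_sum (f := fun i => ((x i : ℝ) - y i) ^ 2) (fun j _ => sq_nonneg _) (Finset.mem_univ i)

lemma one_le_zdist {d : ℕ} (x y : Fin d → ℤ) (h : x ≠ y) : 1 ≤ zdist x y := by
  obtain ⟨i, hi⟩ := Function.ne_iff.1 h
  refine le_trans ?_ (abs_le_zdist x y i)
  have : 1 ≤ |x i - y i| := Int.one_le_abs (sub_ne_zero.2 hi)
  exact_mod_cast this

lemma zdist_le {d : ℕ} (x y : Fin d → ℤ) (R : ℝ) (hR : 0 ≤ R) (h : ∀ i, |(x i : ℝ) - y i| ≤ R) :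
    zdist x y ≤ d * R := by
  unfold zdist
  apply Real.sqrt_le_iff.2
  refine ⟨by positivity, ?_⟩
  calc ∑ i, ((x i : ℝ) - y i) ^ 2 ≤ ∑ i : Fin d, R ^ 2 := by
        refine Finset.sum_le_sum fun i _ => ?_
        rw [← sq_abs]; gcongr; exact h i
    _ = d * R ^ 2 := by simp
    _ ≤ _ := by
      rw [mul_pow]
      gcongr
      rcases Nat.eq_zero_or_pos d with rfl | h
      · simp
      · have : (1:ℝ) ≤ d := by exact_mod_cast h
        nlinarith

lemma good_match (d K n m : ℕ) (hd : 2 ≤ d) (hn : 0 < n) (hnm : n ≤ m) (B : ℝ) (hB : 0 ≤ B)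
    (hBv : 4 * B * (d * K) ≤ ((n:ℝ) / 2 ^ K) ^ d / 2) (hBv' : B ≤ ((n:ℝ) / 2 ^ K) ^ d / 2)
    (hl : 1 ≤ (n:ℝ) / 2 ^ K)
    (S : Finset (gridPt d m)) (hS : S.card = n ^ d) (hgood : ¬ BadS d K n m B S) :
    ∃ g : gridPt d n → gridPt d m, Function.Injective g ∧ ∀ y, g y ∈ S ∧
      ∀ i, |(n:ℝ) / m * ((g y i : ℤ) : ℝ) - (y i : ℤ)| ≤ 3 * (n / 2 ^ K) := by
  classical
  have hm : 0 < m := by omega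
  set v := ((n:ℝ) / 2 ^ K) ^ d with hv
  set l := (n:ℝ) / 2 ^ K with hldef
  set s : Cell d K → ℝ := fun Q => ∑ p ∈ S, kern p Q with hs
  have hh := (Finset.all_card_le_biUnion_card_iff_exists_injective (fun y : gridPt d n => S.filter fun x =>
    ∀ i, |(n:ℝ) / m * ((x i : ℤ) : ℝ) - (y i : ℤ)| ≤ 3 * l)).1 ?_
  · obtain ⟨g, hg1, hg2⟩ := hh
    exact ⟨g, hg1, fun y => Finset.mem_filter.1 (hg2 y)⟩
  intro Y
  set A : Finset (Cell d K) := Finset.univ.filter fun Q => ∃ y ∈ Y, kern y Q ≠ 0 with hA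
  have c1 : (Y.card : ℝ) ≤ A.card * v := by
    calc (Y.card : ℝ) = ∑ y ∈ Y, ∑ Q : Cell d K, kern y Q := by
          rw [Finset.sum_congr rfl fun y _ => kern_row hn y]; simp
      _ = ∑ y ∈ Y, ∑ Q ∈ A, kern y Q := by
          refine Finset.sum_congr rfl fun y hy => ?_
          symm
          apply Finset.sum_subset (Finset.subset_univ _)
          intro Q _ hQ
          by_contra h
          exact hQ (Finset.mem_filter.2 ⟨Finset.mem_univ _, y, hy, h⟩)
      _ = ∑ Q ∈ A, ∑ y ∈ Y, kern y Q := Finset.sum_comm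
      _ ≤ ∑ Q ∈ A, v := by
          refine Finset.sum_le_sum fun Q _ => ?_
          rw [hv, hldef, ← kern_col hn Q]
          exact Finset.sum_le_sum_of_subset_of_nonneg (Finset.subset_univ _) fun y _ _ => kern_nonneg y Q
      _ = _ := by simp
  have c2 := core hd s v B hB ?_ ?_ hBv hBv' A
  rotate_left
  · intro t ht x
    by_contra h
    push Not at h
    apply hgood
    refine ⟨t, ht, x, ?_⟩
    rw [Finset.sum_comm]
    exact h
  · rw [hs, Finset.sum_comm, Finset.sum_congr rfl fun p _ => kern_row hm p]
    simp only [Finset.sum_const, hS, nsmul_eq_mul, mul_one]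
    rw [hv, hldef, div_pow]; push_cast
    rw [← pow_mul, mul_comm K d]; field_simp
  have hdisj : Disjoint A (bdry A) := by
    rw [Finset.disjoint_left]
    intro x hx hx'
    exact (Finset.mem_filter.1 hx').2.1 hx
  rw [← Finset.sum_union hdisj] at c2
  have c3 : ∑ Q ∈ A ∪ bdry A, s Q ≤ (Y.biUnion (fun y : gridPt d n => S.filter fun x =>
    ∀ i, |(n:ℝ) / m * ((x i : ℤ) : ℝ) - (y i : ℤ)| ≤ 3 * l)).card := by
    set T := Y.biUnion (fun y : gridPt d n => S.filter fun x =>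
      ∀ i, |(n:ℝ) / m * ((x i : ℤ) : ℝ) - (y i : ℤ)| ≤ 3 * l) with hT
    rw [hs, Finset.sum_comm]
    have hTS : T ⊆ S := by
      intro x hx
      obtain ⟨y, _, hxy⟩ := Finset.mem_biUnion.1 hx
      exact (Finset.mem_filter.1 hxy).1
    rw [← Finset.sum_subset hTS]
    · calc _ ≤ ∑ x ∈ T, (1:ℝ) := by
            refine Finset.sum_le_sum fun p _ => ?_
            rw [← kern_row (K := K) hm p]
            exact Finset.sum_le_sum_of_subset_of_nonneg (Finset.subset_univ _) fun y _ _ => kern_nonneg p y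
        _ = _ := by simp
    · intro x hxS hxT
      refine Finset.sum_eq_zero fun Q hQ => ?_
      by_contra hne
      apply hxT
      have hQ' : ∃ Q' ∈ A, Adj Q Q' := by
        rcases Finset.mem_union.1 hQ with h | h
        · exact ⟨Q, h, fun i => ⟨by omega, by omega⟩⟩
        · exact (Finset.mem_filter.1 h).2.2
      obtain ⟨Q', hQA, hadj⟩ := hQ'
      obtain ⟨y, hyY, hy⟩ := (Finset.mem_filter.1 hQA).2
      refine Finset.mem_biUnion.2 ⟨y, hyY, Finset.mem_filter.2 ⟨hxS, fun i => ?_⟩⟩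
      obtain ⟨a1, a2⟩ := kern_supp hm x Q hne i
      obtain ⟨b1, b2⟩ := kern_supp hn y Q' hy i
      obtain ⟨e1, e2⟩ := hadj i
      have e1' : ((Q i : ℕ) : ℝ) ≤ (Q' i : ℕ) + 1 := by exact_mod_cast e1
      have e2' : ((Q' i : ℕ) : ℝ) ≤ (Q i : ℕ) + 1 := by exact_mod_cast e2
      have hmR : (0:ℝ) < m := by exact_mod_cast hm
      have hnR : (0:ℝ) < n := by exact_mod_cast hn
      have hP : (0:ℝ) < 2 ^ K := by positivity
      have hln : (n:ℝ) = l * 2 ^ K := by rw [hldef]; field_simp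
      have hnm1 : (n:ℝ) / m ≤ 1 := by rw [div_le_one hmR]; exact_mod_cast hnm
      have A1 : ((Q i : ℕ) : ℝ) * l ≤ (n:ℝ) / m * ((x i : ℤ) : ℝ) := by
        rw [hldef, mul_div_assoc', div_mul_eq_mul_div, div_le_div_iff₀ hP hmR]
        nlinarith
      have A2 : (n:ℝ) / m * ((x i : ℤ) : ℝ) ≤ ((Q i : ℕ) + 1) * l + 1 := by
        have : (n:ℝ) / m * (((x i : ℤ) : ℝ) - 1) ≤ ((Q i : ℕ) + 1) * l := by
          rw [hldef, mul_div_assoc', div_mul_eq_mul_div, div_le_div_iff₀ hmR hP]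
          nlinarith
        linarith
      have B1 : ((Q' i : ℕ) : ℝ) * l ≤ (y i : ℤ) := by
        rw [hln] at b1
        have : ((Q' i : ℕ) : ℝ) * l * 2 ^ K ≤ (y i : ℤ) * 2 ^ K := by linarith
        exact le_of_mul_le_mul_right this hP
      have B2 : ((y i : ℤ):ℝ) ≤ ((Q' i : ℕ) + 1) * l + 1 := by
        rw [hln] at b2
        have : (((y i : ℤ):ℝ) - 1) * 2 ^ K ≤ (((Q' i : ℕ):ℝ) + 1) * l * 2 ^ K := by linarith
        linarith [le_of_mul_le_mul_right this hP]
      have f1 : ((Q i : ℕ) : ℝ) * l ≤ ((Q' i : ℕ) + 1) * l := by gcongr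
      have f2 : ((Q' i : ℕ) : ℝ) * l ≤ ((Q i : ℕ) + 1) * l := by gcongr
      rw [abs_le]
      constructor <;> nlinarith
  exact_mod_cast c1.trans (c2.trans c3)

def co {d k : ℕ} (x : gridPt d k) : Fin d → ℤ := fun i => (x i : ℤ)

lemma hcoinj {d k : ℕ} : Function.Injective (co (d := d) (k := k)) := by
  intro x y h
  ext i
  exact congrFun h i

lemma good_Fleast (d K n m : ℕ) (hd : 2 ≤ d) (hn : 2 ≤ n) (hnm : n ≤ m) (B : ℝ) (hB : 0 ≤ B)
    (hBv : 4 * B * (d * K) ≤ ((n:ℝ) / 2 ^ K) ^ d / 2) (hBv' : B ≤ ((n:ℝ) / 2 ^ K) ^ d / 2)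
    (hl : 1 ≤ (n:ℝ) / 2 ^ K)
    (S : Finset (gridPt d m)) (hS : S.card = n ^ d) (hgood : ¬ BadS d K n m B S) :
    Fleast d n (toLattice S) ≤ d * (7 * (n / 2 ^ K)) := by
  classical
  obtain ⟨g, hg, hgS⟩ := good_match d K n m hd (by omega) hnm B hB hBv hBv' hl S hS hgood
  set l := (n:ℝ) / 2 ^ K with hldef
  have himg : Finset.univ.image g = S := by
    apply Finset.eq_of_subset_of_card_le
    · intro x hx
      obtain ⟨y, -, rfl⟩ := Finset.mem_image.1 hx
      exact (hgS y).1
    · rw [Finset.card_image_of_injective _ hg, Finset.card_univ, card_gridPt, hS]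
  obtain ⟨f, hfg⟩ : ∃ f : (Fin d → ℤ) → (Fin d → ℤ), ∀ y, f (co (g y)) = co y :=
    ⟨Function.extend (fun y => co (g y)) co 0, fun y =>
      Function.Injective.extend_apply (fun a b h => hg (hcoinj h)) co 0 y⟩
  have hmem : ∀ z, z ∈ toLattice S ↔ ∃ y, z = co (g y) := by
    intro z
    simp only [toLattice, ← himg, Finset.mem_image, Finset.mem_univ, true_and]
    constructor
    · rintro ⟨x, ⟨y, rfl⟩, rfl⟩; exact ⟨y, rfl⟩
    · rintro ⟨y, rfl⟩; exact ⟨_, ⟨y, rfl⟩, rfl⟩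
  have hgrid : ∀ z, z ∈ grid d n ↔ ∃ y : gridPt d n, z = co y := by
    intro z
    simp only [grid, Fintype.mem_piFinset]
    constructor
    · intro h; exact ⟨fun i => ⟨z i, h i⟩, rfl⟩
    · rintro ⟨y, rfl⟩ i; exact (y i).2
  apply csInf_le
  · refine ⟨0, ?_⟩
    rintro L ⟨f', h1, h2, h3⟩
    have hn0 : (1:ℤ) ≤ n := by omega
    obtain ⟨x, hx, hfx⟩ := h2 (fun _ => 1) (by rw [grid, Fintype.mem_piFinset]; intro i; simp; omega)
    obtain ⟨y, hy, hfy⟩ := h2 (fun _ => 2) (by rw [grid, Fintype.mem_piFinset]; intro i; simp; omega)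
    have hne : x ≠ y := by
      rintro rfl
      have := congrFun (hfx.symm.trans hfy) ⟨0, by omega⟩
      simp at this
    have h4 := h3 x hx y hy
    have h5 := zdist_nonneg (f' x) (f' y)
    have h6 := one_le_zdist x y hne
    by_contra hL
    push Not at hL
    nlinarith
  · refine ⟨f, ?_, ?_, ?_⟩
    · intro z hz
      obtain ⟨y, rfl⟩ := (hmem z).1 hz
      rw [hfg]; exact (hgrid _).2 ⟨y, rfl⟩
    · intro z hz
      obtain ⟨y, rfl⟩ := (hgrid z).1 hz
      exact ⟨co (g y), (hmem _).2 ⟨y, rfl⟩, hfg y⟩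
    · intro z hz z' hz'
      obtain ⟨y, rfl⟩ := (hmem z).1 hz
      obtain ⟨y', rfl⟩ := (hmem z').1 hz'
      rw [hfg, hfg]
      rcases eq_or_ne (co (g y)) (co (g y')) with h | h
      · rw [hg (hcoinj h)]
        simp [zdist]
      · have h1 := one_le_zdist _ _ h
        rw [mul_assoc]
        apply zdist_le
        · have := zdist_nonneg (co (g y)) (co (g y')); positivity
        · intro i
          have a1 := abs_le.1 ((hgS y).2 i)
          have a2 := abs_le.1 ((hgS y').2 i)
          have a3 := abs_le_zdist (co (g y)) (co (g y')) i
          have hmR : (0:ℝ) < m := by exact_mod_cast (by omega : 0 < m)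
          have hnm1 : (n:ℝ) / m ≤ 1 := by rw [div_le_one hmR]; exact_mod_cast hnm
          have hnm0 : 0 ≤ (n:ℝ) / m := by positivity
          have a4 : |(n:ℝ) / m * (((co (g y) i : ℤ):ℝ) - co (g y') i)| ≤ zdist (co (g y)) (co (g y')) := by
            rw [abs_mul, abs_of_nonneg hnm0]
            calc _ ≤ 1 * zdist (co (g y)) (co (g y')) := by gcongr
              _ = _ := one_mul _
          have a5 := abs_le.1 a4
          rw [mul_sub] at a5
          set D := zdist (co (g y)) (co (g y'))
          have hlD : l ≤ l * D := by nlinarith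
          have hDl : D ≤ l * D := by nlinarith
          obtain ⟨a11, a12⟩ := a1
          obtain ⟨a21, a22⟩ := a2
          obtain ⟨a51, a52⟩ := a5
          change |(((y i : ℤ)) : ℝ) - ((y' i : ℤ) : ℝ)| ≤ 7 * l * D
          change - D ≤ (n:ℝ) / m * ((g y i : ℤ) : ℝ) - n / m * ((g y' i : ℤ) : ℝ) at a51
          change (n:ℝ) / m * ((g y i : ℤ) : ℝ) - n / m * ((g y' i : ℤ) : ℝ) ≤ D at a52
          rw [abs_le]
          constructor <;> linarith
lemma choose_params (d n : ℕ) (hd : 2 ≤ d) (hn : 2 ≤ n) (q : ℝ) (hq2 : 3 / (d : ℝ) < q) (C : ℝ)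
    (hC : C = 256 * (d:ℝ) ^ 2 * (d + 5)) (hbig : C * Real.logb 2 n ^ q ≤ n) :
    ∃ (K : ℕ) (B : ℝ), 0 ≤ B ∧ 4 * B * (d * K) ≤ ((n:ℝ) / 2 ^ K) ^ d / 2 ∧ B ≤ ((n:ℝ) / 2 ^ K) ^ d / 2 ∧
      1 ≤ (n:ℝ) / 2 ^ K ∧ (n:ℝ) / 2 ^ K ≤ 2 * (C * Real.logb 2 n ^ q) ∧ 
      Real.exp (-(B ^ 2 / (4 * ((n:ℝ) / 2 ^ K) ^ d))) = ((n:ℝ) ^ (d + 5))⁻¹ := by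
  have hdR : (2:ℝ) ≤ d := by exact_mod_cast hd
  have hnR : (2:ℝ) ≤ n := by exact_mod_cast hn
  have hn0 : (0:ℝ) < n := by linarith
  set L := Real.logb 2 n with hL
  have hL1 : 1 ≤ L := by
    rw [hL, Real.le_logb_iff_rpow_le (by norm_num) hn0]; simpa using hnR
  have hC1 : 1 ≤ C := by rw [hC]; nlinarith [sq_nonneg (d:ℝ)]
  have hq0 : 0 < q := lt_trans (by positivity) hq2
  have hLq : 1 ≤ L ^ q := Real.one_le_rpow hL1 hq0.le
  set D := C * L ^ q with hD
  have hD1 : 1 ≤ D := one_le_mul_of_one_le_of_one_le hC1 hLq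
  have hD0 : 0 < D := by linarith
  obtain ⟨K, hK1, hK2⟩ := exists_nat_pow_near (x := (n:ℝ) / D) (y := 2) (by rwa [one_le_div hD0]) (by norm_num)
  have hP : (0:ℝ) < 2 ^ K := by positivity
  have hlD : D ≤ (n:ℝ) / 2 ^ K := by
    rw [le_div_iff₀ hD0] at hK1
    rw [le_div_iff₀ hP]; linarith
  have hl2 : (n:ℝ) / 2 ^ K ≤ 2 * D := by
    rw [div_lt_iff₀ hD0, pow_succ] at hK2
    rw [div_le_iff₀ hP]; linarith
  have hKL : (K:ℝ) ≤ L := by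
    rw [hL, Real.le_logb_iff_rpow_le (by norm_num) hn0, Real.rpow_natCast]
    exact hK1.trans (div_le_self hn0.le hD1)
  set l := (n:ℝ) / 2 ^ K with hl
  have hv : C * L ^ 3 ≤ l ^ d := by
    calc C * L ^ 3 ≤ C ^ d * (L ^ q) ^ d := by
          gcongr
          · exact le_self_pow₀ hC1 (by omega)
          · rw [← Real.rpow_natCast, ← Real.rpow_natCast, ← Real.rpow_mul (by linarith)]
            apply Real.rpow_le_rpow_of_exponent_le hL1
            rw [div_lt_iff₀ (by linarith)] at hq2
            push_cast; exact hq2.le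
      _ = D ^ d := by rw [hD, mul_pow]
      _ ≤ _ := by gcongr
  set v := l ^ d with hvdef
  have hv0 : 0 < v := lt_of_lt_of_le (by positivity) hv
  have hlog0 : 0 < Real.log n := Real.log_pos (by linarith)
  have hlogL : Real.log n ≤ L := by
    rw [hL, Real.logb, le_div_iff₀ (Real.log_pos (by norm_num))]
    have : Real.log 2 ≤ 1 := by linarith [Real.log_two_lt_d9]
    nlinarith
  set B := Real.sqrt (4 * (d + 5) * Real.log n * v) with hB
  have hBsq : B ^ 2 = 4 * (d + 5) * Real.log n * v := Real.sq_sqrt (by positivity)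
  have hB0 : 0 ≤ B := Real.sqrt_nonneg _
  have hkey : 8 * d * L * B ≤ v := by
    apply le_of_sq_le_sq _ hv0.le
    calc (8 * d * L * B) ^ 2 = 256 * (d:ℝ)^2 * (d + 5) * (L ^ 2 * Real.log n) * v := by
          rw [mul_pow, hBsq]; ring
      _ ≤ 256 * (d:ℝ)^2 * (d + 5) * (L ^ 2 * L) * v := by gcongr
      _ = (C * L ^ 3) * v := by rw [hC]; ring
      _ ≤ v * v := by gcongr
      _ = v ^ 2 := by ring
  refine ⟨K, B, hB0, ?_, ?_, hD1.trans hlD, hl2, ?_⟩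
  · have : B * (d * K) ≤ B * (d * L) := by gcongr
    linarith
  · have : 2 * B ≤ 8 * d * L * B := by
      gcongr
      nlinarith
    linarith
  · rw [hBsq]
    have : 4 * (d + 5) * Real.log n * v / (4 * v) = ((d + 5 : ℕ):ℝ) * Real.log n := by
      push_cast; field_simp
    rw [this, Real.exp_neg, Real.exp_nat_mul, Real.exp_log hn0]

lemma per_n (d n : ℕ) (hd : 2 ≤ d) (hn : 2 ≤ n) (q : ℝ) (hq2 : 3 / (d : ℝ) < q) (C : ℝ)
    (hC : C = 256 * (d:ℝ) ^ 2 * (d + 5)) (hbig : C * Real.logb 2 n ^ q ≤ n) (mz : ℤ) (hm : (n:ℤ) ≤ mz) :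
    ∃ A : Set (Config d mz (n ^ d)), (Set.ncard A : ENNReal) / (Fintype.card (Config d mz (n ^ d)) : ENNReal)
      ≤ ENNReal.ofReal (2 * (d + 1) * (1 / (n:ℝ) ^ 2)) ∧
      ∀ w : Config d mz (n ^ d), w ∉ A → Fleast d n (toLattice w.1) ≤ d * 14 * C * Real.logb 2 n ^ q := by
  classical
  obtain ⟨m, rfl⟩ := Int.eq_ofNat_of_zero_le (by omega : 0 ≤ mz)
  have hnm : n ≤ m := by omega
  obtain ⟨K, B, hB0, hB1, hB2, hl1, hl2, hexp⟩ := choose_params d n hd hn q hq2 C hC hbig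
  refine ⟨{w | BadS d K n m B w.1}, ?_, ?_⟩
  · have hbc := bad_count d K n m hd (by omega) hnm B hB0 (hB2.trans (by 
      have : 0 ≤ ((n:ℝ) / 2 ^ K) ^ d := by positivity
      linarith))
    rw [hexp] at hbc
    have hcard : Fintype.card (Config d (m:ℤ) (n ^ d)) = (m ^ d).choose (n ^ d) := by
      rw [← card_gridPt d m]
      convert Fintype.card_finset_len (α := gridPt d m) (n ^ d)
    have hnc : Set.ncard {w : Config d (m:ℤ) (n ^ d) | BadS d K n m B w.1} =
        (((Finset.univ : Finset (gridPt d m)).powersetCard (n ^ d)).filter (BadS d K n m B)).card := by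
      rw [← Set.ncard_coe_finset, ← Set.ncard_image_of_injective _ Subtype.val_injective]
      congr 1
      ext S
      simp only [Set.mem_image, Set.mem_ofPred_eq, Finset.coe_filter, Finset.mem_powersetCard_univ]
      constructor
      · rintro ⟨w, hw, rfl⟩; exact ⟨w.2, hw⟩
      · rintro ⟨h1, h2⟩; exact ⟨⟨S, h1⟩, h2, rfl⟩
    have hch : 0 < (m ^ d).choose (n ^ d) := Nat.choose_pos (Nat.pow_le_pow_left hnm d)
    have hchR : (0:ℝ) < ((m ^ d).choose (n ^ d) : ℕ) := by exact_mod_cast hch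
    rw [hnc, hcard]
    apply ENNReal.div_le_of_le_mul
    rw [← ENNReal.ofReal_natCast, ← ENNReal.ofReal_natCast, ← ENNReal.ofReal_mul (by positivity)]
    apply ENNReal.ofReal_le_ofReal
    refine hbc.trans ?_
    have hnR : (2:ℝ) ≤ n := by exact_mod_cast hn
    have hn0 : (0:ℝ) < n := by linarith
    have h2K : (2:ℝ) ^ K ≤ n := by rwa [one_le_div (by positivity)] at hl1
    have hKn : (K:ℝ) ≤ n := by
      have : (K:ℝ) ≤ 2 ^ K := by exact_mod_cast (Nat.lt_two_pow_self (n := K)).le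
      linarith
    have h1 : (d * K + 1 : ℝ) ≤ (d + 1) * n := by
      have : (d:ℝ) * K ≤ d * n := by gcongr
      linarith
    calc ((d * K + 1) * (2 ^ K) ^ d : ℝ) * (2 * ((n:ℝ) ^ (d + 5))⁻¹ * ((m ^ d).choose (n ^ d) : ℕ))
        ≤ (((d + 1) * n) * n ^ d) * (2 * ((n:ℝ) ^ (d + 5))⁻¹ * ((m ^ d).choose (n ^ d) : ℕ)) := by
          gcongr
      _ = 2 * (d + 1) * (1 / (n:ℝ) ^ 4) * ((m ^ d).choose (n ^ d) : ℕ) := by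
          field_simp
          ring
      _ ≤ _ := by
          gcongr
          · linarith
          · norm_num
  · intro w hw
    have := good_Fleast d K n m hd hn hnm B hB0 hB1 hB2 hl1 w.1 w.2 hw
    refine this.trans ?_
    have hdR : (0:ℝ) ≤ d := by positivity
    nlinarith

lemma ev_big (q C : ℝ) (hC : 0 < C) : ∀ᶠ n : ℕ in Filter.atTop, C * Real.logb 2 n ^ q ≤ n := by
  have h1 := (isLittleO_log_rpow_rpow_atTop q (s := 1) one_pos).comp_tendsto (tendsto_natCast_atTop_atTop (R := ℝ))
  have hl2 : 0 < Real.log 2 := Real.log_pos (by norm_num)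
  have hc : 0 < Real.log 2 ^ q / C := by positivity
  have h2 := h1.def hc
  filter_upwards [h2, Filter.eventually_ge_atTop 2] with n hn hn2
  have hnR : (2:ℝ) ≤ n := by exact_mod_cast hn2
  simp only [Function.comp, Real.rpow_one, Real.norm_eq_abs] at hn
  have hlog0 : 0 < Real.log n := Real.log_pos (by linarith)
  rw [abs_of_nonneg (by positivity), abs_of_nonneg (by positivity)] at hn
  rw [Real.logb, Real.div_rpow hlog0.le hl2.le]
  have hp : 0 < Real.log 2 ^ q := by positivity
  rw [mul_div_assoc', div_le_iff₀ hp]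
  rw [div_mul_eq_mul_div, le_div_iff₀ hC] at hn
  linarith

/-- (The uniform product measure on the sequence space `𝒢_{(c_n)}` is characterised by
its values on cylinders, as in the hypothesis `hμ`.)
For `d ≥ 2`, `c_n ≥ (1 + 2^(d+7)/log₂ n)^(1/d)` (n ≥ 2) and `q ≥ 1` with `q > 3/d`,
a random sequence `(S_n)` in `𝒢_{(c_n)}` almost surely satisfies
`limsup_n F_n(S_n)·(log₂ n)^(−q) < ∞`. -/
theorem stmt_2 (d : ℕ) (hd : 2 ≤ d) (c : ℕ → ℝ) (hc1 : 1 ≤ c 1)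
    (hc : ∀ n : ℕ, 2 ≤ n →
      ((1 : ℝ) + 2 ^ (d + 7) / Real.logb 2 n) ^ ((d : ℝ)⁻¹) ≤ c n)
    (q : ℝ) (hq1 : 1 ≤ q) (hq2 : 3 / (d : ℝ) < q)
    (μ : Measure (∀ n : ℕ, Config d ⌊c n * n⌋ (n ^ d)))
    (hμ : ∀ (J : Finset ℕ) (A : ∀ n : ℕ, Set (Config d ⌊c n * n⌋ (n ^ d))),
      μ {ω | ∀ n ∈ J, ω n ∈ A n} =
        ∏ n ∈ J, (Set.ncard (A n) : ENNReal) /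
          (Fintype.card (Config d ⌊c n * n⌋ (n ^ d)) : ENNReal)) :
    μ {ω | Filter.limsup
        (fun n : ℕ =>
          ((Fleast d n (toLattice (ω n).1) / Real.logb 2 n ^ q : ℝ) : EReal))
        Filter.atTop < (⊤ : EReal)} = 1 := by
  have hdR : (2:ℝ) ≤ d := by exact_mod_cast hd
  obtain ⟨C, hC⟩ : ∃ C : ℝ, C = 256 * (d:ℝ) ^ 2 * (d + 5) := ⟨_, rfl⟩
  have hC0 : 0 < C := by rw [hC]; positivity
  obtain ⟨n0, hn0⟩ := Filter.eventually_atTop.1 (ev_big q C hC0)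
  have hcn : ∀ n : ℕ, 2 ≤ n → (n:ℤ) ≤ ⌊c n * n⌋ := by
    intro n hn
    have hnR : (2:ℝ) ≤ n := by exact_mod_cast hn
    have h1 : 1 ≤ c n := by
      refine le_trans ?_ (hc n hn)
      apply Real.one_le_rpow
      · have : 0 < Real.logb 2 n := Real.logb_pos (by norm_num) (by linarith)
        have : (0:ℝ) ≤ 2 ^ (d + 7) / Real.logb 2 n := by positivity
        linarith
      · positivity
    rw [Int.le_floor]
    push_cast
    nlinarith
  have hA : ∀ n : ℕ, ∃ A : Set (Config d ⌊c n * n⌋ (n ^ d)),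
      (Set.ncard A : ENNReal) / (Fintype.card (Config d ⌊c n * n⌋ (n ^ d)) : ENNReal)
        ≤ ENNReal.ofReal (2 * (d + 1) * (1 / (n:ℝ) ^ 2)) ∧
      (max n0 2 ≤ n → ∀ w : Config d ⌊c n * n⌋ (n ^ d), w ∉ A →
        Fleast d n (toLattice w.1) ≤ d * 14 * C * Real.logb 2 n ^ q) := by
    intro n
    by_cases hn : max n0 2 ≤ n
    · have h2 : 2 ≤ n := (le_max_right _ _).trans hn
      obtain ⟨A, h3, h4⟩ := per_n d n hd h2 q hq2 C hC (hn0 n ((le_max_left _ _).trans hn)) _ (hcn n h2)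
      exact ⟨A, h3, fun _ => h4⟩
    · exact ⟨∅, by simp, fun h => absurd h hn⟩
  choose A hA1 hA2 using hA
  have hone : μ Set.univ = 1 := by
    have := hμ ∅ A
    simpa using this
  have hE : ∀ n, μ {ω | ω n ∈ A n} ≤ ENNReal.ofReal (2 * (d + 1) * (1 / (n:ℝ) ^ 2)) := by
    intro n
    have := hμ {n} A
    simp only [Finset.mem_singleton, forall_eq, Finset.prod_singleton] at this
    rw [this]
    exact hA1 n
  have hsum : ∑' n, μ {ω | ω n ∈ A n} ≠ ⊤ := by
    have hs : Summable (fun n : ℕ => 2 * ((d:ℝ) + 1) * (1 / (n:ℝ) ^ 2)) :=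
      (Real.summable_one_div_nat_pow.2 (by norm_num)).mul_left _
    exact ne_top_of_le_ne_top hs.tsum_ofReal_ne_top (ENNReal.tsum_le_tsum hE)
  have hlim := measure_limsup_atTop_eq_zero hsum
  set G : Set (∀ n : ℕ, Config d ⌊c n * n⌋ (n ^ d)) := {ω | Filter.limsup
        (fun n : ℕ =>
          ((Fleast d n (toLattice (ω n).1) / Real.logb 2 n ^ q : ℝ) : EReal))
        Filter.atTop < (⊤ : EReal)} with hG
  have hcompl : μ Gᶜ = 0 := by
    refine measure_mono_null ?_ hlim
    intro ω hω
    by_contra hno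
    apply hω
    rw [Filter.mem_limsup_iff_frequently_mem, Filter.not_frequently] at hno
    have hev : ∀ᶠ n : ℕ in Filter.atTop,
        ((Fleast d n (toLattice (ω n).1) / Real.logb 2 n ^ q : ℝ) : EReal) ≤ ((d * 14 * C : ℝ) : EReal) := by
      filter_upwards [hno, Filter.eventually_ge_atTop (max n0 2)] with n hn1 hn2
      have h2 : 2 ≤ n := (le_max_right _ _).trans hn2
      have hnR : (2:ℝ) ≤ n := by exact_mod_cast h2
      have h3 := hA2 n hn2 (ω n) hn1
      have h4 : 0 < Real.logb 2 n := Real.logb_pos (by norm_num) (by linarith)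
      rw [EReal.coe_le_coe_iff, div_le_iff₀ (by positivity)]
      exact h3
    exact (Filter.limsup_le_of_le (by isBoundedDefault) hev).trans_lt (EReal.coe_lt_top _)
  apply le_antisymm
  · rw [← hone]; exact measure_mono (Set.subset_univ _)
  · calc (1 : ENNReal) = μ (G ∪ Gᶜ) := by rw [Set.union_compl_self, hone]
      _ ≤ μ G + μ Gᶜ := measure_union_le _ _
      _ = μ G := by rw [hcompl, add_zero]
end

section
/- Fix d ∈ ℕ, d ≥ 1, and θ ∈ (0,1). There exists a constant Δ = Δ(d,θ) > 0 with the following property. Let l ∈ ℕ and let ρ : [0,1]^d → (0,∞) be a function such that ρ is constant on each cube T ∈ 𝒯_{2^l}, ∫_{[0,1]^d} ρ dℒ = 1, and θ ≤ min ρ ≤ max ρ ≤ 1/θ. Then there exists a Lipschitz mapping f : [0,1]^d → ℝ^d such that f_♯(ρ·ℒ) = ℒ|_{[0,1]^d} (the pushforward of the measure with density ρ equals Lebesgue measure restricted to [0,1]^d) and Lip(f) ≤ (1 + Δ·(max ρ − min ρ))^l. -/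
open MeasureTheory

/-- Euclidean distance on `ℝ^d` (realised as `Fin d → ℝ`). -/
noncomputable def eudist {d : ℕ} (x y : Fin d → ℝ) : ℝ :=
  Real.sqrt (∑ i, (x i - y i) ^ 2)

/-- The unit cube `[0,1]^d`. -/
def unitCube (d : ℕ) : Set (Fin d → ℝ) := {x | ∀ i, 0 ≤ x i ∧ x i ≤ 1}

/-- The half-open dyadic cube of the partition `𝒯_k` indexed by `p`. -/
def dyadicCube {d : ℕ} (k : ℕ) (p : Fin d → Fin k) : Set (Fin d → ℝ) :=
  {x | ∀ i, ((p i : ℕ) : ℝ) / k < x i ∧ x i ≤ (((p i : ℕ) : ℝ) + 1) / k}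


namespace RY

noncomputable def el (t y : ℝ) : ℝ := max 0 (min (1 - y - |t|) (1 - 2 * y))
noncomputable def kap (t y : ℝ) : ℝ := el t y - 2 * el t (2 * y)
noncomputable def PP (a t y : ℝ) : ℝ := t + a * kap t y
noncomputable def nn (t : ℝ) : ℝ := min |t| (1 - |t|)
noncomputable def sg (t : ℝ) : ℝ := if 0 < t then 1 else -1
noncomputable def sig (a t y : ℝ) : ℝ :=
  1 + a * (sg t * ((if 2 * y < nn t then 2 else 0) - (if y < nn t then 1 else 0)))

lemma el_lip (t y t' y' : ℝ) : |el t y - el t' y'| ≤ |t - t'| + 2 * |y - y'| := by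
  unfold el
  have h1 := abs_abs_sub_abs_le_abs_sub t t'
  have h2 : |max 0 (min (1 - y - |t|) (1 - 2 * y)) - max 0 (min (1 - y' - |t'|) (1 - 2 * y'))|
      ≤ |min (1 - y - |t|) (1 - 2 * y) - min (1 - y' - |t'|) (1 - 2 * y')| := by
    have := abs_max_sub_max_le_abs (min (1 - y - |t|) (1 - 2 * y))
      (min (1 - y' - |t'|) (1 - 2 * y')) 0
    simpa [max_comm] using this
  refine h2.trans ((abs_min_sub_min_le_max _ _ _ _).trans (max_le ?_ ?_))
  · have : 1 - y - |t| - (1 - y' - |t'|) = -(y - y') - (|t| - |t'|) := by ring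
    rw [this]
    refine (abs_sub _ _).trans ?_
    rw [abs_neg]
    have := abs_nonneg (y - y')
    linarith
  · have : 1 - 2 * y - (1 - 2 * y') = 2 * (-(y - y')) := by ring
    rw [this, abs_mul, abs_neg]
    have := abs_nonneg (t - t')
    norm_num

lemma kap_lip (t y t' y' : ℝ) : |kap t y - kap t' y'| ≤ 3 * |t - t'| + 10 * |y - y'| := by
  unfold kap
  have h1 := el_lip t y t' y'
  have h2 := el_lip t (2 * y) t' (2 * y')
  have h3 : |2 * y - 2 * y'| = 2 * |y - y'| := by
    rw [← mul_sub, abs_mul]; norm_num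
  rw [h3] at h2
  rw [abs_le] at *
  constructor <;> linarith [h1.1, h1.2, h2.1, h2.2]

lemma el_aux (x x' y : ℝ) (hy : 0 ≤ y) (hx : x ≤ x') :
    0 ≤ max 0 (min (1 - 2*y - x) (1 - 2 * (2*y))) - max 0 (min (1 - 2*y - x') (1 - 2 * (2*y))) ∧
    max 0 (min (1 - 2*y - x) (1 - 2 * (2*y))) - max 0 (min (1 - 2*y - x') (1 - 2 * (2*y)))
     ≤ max 0 (min (1 - y - x) (1 - 2 * y)) - max 0 (min (1 - y - x') (1 - 2 * y)) ∧
    max 0 (min (1 - y - x) (1 - 2 * y)) - max 0 (min (1 - y - x') (1 - 2 * y)) ≤ x' - x := by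
  simp only [max_def, min_def]
  refine ⟨?_, ?_, ?_⟩ <;> split_ifs <;> linarith

lemma kap_lip1 (t t' y : ℝ) (hy : 0 ≤ y) : |kap t y - kap t' y| ≤ |t - t'| := by
  have h1 := abs_abs_sub_abs_le_abs_sub t t'
  refine le_trans ?_ h1
  unfold kap el
  rcases le_total |t| |t'| with h | h
  · obtain ⟨a1, a2, a3⟩ := el_aux _ _ y hy h
    rw [abs_sub_comm |t| |t'|, abs_of_nonneg (sub_nonneg.2 h), abs_le]
    constructor <;> linarith
  · obtain ⟨a1, a2, a3⟩ := el_aux _ _ y hy h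
    rw [abs_of_nonneg (sub_nonneg.2 h), abs_le]
    constructor <;> linarith

lemma PP_mono (a t t' y : ℝ) (hy : 0 ≤ y) (h : t ≤ t') :
    (1 - |a|) * (t' - t) ≤ PP a t' y - PP a t y := by
  have h1 := kap_lip1 t' t y hy
  have h2 : |a * (kap t' y - kap t y)| ≤ |a| * (t' - t) := by
    rw [abs_mul, ← abs_of_nonneg (sub_nonneg.2 h)]
    exact mul_le_mul_of_nonneg_left h1 (abs_nonneg _)
  have := (abs_le.1 h2).1
  unfold PP; linarith

lemma PP_strictMono (a y : ℝ) (hy : 0 ≤ y) (ha : |a| < 1) : StrictMono (fun t => PP a t y) := by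
  intro t t' h
  have := PP_mono a t t' y hy h.le
  have : 0 < (1 - |a|) * (t' - t) := mul_pos (by linarith) (by linarith)
  show PP a t y < PP a t' y
  linarith

lemma PP_abs (a t t' y : ℝ) (hy : 0 ≤ y) :
    (1 - |a|) * |t - t'| ≤ |PP a t y - PP a t' y| := by
  rcases le_total t t' with h | h
  · rw [abs_sub_comm t, abs_of_nonneg (sub_nonneg.2 h), abs_sub_comm]
    exact (PP_mono a t t' y hy h).trans (le_abs_self _)
  · rw [abs_of_nonneg (sub_nonneg.2 h)]
    exact (PP_mono a t' t y hy h).trans (le_abs_self _)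

lemma el_out (t y : ℝ) (hy : 0 ≤ y) (ht : 1 ≤ |t|) : el t y = 0 := by
  unfold el
  exact max_eq_left ((min_le_left _ _).trans (by linarith))

lemma PP_out (a t y : ℝ) (hy : 0 ≤ y) (ht : 1 ≤ |t|) : PP a t y = t := by
  unfold PP kap
  rw [el_out t y hy ht, el_out t _ (by linarith) ht]; ring

lemma PP_cont (a y : ℝ) : Continuous (fun t => PP a t y) := by
  unfold PP kap el; fun_prop

lemma PP_surj (a y : ℝ) (hy : 0 ≤ y) : Function.Surjective (fun t => PP a t y) := by
  intro z
  refine mem_range_of_exists_le_of_exists_ge (PP_cont a y) ⟨-(|z| + 1), ?_⟩ ⟨|z| + 1, ?_⟩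
  · rw [PP_out a _ y hy]
    · linarith [neg_abs_le z]
    · rw [abs_neg, abs_of_nonneg (by positivity)]; linarith [abs_nonneg z]
  · rw [PP_out a _ y hy]
    · linarith [le_abs_self z]
    · rw [abs_of_nonneg (by positivity)]; linarith [abs_nonneg z]

lemma abs_deriv (t : ℝ) (ht : t ≠ 0) : HasDerivAt (fun t : ℝ => |t|) (sg t) t := by
  have := hasDerivAt_abs ht
  convert this using 1
  unfold sg
  split_ifs with h
  · simp [h]
  · have : t < 0 := lt_of_le_of_ne (not_lt.1 h) ht
    simp [this]

lemma el_deriv (t y : ℝ) (ht : t ≠ 0) (h1 : |t| ≠ y) (h2 : |t| ≠ 1 - y) :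
    HasDerivAt (fun t => el t y) (-(sg t * if y < nn t then 1 else 0)) t := by
  have hc : ContinuousAt (fun t : ℝ => |t|) t := continuous_abs.continuousAt
  by_cases hn : y < nn t
  · rw [if_pos hn, mul_one]
    have h3 : y < |t| := hn.trans_le (min_le_left _ _)
    have h4 : y < 1 - |t| := hn.trans_le (min_le_right _ _)
    have : HasDerivAt (fun t : ℝ => 1 - y - |t|) (-(sg t)) t := by
      simpa using (abs_deriv t ht).const_sub (1 - y)
    refine this.congr_of_eventuallyEq ?_
    filter_upwards [hc.eventually (lt_mem_nhds h3),
      hc.eventually (gt_mem_nhds (show |t| < 1 - y by linarith))] with u hu1 hu2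
    unfold el
    rw [min_eq_left (by linarith), max_eq_right (by linarith)]
  · rw [if_neg hn, mul_zero, neg_zero]
    by_cases h3 : |t| < y
    · refine (hasDerivAt_const t (max 0 (1 - 2 * y))).congr_of_eventuallyEq ?_
      filter_upwards [hc.eventually (gt_mem_nhds h3)] with u hu1
      unfold el
      rw [min_eq_right (by linarith)]
    · have h4 : y < |t| := lt_of_le_of_ne (not_lt.1 h3) (Ne.symm h1)
      have h5 : 1 - y < |t| := by
        refine lt_of_le_of_ne ?_ (Ne.symm h2)
        by_contra h
        push Not at h
        exact hn (lt_min h4 (by linarith))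
      refine (hasDerivAt_const t (0:ℝ)).congr_of_eventuallyEq ?_
      filter_upwards [hc.eventually (lt_mem_nhds h5)] with u hu1
      unfold el
      exact max_eq_left ((min_le_left _ _).trans (by linarith))

/-- exceptional set -/
def exc (y : ℝ) : Set ℝ := {0, y, -y, 1 - y, -(1 - y), 2 * y, -(2 * y), 1 - 2 * y, -(1 - 2 * y)}

lemma exc_countable (y : ℝ) : (exc y).Countable := by
  unfold exc
  exact (Set.toFinite _).countable

lemma PP_deriv (a t y : ℝ) (ht : t ∉ exc y) :
    HasDerivAt (fun t => PP a t y) (sig a t y) t := by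
  simp only [exc, Set.mem_insert_iff, Set.mem_singleton_iff, not_or] at ht
  obtain ⟨h0, h1, h2, h3, h4, h5, h6, h7, h8⟩ := ht
  have key : ∀ c : ℝ, t ≠ c → t ≠ -c → |t| ≠ c := by
    intro c hc hc' h
    rcases eq_or_eq_neg_of_abs_eq h with h | h <;> contradiction
  have d1 := el_deriv t y h0 (key _ h1 h2) (key _ h3 h4)
  have d2 := el_deriv t (2 * y) h0 (key _ h5 h6) (key _ h7 h8)
  have := (hasDerivAt_id t).add ((d1.sub (d2.const_mul 2)).const_mul a)
  refine this.congr_deriv ?_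
  unfold sig
  split_ifs <;> ring

/-- 1D change of variables -/
lemma cov (A B T : Set ℝ) (hA : MeasurableSet A) (hT : T.Countable) (f f' : ℝ → ℝ)
    (hm : MonotoneOn f A) (hB : f '' A = B)
    (hd : ∀ x ∈ A, x ∉ T → HasDerivAt f (f' x) x) (u : ℝ → ENNReal) :
    ∫⁻ x in A, ENNReal.ofReal (f' x) * u (f x) = ∫⁻ x in B, u x := by
  have h1 := lintegral_image_eq_lintegral_deriv_mul_of_monotoneOn (s := A \ T) (f := f) (f' := f')
    (hA.diff hT.measurableSet) (fun x hx => (hd x hx.1 hx.2).hasDerivWithinAt)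
    (hm.mono Set.sdiff_subset) u
  have h2 : (A \ T : Set ℝ) =ᵐ[volume] A := sdiff_null_ae_eq_self (hT.measure_zero _)
  have h3 : (f '' (A \ T) : Set ℝ) =ᵐ[volume] B := by
    have hsub : f '' (A \ T) ⊆ B := hB ▸ Set.image_mono Set.sdiff_subset
    refine (LE.le.eventuallyLE hsub).antisymm ?_
    rw [ae_le_set]
    refine ((hT.image f).mono ?_).measure_zero _
    rintro z ⟨hz, hz'⟩
    rw [← hB] at hz
    obtain ⟨x, hx, rfl⟩ := hz
    by_cases hxT : x ∈ T
    · exact ⟨x, hxT, rfl⟩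
    · exact absurd ⟨x, ⟨hx, hxT⟩, rfl⟩ hz'
  rw [setLIntegral_congr h2, setLIntegral_congr h3] at h1
  exact h1.symm

/-- the t-rearrangement -/
lemma exists_F (a : ℝ) :
    ∃ F : ℝ → ℝ → ℝ, (∀ t y, 0 ≤ y → PP a (F t y) y = PP a t 0) := by
  have : ∀ t y, ∃ s, 0 ≤ y → PP a s y = PP a t 0 := by
    intro t y
    by_cases hy : 0 ≤ y
    · obtain ⟨s, hs⟩ := PP_surj a y hy (PP a t 0)
      exact ⟨s, fun _ => hs⟩
    · exact ⟨0, fun h => absurd h hy⟩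
  choose F hF using this
  exact ⟨F, hF⟩

section
variable {c a : ℝ} (hc : 0 < c) (ha : |a| ≤ 1 - c) {F : ℝ → ℝ → ℝ}
  (hF : ∀ t y, 0 ≤ y → PP a (F t y) y = PP a t 0)
include hc ha hF

lemma F_inj (t s y : ℝ) (hy : 0 ≤ y) (h : PP a s y = PP a t 0) : F t y = s := 
  (PP_strictMono a y hy (by linarith)).injective ((hF t y hy).trans h.symm)

lemma F_zero (t : ℝ) : F t 0 = t := F_inj hc ha hF t t 0 le_rfl rfl

lemma F_out (t y : ℝ) (hy : 0 ≤ y) (ht : 1 ≤ |t|) : F t y = t :=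
  F_inj hc ha hF t t y hy (by rw [PP_out a t y hy ht, PP_out a t 0 le_rfl ht])

lemma F_in (t y : ℝ) (hy : 0 ≤ y) (ht : |t| < 1) : |F t y| < 1 := by
  have h0 := PP_strictMono a 0 le_rfl (show |a| < 1 by linarith)
  have h1 := PP_strictMono a y hy (show |a| < 1 by linarith)
  rw [abs_lt] at *
  constructor
  · rw [← h1.lt_iff_lt]
    show PP a (-1) y < PP a (F t y) y
    rw [hF t y hy, PP_out a _ y hy (by simp), ← PP_out a (-1) 0 le_rfl (by simp)]
    exact h0 ht.1
  · rw [← h1.lt_iff_lt]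
    show PP a (F t y) y < PP a 1 y
    rw [hF t y hy, PP_out a _ y hy (by simp), ← PP_out a 1 0 le_rfl (by simp)]
    exact h0 ht.2

lemma F_lip (t y t' y' : ℝ) (hy : 0 ≤ y) (hy' : 0 ≤ y') :
    |(F t y - t) - (F t' y' - t')| ≤ |a| / c * (6 * |t - t'| + 10 * |y - y'|) := by
  set D := F t y - t with hD
  set D' := F t' y' - t' with hD'
  have h1 := hF t y hy
  have h2 := hF t' y' hy'
  have e1 : F t y = t + D := by rw [hD]; ring
  have e2 : F t' y' = t' + D' := by rw [hD']; ring
  rw [e1] at h1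
  rw [e2] at h2
  have h3 := PP_abs a (t + D) (t + D') y hy
  have e3 : t + D - (t + D') = D - D' := by ring
  rw [e3] at h3
  have h4 : PP a (t + D) y - PP a (t + D') y =
      a * ((kap t 0 - kap t' 0) - (kap (t + D') y - kap (t' + D') y')) := by
    unfold PP at *
    linarith
  have h5 := kap_lip t 0 t' 0
  have h6 := kap_lip (t + D') y (t' + D') y'
  have e4 : t + D' - (t' + D') = t - t' := by ring
  rw [e4] at h6
  simp at h5
  have h7 : |(kap t 0 - kap t' 0) - (kap (t + D') y - kap (t' + D') y')| ≤
    6 * |t - t'| + 10 * |y - y'| := (abs_sub _ _).trans (by linarith)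
  rw [h4, abs_mul] at h3
  have h8 : c * |D - D'| ≤ |a| * (6 * |t - t'| + 10 * |y - y'|) :=
    (mul_le_mul_of_nonneg_right (by linarith) (abs_nonneg _)).trans
      (h3.trans (mul_le_mul_of_nonneg_left h7 (abs_nonneg _)))
  rw [div_mul_eq_mul_div, le_div_iff₀ hc]
  linarith

lemma F_push (y : ℝ) (hy : 0 ≤ y) (g : ℝ → ENNReal) :
    ∫⁻ t, ENNReal.ofReal (sig a t 0) * g (F t y) = ∫⁻ t, ENNReal.ofReal (sig a t y) * g t := by
  have ha1 : |a| < 1 := by linarith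
  have hs := PP_surj a y hy
  have hinj := (PP_strictMono a y hy ha1).injective
  set u : ℝ → ENNReal := fun z => g (Function.surjInv hs z) with hu
  have hu1 : ∀ t, u (PP a t y) = g t := by
    intro t
    simp only [hu]
    congr 1
    exact hinj (Function.surjInv_eq hs _)
  have c1 := cov Set.univ Set.univ (exc y) MeasurableSet.univ (exc_countable y)
    (fun t => PP a t y) (fun t => sig a t y) ((PP_strictMono a y hy ha1).monotone.monotoneOn _)
    (by rw [Set.image_univ, hs.range_eq]) (fun x _ hx => PP_deriv a x y hx) u
  have c0 := cov Set.univ Set.univ (exc 0) MeasurableSet.univ (exc_countable 0)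
    (fun t => PP a t 0) (fun t => sig a t 0) ((PP_strictMono a 0 le_rfl ha1).monotone.monotoneOn _)
    (by rw [Set.image_univ, (PP_surj a 0 le_rfl).range_eq]) (fun x _ hx => PP_deriv a x 0 hx) u
  simp only [Measure.restrict_univ, hu1] at c1 c0
  rw [c1, ← c0]
  refine lintegral_congr fun t => ?_
  rw [← hF t y hy, hu1]

end
end RY

namespace RY

noncomputable def tau (t y : ℝ) : ℝ := max 0 (min y (nn t - y))
noncomputable def stau (t y : ℝ) : ℝ := sg t * tau t y
noncomputable def VV (a t v : ℝ) : ℝ := v - a * stau t (1 - v)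
noncomputable def ee (t v : ℝ) : ℝ := stau t (1 - v) / max v (1/2)
noncomputable def lam (k : ℕ) (a t v : ℝ) : ℝ := (1 - a * ee t v) ^ (1 / ((k : ℝ) + 1))

lemma nn_le (t : ℝ) : nn t ≤ |t| ∧ nn t ≤ 1/2 := by
  unfold nn
  refine ⟨min_le_left _ _, ?_⟩
  rcases le_total |t| (1/2) with h | h
  · exact (min_le_left _ _).trans h
  · exact (min_le_right _ _).trans (by linarith)

lemma nn_lip (t t' : ℝ) : |nn t - nn t'| ≤ |t - t'| := by
  unfold nn
  refine (abs_min_sub_min_le_max _ _ _ _).trans (max_le (abs_abs_sub_abs_le_abs_sub t t') ?_)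
  have : 1 - |t| - (1 - |t'|) = -(|t| - |t'|) := by ring
  rw [this, abs_neg]
  exact abs_abs_sub_abs_le_abs_sub t t'

lemma tau_nonneg (t y : ℝ) : 0 ≤ tau t y := le_max_left _ _

lemma tau_le (t y : ℝ) : tau t y ≤ |t| ∧ tau t y ≤ 1/4 := by
  have := nn_le t
  have h0 := abs_nonneg t
  unfold tau
  refine ⟨max_le h0 ?_, max_le (by norm_num) ?_⟩
  · rcases le_total y (nn t - y) with h | h
    · rw [min_eq_left h]; linarith
    · rw [min_eq_right h]; linarith
  · rcases le_total y (nn t - y) with h | h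
    · rw [min_eq_left h]; linarith
    · rw [min_eq_right h]; linarith

lemma tau_lip (t y t' y' : ℝ) : |tau t y - tau t' y'| ≤ |t - t'| + |y - y'| := by
  unfold tau
  have h2 : |max 0 (min y (nn t - y)) - max 0 (min y' (nn t' - y'))|
      ≤ |min y (nn t - y) - min y' (nn t' - y')| := by
    have := abs_max_sub_max_le_abs (min y (nn t - y)) (min y' (nn t' - y')) 0
    simpa [max_comm] using this
  refine h2.trans ((abs_min_sub_min_le_max _ _ _ _).trans (max_le ?_ ?_))
  · linarith [abs_nonneg (t - t')]
  · have : nn t - y - (nn t' - y') = (nn t - nn t') - (y - y') := by ring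
    rw [this]
    exact (abs_sub _ _).trans (by linarith [nn_lip t t'])

lemma stau_lip (t y t' y' : ℝ) : |stau t y - stau t' y'| ≤ |t - t'| + |y - y'| := by
  unfold stau sg
  have h1 := tau_lip t y t' y'
  have h2 := tau_le t y
  have h3 := tau_le t' y'
  have h4 := tau_nonneg t y
  have h5 := tau_nonneg t' y'
  have h6 := abs_nonneg (y - y')
  split_ifs with a b b
  · simpa using h1
  · rw [abs_of_pos a] at h2
    rw [abs_of_nonpos (not_lt.1 b)] at h3
    rw [abs_of_nonneg (by linarith)]
    linarith [le_abs_self (t - t')]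
  · rw [abs_of_nonpos (not_lt.1 a)] at h2
    rw [abs_of_pos b] at h3
    rw [abs_of_nonpos (by linarith)]
    linarith [neg_abs_le (t - t')]
  · rw [← abs_neg]
    convert h1 using 2
    ring

lemma stau_abs (t y : ℝ) : |stau t y| ≤ 1/4 := by
  unfold stau sg
  have h2 := tau_le t y
  have h4 := tau_nonneg t y
  rw [abs_mul, abs_of_nonneg h4]
  split_ifs <;> simp <;> linarith

lemma ee_abs (t v : ℝ) : |ee t v| ≤ 1/2 := by
  unfold ee
  have h := stau_abs t (1 - v)
  have h1 : (1:ℝ)/2 ≤ max v (1/2) := le_max_right _ _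
  rw [abs_div, abs_of_pos (show 0 < max v (1/2) by linarith), div_le_iff₀ (by linarith)]
  linarith

lemma ee_lip (t v t' v' : ℝ) : |ee t v - ee t' v'| ≤ 2 * |t - t'| + 3 * |v - v'| := by
  unfold ee
  have h := stau_lip t (1 - v) t' (1 - v')
  have hs := stau_abs t' (1 - v')
  set A := stau t (1 - v)
  set B := stau t' (1 - v')
  have h1 : (1:ℝ)/2 ≤ max v (1/2) := le_max_right _ _
  have h2 : (1:ℝ)/2 ≤ max v' (1/2) := le_max_right _ _
  have h3 : |max v (1/2) - max v' (1/2)| ≤ |v - v'| := abs_max_sub_max_le_abs _ _ _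
  set p := max v (1/2)
  set q := max v' (1/2)
  have e1 : 1 - v - (1 - v') = -(v - v') := by ring
  rw [e1, abs_neg] at h
  have hp : 0 < p := by linarith
  have hq : 0 < q := by linarith
  have e2 : A / p - B / q = (A - B) / p - (B / q) * ((p - q) / p) := by field_simp; ring
  rw [e2]
  have b1 : |(A - B) / p| ≤ 2 * (|t - t'| + |v - v'|) := by
    rw [abs_div, abs_of_pos hp, div_le_iff₀ hp]
    nlinarith [abs_nonneg (A - B)]
  have b2 : |B / q| ≤ 1/2 := by
    rw [abs_div, abs_of_pos hq, div_le_iff₀ hq]; linarith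
  have b3 : |(p - q) / p| ≤ 2 * |v - v'| := by
    rw [abs_div, abs_of_pos hp, div_le_iff₀ hp]
    nlinarith [abs_nonneg (p - q)]
  have b4 : |(B / q) * ((p - q) / p)| ≤ 1/2 * (2 * |v - v'|) := by
    rw [abs_mul]
    exact mul_le_mul b2 b3 (abs_nonneg _) (by norm_num)
  refine (abs_sub _ _).trans ?_
  linarith

lemma root_lip (p b b' : ℝ) (hp : 0 ≤ p) (hp1 : p ≤ 1) (hb : 1/2 ≤ b) (hb' : 1/2 ≤ b') (hb2 : b ≤ 2)
    (hb2' : b' ≤ 2) : |b ^ p - b' ^ p| ≤ 4 * |b - b'| := by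
  wlog h : b' ≤ b generalizing b b'
  · rw [abs_sub_comm, abs_sub_comm b]
    exact this b' b hb' hb hb2' hb2 (le_of_not_ge h)
  have h0 : 0 < b' := by linarith
  have h1 : (b / b') ^ p ≤ b / b' := by
    have := Real.rpow_le_rpow_of_exponent_le (show 1 ≤ b / b' by rwa [one_le_div h0]) hp1
    rwa [Real.rpow_one] at this
  rw [Real.div_rpow (by linarith) h0.le] at h1
  have h2 : b' ^ p ≤ 2 := by
    calc b' ^ p ≤ 2 ^ p := Real.rpow_le_rpow h0.le hb2' hp
      _ ≤ 2 ^ (1:ℝ) := Real.rpow_le_rpow_of_exponent_le (by norm_num) hp1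
      _ = 2 := Real.rpow_one _
  have h3 : 0 < b' ^ p := Real.rpow_pos_of_pos h0 _
  have h4 : b' ^ p ≤ b ^ p := Real.rpow_le_rpow h0.le h hp
  rw [abs_of_nonneg (by linarith), abs_of_nonneg (by linarith)]
  rw [div_le_iff₀ h3, div_mul_eq_mul_div, le_div_iff₀ h0] at h1
  have : b' * (b ^ p - b' ^ p) ≤ 2 * (b - b') := by nlinarith
  nlinarith

section
variable {c a : ℝ} (hc : 0 < c) (ha : |a| ≤ 1 - c)
include hc ha

lemma base_bd (t v : ℝ) : 1/2 ≤ 1 - a * ee t v ∧ 1 - a * ee t v ≤ 2 := by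
  have h1 : |a * ee t v| ≤ 1/2 := by
    rw [abs_mul]
    have := ee_abs t v
    nlinarith [abs_nonneg a, abs_nonneg (ee t v)]
  rw [abs_le] at h1
  constructor <;> linarith [h1.1, h1.2]

lemma lam_lip (k : ℕ) (t v t' v' : ℝ) :
    |lam k a t v - lam k a t' v'| ≤ |a| * (8 * |t - t'| + 12 * |v - v'|) := by
  unfold lam
  have hk : (0:ℝ) ≤ k := Nat.cast_nonneg k
  refine (root_lip _ _ _ (by positivity) ?_ (base_bd hc ha t v).1 (base_bd hc ha t' v').1
    (base_bd hc ha t v).2 (base_bd hc ha t' v').2).trans ?_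
  · rw [div_le_one (by positivity)]; linarith
  · have : 1 - a * ee t v - (1 - a * ee t' v') = -(a * (ee t v - ee t' v')) := by ring
    rw [this, abs_neg, abs_mul]
    nlinarith [ee_lip t v t' v', abs_nonneg a]

lemma lam_sub_one (k : ℕ) (t v : ℝ) : |lam k a t v - 1| ≤ 2 * |a| := by
  unfold lam
  have hk : (0:ℝ) ≤ k := Nat.cast_nonneg k
  have := (root_lip (1 / ((k:ℝ) + 1)) _ 1 (by positivity) (by 
    rw [div_le_one (by positivity)]; linarith) (base_bd hc ha t v).1 (by norm_num)
    (base_bd hc ha t v).2 (by norm_num))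
  rw [Real.one_rpow] at this
  refine this.trans ?_
  have e : 1 - a * ee t v - 1 = -(a * ee t v) := by ring
  rw [e, abs_neg, abs_mul]
  nlinarith [ee_abs t v, abs_nonneg a]

omit hc ha in
lemma tau_zero (t y : ℝ) (h : y ≤ 0 ∨ nn t ≤ y) : tau t y = 0 := by
  unfold tau
  apply max_eq_left
  rcases h with h | h
  · exact (min_le_left _ _).trans h
  · exact (min_le_right _ _).trans (by linarith)

omit hc ha in
lemma ee_mul (t v : ℝ) : v * (1 - a * ee t v) = VV a t v := by
  unfold ee VV
  rcases le_total (1/2) v with h | h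
  · rw [max_eq_left h]
    have : 0 < v := by linarith
    field_simp
  · unfold stau
    rw [tau_zero t (1 - v) (Or.inr (by linarith [(nn_le t).2]))]
    simp

lemma VV_mono (t : ℝ) : StrictMono (VV a t) := by
  intro v v' h
  unfold VV
  have h1 := stau_lip t (1 - v') t (1 - v)
  have e : 1 - v' - (1 - v) = -(v' - v) := by ring
  rw [e, abs_neg, sub_self, abs_zero, zero_add, abs_of_pos (show 0 < v' - v by linarith)] at h1
  have h2 : |a * (stau t (1 - v') - stau t (1 - v))| ≤ |a| * (v' - v) := by
    rw [abs_mul]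
    exact mul_le_mul_of_nonneg_left h1 (abs_nonneg _)
  have h3 := (abs_le.1 h2).2
  nlinarith

omit hc ha in
lemma VV_zero (t : ℝ) : VV a t 0 = 0 := by
  unfold VV stau
  rw [tau_zero t _ (Or.inr (by linarith [(nn_le t).2]))]; simp

omit hc ha in
lemma VV_one (t : ℝ) : VV a t 1 = 1 := by
  unfold VV stau
  rw [tau_zero t _ (Or.inl (by linarith))]; simp

omit hc ha in
lemma tau_deriv (t y : ℝ) (hy : 0 < y) (h1 : 2 * y ≠ nn t) (h2 : y ≠ nn t) :
    HasDerivAt (fun y => tau t y)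
      ((if 2 * y < nn t then 2 else 0) - (if y < nn t then 1 else 0)) y := by
  have hc : ContinuousAt (fun t : ℝ => t) y := continuousAt_id
  by_cases h3 : 2 * y < nn t
  · rw [if_pos h3, if_pos (by linarith)]
    norm_num
    refine (hasDerivAt_id y).congr_of_eventuallyEq ?_
    filter_upwards [hc.eventually (gt_mem_nhds (show y < nn t / 2 by linarith)),
      hc.eventually (lt_mem_nhds hy)] with u hu1 hu2
    unfold tau
    rw [min_eq_left (by linarith), max_eq_right (by linarith)]; rfl
  · have h4 : nn t < 2 * y := lt_of_le_of_ne (not_lt.1 h3) (Ne.symm h1)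
    rw [if_neg h3]
    by_cases h5 : y < nn t
    · rw [if_pos h5, zero_sub]
      refine ((hasDerivAt_id y).const_sub (nn t)).congr_of_eventuallyEq ?_
      filter_upwards [hc.eventually (gt_mem_nhds h5),
        hc.eventually (lt_mem_nhds (show nn t / 2 < y by linarith))] with u hu1 hu2
      unfold tau
      rw [min_eq_right (by linarith), max_eq_right (by linarith)]; rfl
    · rw [if_neg h5, sub_zero]
      have h6 : nn t < y := lt_of_le_of_ne (not_lt.1 h5) (Ne.symm h2)
      refine (hasDerivAt_const y (0:ℝ)).congr_of_eventuallyEq ?_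
      filter_upwards [hc.eventually (lt_mem_nhds h6)] with u hu1
      exact tau_zero t u (Or.inr hu1.le)

omit hc ha in
lemma VV_deriv (t v : ℝ) (hv : v < 1) (h1 : 2 * (1 - v) ≠ nn t) (h2 : 1 - v ≠ nn t) :
    HasDerivAt (VV a t) (sig a t (1 - v)) v := by
  have h := tau_deriv t (1 - v) (by linarith) h1 h2
  have h3 : HasDerivAt (fun v : ℝ => 1 - v) (-1) v := by
    simpa using (hasDerivAt_id v).const_sub (1:ℝ)
  have h4 := HasDerivAt.comp v h h3
  have h5 := (hasDerivAt_id v).sub ((h4.const_mul (sg t)).const_mul a)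
  refine h5.congr_deriv ?_
  unfold sig
  ring

omit hc ha in
lemma VV_cont (t : ℝ) : Continuous (VV a t) := by
  unfold VV stau tau; fun_prop

/-- radial change of variables -/
lemma radial (k : ℕ) (t : ℝ) (h : ℝ → ENNReal) :
    ∫⁻ r in Set.Ioo (0:ℝ) 1, ENNReal.ofReal (r ^ k) *
      (ENNReal.ofReal (sig a t (1 - r ^ (k + 1))) * h (r * lam k a t (r ^ (k + 1)))) =
    ∫⁻ r in Set.Ioo (0:ℝ) 1, ENNReal.ofReal (r ^ k) * h r := by
  have hk : (0:ℝ) < (k:ℝ) + 1 := by positivity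
  set p : ℝ := 1 / ((k:ℝ) + 1) with hp
  have hp0 : 0 < p := by positivity
  have hpk : ((k:ℝ) + 1) * p = 1 := by rw [hp]; field_simp
  set R : ℝ → ℝ := fun r => (VV a t (r ^ (k + 1))) ^ p with hR
  set R' : ℝ → ℝ := fun r => (sig a t (1 - r ^ (k+1)) * ((k + 1 : ℕ) * r ^ k)) * p *
    (VV a t (r ^ (k + 1))) ^ (p - 1) with hR'
  have hVm := VV_mono hc ha t
  have hpos : ∀ r ∈ Set.Ioo (0:ℝ) 1, 0 < VV a t (r ^ (k+1)) := by
    intro r hr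
    rw [← VV_zero (a := a) t]
    exact hVm (pow_pos hr.1 _)
  have root : ∀ x : ℝ, 0 ≤ x → (x ^ (k+1)) ^ p = x := by
    intro x hx
    rw [← Real.rpow_natCast, ← Real.rpow_mul hx]
    push_cast
    rw [hpk, Real.rpow_one]
  have hRlam : ∀ r ∈ Set.Ioo (0:ℝ) 1, R r = r * lam k a t (r ^ (k + 1)) := by
    intro r hr
    simp only [hR, lam]
    rw [← ee_mul, Real.mul_rpow (pow_nonneg hr.1.le _)
      (by linarith [(base_bd hc ha t (r ^ (k+1))).1]), root r hr.1.le]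
  have hmono : StrictMonoOn R (Set.Icc 0 1) := by
    intro r hr r' hr' hlt
    refine Real.rpow_lt_rpow ?_ (hVm (pow_lt_pow_left₀ hlt hr.1 (by omega))) hp0
    rw [← VV_zero (a := a) t]
    exact hVm.monotone (pow_nonneg hr.1 _)
  have hR0 : R 0 = 0 := by
    simp only [hR]
    rw [zero_pow (by omega), VV_zero, Real.zero_rpow hp0.ne']
  have hR1 : R 1 = 1 := by
    simp only [hR]
    rw [one_pow, VV_one, Real.one_rpow]
  have hcont : Continuous R := by
    refine Continuous.rpow_const ((VV_cont t).comp (continuous_pow (k+1))) (fun x => Or.inr hp0.le)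
  have himg : R '' Set.Ioo 0 1 = Set.Ioo 0 1 := by
    apply Set.Subset.antisymm
    · rintro _ ⟨r, hr, rfl⟩
      have l : (0:ℝ) ∈ Set.Icc (0:ℝ) 1 := by simp
      have u : (1:ℝ) ∈ Set.Icc (0:ℝ) 1 := by simp
      have m : r ∈ Set.Icc (0:ℝ) 1 := ⟨hr.1.le, hr.2.le⟩
      constructor
      · rw [← hR0]; exact hmono l m hr.1
      · rw [← hR1]; exact hmono m u hr.2
    · have := intermediate_value_Ioo (zero_le_one' ℝ) hcont.continuousOn
      rwa [hR0, hR1] at this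
  set T : Set ℝ := {(1 - nn t / 2) ^ p, (1 - nn t) ^ p} with hT
  have hTc : T.Countable := (Set.toFinite _).countable
  have hderiv : ∀ r ∈ Set.Ioo (0:ℝ) 1, r ∉ T → HasDerivAt R (R' r) r := by
    intro r hr hrT
    simp only [hT, Set.mem_insert_iff, Set.mem_singleton_iff, not_or] at hrT
    have h1 : 2 * (1 - r ^ (k+1)) ≠ nn t := by
      intro h
      apply hrT.1
      have : 1 - nn t / 2 = r ^ (k+1) := by linarith
      rw [this, root r hr.1.le]
    have h2 : 1 - r ^ (k+1) ≠ nn t := by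
      intro h
      apply hrT.2
      have : 1 - nn t = r ^ (k+1) := by linarith
      rw [this, root r hr.1.le]
    have d1 := VV_deriv (a := a) t (r ^ (k+1)) (pow_lt_one₀ hr.1.le hr.2 (by omega)) h1 h2
    have d2 := HasDerivAt.comp (h₂ := VV a t) (h := fun x : ℝ => x ^ (k+1)) r d1 (hasDerivAt_pow (k+1) r)
    exact d2.rpow_const (Or.inl (hpos r hr).ne')
  have hcov := cov (Set.Ioo 0 1) (Set.Ioo 0 1) T measurableSet_Ioo hTc R R'
    (hmono.monotoneOn.mono Set.Ioo_subset_Icc_self) himg hderiv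
    (fun r => ENNReal.ofReal (r ^ k) * h r)
  rw [← hcov]
  refine setLIntegral_congr_fun measurableSet_Ioo fun r hr => ?_
  rw [← hRlam r hr, ← mul_assoc, ← mul_assoc, mul_comm (ENNReal.ofReal (R' r)),
    ← ENNReal.ofReal_mul (pow_nonneg hr.1.le _), ← ENNReal.ofReal_mul (pow_nonneg (Real.rpow_nonneg (hpos r hr).le _) _)]
  congr 2
  simp only [hR, hR']
  have hv := hpos r hr
  set v := VV a t (r ^ (k+1))
  have e1 : (v ^ p) ^ k * v ^ (p - 1) = 1 := by
    rw [← Real.rpow_natCast, ← Real.rpow_mul hv.le, ← Real.rpow_add hv]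
    have : p * (k:ℝ) + (p - 1) = 0 := by linarith
    rw [this, Real.rpow_zero]
  have e2 : ((k + 1 : ℕ) : ℝ) * p = 1 := by push_cast; exact hpk
  calc _ = (r ^ k * sig a t (1 - r ^ (k+1))) * (((k + 1 : ℕ) : ℝ) * p) * ((v ^ p) ^ k * v ^ (p - 1)) := by
        rw [e1, e2]; ring
    _ = _ := by ring

end
end RY

namespace RY

lemma polar {E : Type*} [NormedAddCommGroup E] [NormedSpace ℝ E] [FiniteDimensional ℝ E]
    [MeasurableSpace E] [BorelSpace E] [Nontrivial E] (μ : Measure E) [μ.IsAddHaarMeasure]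
    (h : E → ENNReal) (hh : Measurable h) :
    ∫⁻ x in Metric.ball 0 1, h x ∂μ = ∫⁻ ω, (∫⁻ r in Set.Ioo (0:ℝ) 1,
      ENNReal.ofReal (r ^ (Module.finrank ℝ E - 1)) * h (r • (ω : E))) ∂(μ.toSphere) := by
  set h1 : E → ENNReal := (Metric.ball (0:E) 1).indicator h with hh1
  have hm1 : Measurable h1 := hh.indicator measurableSet_ball
  rw [← lintegral_indicator measurableSet_ball]
  have e1 : ∫⁻ x, h1 x ∂μ = ∫⁻ x : ({0}ᶜ : Set E), h1 x ∂(μ.comap (↑)) := by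
    rw [lintegral_subtype_comap (measurableSet_singleton _).compl h1, restrict_compl_singleton]
  have hmp := μ.measurePreserving_homeomorphUnitSphereProd
  have e2 : ∫⁻ x : ({0}ᶜ : Set E), h1 x ∂(μ.comap (↑)) =
      ∫⁻ p, h1 (p.2.1 • p.1.1) ∂(μ.toSphere.prod (Measure.volumeIoiPow (Module.finrank ℝ E - 1))) := by
    rw [← hmp.lintegral_comp_emb (Homeomorph.measurableEmbedding _)]
    refine lintegral_congr fun x => ?_
    rw [← homeomorphUnitSphereProd_symm_apply_coe, Homeomorph.symm_apply_apply]
  have hm2 : Measurable fun p : (Metric.sphere (0:E) 1) × (Set.Ioi (0:ℝ)) => h1 (p.2.1 • p.1.1) := by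
    apply hm1.comp
    apply Continuous.measurable
    fun_prop
  rw [e1, e2, lintegral_prod _ hm2.aemeasurable]
  refine lintegral_congr fun ω => ?_
  rw [Measure.volumeIoiPow, lintegral_withDensity_eq_lintegral_mul _ (by fun_prop)
    (show Measurable fun y : Set.Ioi (0:ℝ) => h1 ((y : ℝ) • (ω : E)) from
      hm2.comp (measurable_prodMk_left (x := ω)))]
  simp only [Pi.mul_apply]
  rw [lintegral_subtype_comap measurableSet_Ioi
    (fun r : ℝ => ENNReal.ofReal (r ^ (Module.finrank ℝ E - 1)) * h1 (r • (ω : E)))]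
  rw [← lintegral_indicator measurableSet_Ioi, ← lintegral_indicator measurableSet_Ioo]
  refine lintegral_congr fun r => ?_
  have hω : ‖(ω : E)‖ = 1 := by simp
  by_cases hr : 0 < r
  · rw [Set.indicator_of_mem (Set.mem_Ioi.2 hr)]
    by_cases hr1 : r < 1
    · rw [Set.indicator_of_mem (show r ∈ Set.Ioo (0:ℝ) 1 from ⟨hr, hr1⟩), hh1,
        Set.indicator_of_mem]
      simp [norm_smul, abs_of_pos hr, hr1]
    · rw [Set.indicator_of_notMem (fun h => hr1 h.2), hh1, Set.indicator_of_notMem, mul_zero]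
      simp [norm_smul, abs_of_pos hr, not_lt.1 hr1]
  · rw [Set.indicator_of_notMem (show r ∉ Set.Ioi (0:ℝ) from hr),
      Set.indicator_of_notMem (show r ∉ Set.Ioo (0:ℝ) 1 from fun h => hr h.1)]

/-- cross-section coordinate -/
noncomputable def vv {n : ℕ} (x : Fin n → ℝ) : ℝ := (min ‖x‖ 1) ^ (n - 1 + 1)

lemma vv_lip {n : ℕ} (x z : Fin n → ℝ) : |vv x - vv z| ≤ (n + 1) * ‖x - z‖ := by
  unfold vv
  have hx : |min ‖x‖ 1| ≤ 1 := by
    rw [abs_of_nonneg (le_min (norm_nonneg _) zero_le_one)]; exact min_le_right _ _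
  have hz : |min ‖z‖ 1| ≤ 1 := by
    rw [abs_of_nonneg (le_min (norm_nonneg _) zero_le_one)]; exact min_le_right _ _
  have h1 : |min ‖x‖ 1 - min ‖z‖ 1| ≤ ‖x - z‖ :=
    (abs_min_sub_min_le_max _ _ _ _).trans (max_le (abs_norm_sub_norm_le x z) (by simp))
  refine (abs_pow_sub_pow_le _ _ _).trans ?_
  have h2 : max |min ‖x‖ 1| |min ‖z‖ 1| ^ (n - 1 + 1 - 1) ≤ 1 :=
    pow_le_one₀ (le_max_of_le_left (abs_nonneg _)) (max_le hx hz)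
  have h3 : ((n - 1 + 1 : ℕ) : ℝ) ≤ n + 1 := by
    have : n - 1 + 1 ≤ n + 1 := by omega
    exact_mod_cast this
  have h4 : (0:ℝ) ≤ ((n - 1 + 1 : ℕ) : ℝ) := Nat.cast_nonneg _
  have h5 : (0:ℝ) ≤ max |min ‖x‖ 1| |min ‖z‖ 1| := le_max_of_le_left (abs_nonneg _)
  calc _ ≤ |min ‖x‖ 1 - min ‖z‖ 1| * ((n - 1 + 1 : ℕ) : ℝ) * 1 := by gcongr
    _ ≤ ‖x - z‖ * (n + 1) * 1 := by gcongr
    _ = _ := by ring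

lemma vv_mem {n : ℕ} (x : Fin n → ℝ) : 0 ≤ vv x ∧ vv x ≤ 1 := by
  unfold vv
  have h0 : 0 ≤ min ‖x‖ 1 := le_min (norm_nonneg _) zero_le_one
  exact ⟨pow_nonneg h0 _, pow_le_one₀ h0 (min_le_right _ _)⟩

lemma vv_one {n : ℕ} (x : Fin n → ℝ) (hx : 1 ≤ ‖x‖) : vv x = 1 := by
  unfold vv
  rw [min_eq_right hx, one_pow]

lemma lam_one (k : ℕ) (a t v : ℝ) (h : tau t (1 - v) = 0) : lam k a t v = 1 := by
  unfold lam ee stau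
  rw [h]; simp

lemma lam_nonneg {c a : ℝ} (hc : 0 < c) (ha : |a| ≤ 1 - c) (k : ℕ) (t v : ℝ) : 0 ≤ lam k a t v :=
  Real.rpow_nonneg (by linarith [(base_bd hc ha t v).1]) _

lemma lam_lt {c a : ℝ} (hc : 0 < c) (ha : |a| ≤ 1 - c) (k : ℕ) (t r : ℝ) (hr : 0 ≤ r) (hr1 : r < 1) :
    lam k a t (r ^ (k+1)) * r < 1 := by
  have h0 := lam_nonneg hc ha k t (r ^ (k+1))
  have h1 : (lam k a t (r ^ (k+1)) * r) ^ (k+1) = VV a t (r ^ (k+1)) := by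
    rw [← ee_mul, mul_pow, mul_comm]
    congr 1
    unfold lam
    rw [← Real.rpow_natCast, ← Real.rpow_mul (by linarith [(base_bd hc ha t (r ^ (k+1))).1])]
    have : 1 / ((k:ℝ) + 1) * ((k + 1 : ℕ) : ℝ) = 1 := by
      push_cast
      field_simp
    rw [this, Real.rpow_one]
  have h2 : VV a t (r ^ (k+1)) < 1 := by
    rw [← VV_one (a := a) t]
    exact VV_mono hc ha t (pow_lt_one₀ hr hr1 (by omega))
  rw [← h1] at h2
  exact (pow_lt_one_iff_of_nonneg (mul_nonneg h0 hr) (by omega)).1 h2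

lemma disp_comp {X : Type*} [NormedAddCommGroup X] (f g : X → X) (L1 L2 : ℝ) (h2 : 0 ≤ L2)
    (hf : ∀ x y, ‖(f x - x) - (f y - y)‖ ≤ L1 * ‖x - y‖)
    (hg : ∀ x y, ‖(g x - x) - (g y - y)‖ ≤ L2 * ‖x - y‖) (x y : X) :
    ‖(g (f x) - x) - (g (f y) - y)‖ ≤ (L2 * (1 + L1) + L1) * ‖x - y‖ := by
  have e : (g (f x) - x) - (g (f y) - y) =
    ((g (f x) - f x) - (g (f y) - f y)) + ((f x - x) - (f y - y)) := by abel
  have e2 : f x - f y = ((f x - x) - (f y - y)) + (x - y) := by abel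
  have h3 : ‖f x - f y‖ ≤ L1 * ‖x - y‖ + ‖x - y‖ := by
    rw [e2]; exact (norm_add_le _ _).trans (by linarith [hf x y])
  rw [e]
  refine (norm_add_le _ _).trans ?_
  have h4 := mul_le_mul_of_nonneg_left h3 h2
  linarith [hf x y, hg (f x) (f y)]

lemma disp_cont {X : Type*} [NormedAddCommGroup X] (f : X → X) (L : ℝ)
    (hf : ∀ x y, ‖(f x - x) - (f y - y)‖ ≤ L * ‖x - y‖) : Continuous f := by
  have : LipschitzWith (Real.toNNReal L) (fun x => f x - x) := by
    refine LipschitzWith.of_dist_le_mul fun x y => ?_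
    rw [dist_eq_norm, dist_eq_norm]
    exact (hf x y).trans (mul_le_mul_of_nonneg_right (Real.le_coe_toNNReal L) (norm_nonneg _))
  have h2 := this.continuous.add continuous_id
  convert h2 using 1
  funext x
  simp

lemma radialE {c a : ℝ} (hc : 0 < c) (ha : |a| ≤ 1 - c) (n : ℕ) (t : ℝ)
    (g : (Fin n → ℝ) → ENNReal) (hg : Measurable g)
    (hl : Measurable fun x : Fin n → ℝ => lam (n-1) a t (vv x))
    (hs : Measurable fun x : Fin n → ℝ => sig a t (1 - vv x)) :
    ∫⁻ x in Metric.ball (0 : Fin n → ℝ) 1, ENNReal.ofReal (sig a t (1 - vv x)) *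
      g (lam (n-1) a t (vv x) • x) = ∫⁻ x in Metric.ball (0 : Fin n → ℝ) 1, g x := by
  rcases Nat.eq_zero_or_pos n with rfl | hn
  · refine lintegral_congr fun x => ?_
    have h1 : vv x = 0 := by
      unfold vv
      have : ‖x‖ = 0 := by rw [norm_eq_zero]; exact Subsingleton.elim _ _
      rw [this]; simp
    have h2 : sig a t (1 - vv x) = 1 := by
      rw [h1]
      unfold sig
      have := (nn_le t).2
      rw [if_neg (by linarith), if_neg (by linarith)]; simp
    rw [h2, ENNReal.ofReal_one, one_mul]
    congr 1
    exact Subsingleton.elim _ _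
  · obtain ⟨k, rfl⟩ : ∃ k, n = k + 1 := ⟨n - 1, by omega⟩
    have hd : Module.finrank ℝ (Fin (k+1) → ℝ) - 1 = k := by simp
    simp only [Nat.add_sub_cancel] at *
    rw [polar volume (fun x : Fin (k+1) → ℝ => ENNReal.ofReal (sig a t (1 - vv x)) * g (lam k a t (vv x) • x))
      (hs.ennreal_ofReal.mul (hg.comp (hl.smul measurable_id))), polar volume _ hg, hd]
    refine lintegral_congr fun ω => ?_
    rw [← radial hc ha k t (fun r => g (r • (ω : Fin (k+1) → ℝ)))]
    refine setLIntegral_congr_fun measurableSet_Ioo fun r hr => ?_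
    have hv : vv (r • (ω : Fin (k+1) → ℝ)) = r ^ (k+1) := by
      unfold vv
      have hω : ‖(ω : Fin (k+1) → ℝ)‖ = 1 := by simp
      rw [norm_smul, hω, Real.norm_of_nonneg hr.1.le, mul_one, min_eq_left hr.2.le]
      simp
    simp only [hv, smul_smul, mul_comm r]

lemma sg_meas : Measurable sg := by
  unfold sg
  exact Measurable.ite measurableSet_Ioi measurable_const measurable_const

lemma nn_cont : Continuous nn := by unfold nn; fun_prop

lemma sig_meas (a : ℝ) : Measurable fun p : ℝ × ℝ => sig a p.1 p.2 := by
  unfold sig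
  have h := nn_cont.measurable
  have h' := sg_meas
  refine measurable_const.add (measurable_const.mul ((h'.comp measurable_fst).mul (Measurable.sub ?_ ?_)))
  · exact Measurable.ite (measurableSet_lt (by fun_prop) (h.comp measurable_fst))
      measurable_const measurable_const
  · exact Measurable.ite (measurableSet_lt (by fun_prop) (h.comp measurable_fst))
      measurable_const measurable_const

lemma vv_cont {n : ℕ} : Continuous (vv : (Fin n → ℝ) → ℝ) := by unfold vv; fun_prop

lemma box (n : ℕ) (c : ℝ) (hc : 0 < c) : ∃ C : ℝ, 0 ≤ C ∧ ∀ a : ℝ, |a| ≤ 1 - c →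
    ∃ f : ℝ × (Fin n → ℝ) → ℝ × (Fin n → ℝ),
      (∀ x y, ‖(f x - x) - (f y - y)‖ ≤ C * |a| * ‖x - y‖) ∧
      (∀ x, 1 ≤ ‖x‖ → f x = x) ∧ (∀ x, ‖x‖ < 1 → ‖f x‖ < 1) ∧
      ∀ g : ℝ × (Fin n → ℝ) → ENNReal, Measurable g →
        ∫⁻ x in Metric.ball 0 1, ENNReal.ofReal (1 + a * sg x.1) * g (f x) =
          ∫⁻ x in Metric.ball 0 1, g x := by
  set L1 : ℝ := (6 + 10 * (n + 1)) / c with hL1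
  set L2 : ℝ := 8 + 12 * (n + 1) + 2 with hL2
  have hL1' : 0 ≤ L1 := by positivity
  have hL2' : 0 ≤ L2 := by positivity
  refine ⟨L2 * (1 + L1) + L1, by positivity, fun a ha => ?_⟩
  have ha1 : |a| ≤ 1 := by linarith
  obtain ⟨F, hF⟩ := exists_F a
  set S1 : ℝ × (Fin n → ℝ) → ℝ × (Fin n → ℝ) := fun x => (F x.1 (1 - vv x.2), x.2) with hS1
  set S2 : ℝ × (Fin n → ℝ) → ℝ × (Fin n → ℝ) :=
    fun x => (x.1, lam (n-1) a x.1 (vv x.2) • x.2) with hS2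
  have hv0 : ∀ x : Fin n → ℝ, 0 ≤ 1 - vv x := fun x => by linarith [(vv_mem x).2]
  have hS1l : ∀ x y, ‖(S1 x - x) - (S1 y - y)‖ ≤ (L1 * |a|) * ‖x - y‖ := by
    intro x y
    have h1 := F_lip hc ha hF x.1 (1 - vv x.2) y.1 (1 - vv y.2) (hv0 _) (hv0 _)
    have h2 := vv_lip x.2 y.2
    have e1 : 1 - vv x.2 - (1 - vv y.2) = -(vv x.2 - vv y.2) := by ring
    rw [e1, abs_neg] at h1
    have h3 : |x.1 - y.1| ≤ ‖x - y‖ := norm_fst_le (x - y)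
    have h4 : ‖x.2 - y.2‖ ≤ ‖x - y‖ := norm_snd_le (x - y)
    have h5 : ‖(S1 x - x) - (S1 y - y)‖ =
        |(F x.1 (1 - vv x.2) - x.1) - (F y.1 (1 - vv y.2) - y.1)| := by
      rw [Prod.norm_def]
      simp [hS1]
    rw [h5]
    refine h1.trans ?_
    have h6 : 6 * |x.1 - y.1| + 10 * |vv x.2 - vv y.2| ≤ (6 + 10 * (n + 1)) * ‖x - y‖ := by
      have : ((n:ℝ) + 1) * ‖x.2 - y.2‖ ≤ (n + 1) * ‖x - y‖ := by gcongr
      linarith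
    calc _ ≤ |a| / c * ((6 + 10 * (n + 1)) * ‖x - y‖) :=
          mul_le_mul_of_nonneg_left h6 (by positivity)
      _ = _ := by rw [hL1]; ring
  have lam1 : ∀ (t : ℝ) (x : Fin n → ℝ), 1 ≤ ‖x‖ → lam (n-1) a t (vv x) = 1 := by
    intro t x hx
    apply lam_one
    rw [vv_one x hx]
    exact tau_zero t _ (Or.inl (by linarith))
  have hS2l : ∀ x y, ‖(S2 x - x) - (S2 y - y)‖ ≤ (L2 * |a|) * ‖x - y‖ := by
    intro x y
    have h1 := lam_lip hc ha (n-1) x.1 (vv x.2) y.1 (vv y.2)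
    have h2 := vv_lip x.2 y.2
    have h3 : |x.1 - y.1| ≤ ‖x - y‖ := norm_fst_le (x - y)
    have h4 : ‖x.2 - y.2‖ ≤ ‖x - y‖ := norm_snd_le (x - y)
    have hmx := lam_sub_one hc ha (n-1) x.1 (vv x.2)
    have hmy := lam_sub_one hc ha (n-1) y.1 (vv y.2)
    have hx1 := lam1 x.1 x.2
    have hy1 := lam1 y.1 y.2
    have h5 : ‖(S2 x - x) - (S2 y - y)‖ =
        ‖(lam (n-1) a x.1 (vv x.2) - 1) • x.2 - (lam (n-1) a y.1 (vv y.2) - 1) • y.2‖ := by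
      rw [Prod.norm_def]
      simp [hS2, sub_smul]
    rw [h5]
    set lx := lam (n-1) a x.1 (vv x.2)
    set ly := lam (n-1) a y.1 (vv y.2)
    have h6 : |lx - ly| ≤ |a| * ((8 + 12 * (n + 1)) * ‖x - y‖) := by
      refine h1.trans (mul_le_mul_of_nonneg_left ?_ (abs_nonneg _))
      have : ((n:ℝ) + 1) * ‖x.2 - y.2‖ ≤ (n + 1) * ‖x - y‖ := by gcongr
      linarith
    have h7 : ∀ (l m : ℝ) (p q : Fin n → ℝ), ‖p‖ ≤ 1 → |m| ≤ 2 * |a| →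
        ‖l • p - m • q‖ ≤ |l - m| + 2 * |a| * ‖p - q‖ := by
      intro l m p q hp hm
      have : l • p - m • q = (l - m) • p + m • (p - q) := by
        rw [sub_smul, smul_sub]; abel
      rw [this]
      refine (norm_add_le _ _).trans ?_
      rw [norm_smul, norm_smul, Real.norm_eq_abs, Real.norm_eq_abs]
      have a1 : |l - m| * ‖p‖ ≤ |l - m| * 1 := by gcongr
      have a2 : |m| * ‖p - q‖ ≤ 2 * |a| * ‖p - q‖ := by gcongr
      linarith
    have fin : |lx - ly| + 2 * |a| * ‖x.2 - y.2‖ ≤ L2 * |a| * ‖x - y‖ := by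
      have : 2 * |a| * ‖x.2 - y.2‖ ≤ 2 * |a| * ‖x - y‖ := by gcongr
      rw [hL2]; linarith
    by_cases hx : ‖x.2‖ ≤ 1
    · have := h7 (lx - 1) (ly - 1) x.2 y.2 hx hmy
      rw [sub_sub_sub_cancel_right] at this
      linarith
    · by_cases hy : ‖y.2‖ ≤ 1
      · have := h7 (ly - 1) (lx - 1) y.2 x.2 hy hmx
        rw [sub_sub_sub_cancel_right, abs_sub_comm, norm_sub_rev y.2, norm_sub_rev] at this
        linarith
      · rw [hx1 (le_of_not_ge hx), hy1 (le_of_not_ge hy)]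
        simp
        positivity
  have hS1c := disp_cont S1 _ hS1l
  have hS2c := disp_cont S2 _ hS2l
  refine ⟨fun x => S2 (S1 x), ?_, ?_, ?_, ?_⟩
  · intro x y
    refine (disp_comp S1 S2 _ _ (by positivity) hS1l hS2l x y).trans ?_
    have : L2 * |a| * (1 + L1 * |a|) + L1 * |a| ≤ (L2 * (1 + L1) + L1) * |a| := by
      have : L2 * |a| * (1 + L1 * |a|) ≤ L2 * |a| * (1 + L1 * 1) := by gcongr
      linarith
    gcongr
  · intro x hx
    rw [Prod.norm_def, le_max_iff] at hx
    rcases hx with hx | hx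
    · have h1 : S1 x = x := by
        simp only [hS1]
        rw [F_out hc ha hF _ _ (hv0 _) hx]
      show S2 (S1 x) = x
      rw [h1]
      simp only [hS2]
      rw [lam_one, one_smul]
      apply tau_zero
      right
      have : nn x.1 ≤ 1 - |x.1| := min_le_right _ _
      rw [Real.norm_eq_abs] at hx
      linarith [hv0 x.2]
    · have h1 : S1 x = x := by
        simp only [hS1]
        rw [vv_one _ hx, sub_self, F_zero hc ha hF]
      show S2 (S1 x) = x
      rw [h1]
      simp only [hS2]
      rw [lam1 _ _ hx, one_smul]
  · intro x hx
    rw [Prod.norm_def, max_lt_iff] at *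
    refine ⟨F_in hc ha hF _ _ (hv0 _) hx.1, ?_⟩
    simp only [hS2, hS1]
    rw [norm_smul, Real.norm_of_nonneg (lam_nonneg hc ha _ _ _)]
    have := lam_lt hc ha (n-1) (F x.1 (1 - vv x.2)) ‖x.2‖ (norm_nonneg _) hx.2
    unfold vv
    rw [min_eq_left hx.2.le]
    unfold vv at this
    rwa [min_eq_left hx.2.le] at this
  · intro g hg
    have hball : Metric.ball (0 : ℝ × (Fin n → ℝ)) 1 = Metric.ball 0 1 ×ˢ Metric.ball 0 1 := by
      rw [ball_prod_same]; rfl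
    rw [hball, Measure.volume_eq_prod, ← Measure.prod_restrict]
    have hgS : Measurable fun x => g (S2 x) := hg.comp hS2c.measurable
    have hm1 : Measurable fun x : ℝ × (Fin n → ℝ) => ENNReal.ofReal (1 + a * sg x.1) :=
      (measurable_const.add (measurable_const.mul (sg_meas.comp measurable_fst))).ennreal_ofReal
    have hsm : Measurable fun x : ℝ × (Fin n → ℝ) => sig a x.1 (1 - vv x.2) :=
      (sig_meas a).comp (measurable_fst.prodMk
        (measurable_const.sub (vv_cont.measurable.comp measurable_snd)))
    rw [lintegral_prod_symm (fun x : ℝ × (Fin n → ℝ) => ENNReal.ofReal (1 + a * sg x.1) * g (S2 (S1 x))) (hm1.mul (hgS.comp hS1c.measurable)).aemeasurable,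
      lintegral_prod _ hg.aemeasurable]
    have step1 : ∀ x : Fin n → ℝ, 
        ∫⁻ t in Metric.ball (0:ℝ) 1, ENNReal.ofReal (1 + a * sg t) * g (S2 (S1 (t, x))) =
        ∫⁻ t in Metric.ball (0:ℝ) 1, ENNReal.ofReal (sig a t (1 - vv x)) * g (S2 (t, x)) := by
      intro x
      have hp := F_push hc ha hF (1 - vv x) (hv0 x)
        ((Metric.ball (0:ℝ) 1).indicator fun t => g (S2 (t, x)))
      rw [← lintegral_indicator measurableSet_ball, ← lintegral_indicator measurableSet_ball]
      have e2 : ∀ t, ENNReal.ofReal (sig a t (1 - vv x)) *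
          (Metric.ball (0:ℝ) 1).indicator (fun t => g (S2 (t, x))) t =
          (Metric.ball (0:ℝ) 1).indicator
            (fun t => ENNReal.ofReal (sig a t (1 - vv x)) * g (S2 (t, x))) t := by
        intro t
        by_cases ht : t ∈ Metric.ball (0:ℝ) 1
        · rw [Set.indicator_of_mem ht, Set.indicator_of_mem ht]
        · rw [Set.indicator_of_notMem ht, Set.indicator_of_notMem ht, mul_zero]
      simp_rw [e2] at hp
      rw [← hp]
      have hne : ∀ᵐ t : ℝ, t ≠ 0 := by
        simp [ae_iff, measure_singleton]
      refine lintegral_congr_ae ?_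
      filter_upwards [hne] with t ht0
      by_cases ht : |t| < 1
      · rw [Set.indicator_of_mem (by simpa using ht), Set.indicator_of_mem (by
          simpa using F_in hc ha hF t _ (hv0 x) ht)]
        congr 2
        unfold sig
        have : 0 < nn t := lt_min (abs_pos.2 ht0) (by linarith)
        rw [if_pos (by linarith), if_pos this]; ring
      · rw [Set.indicator_of_notMem (by simpa using ht), Set.indicator_of_notMem (by
          rw [F_out hc ha hF t _ (hv0 x) (not_lt.1 ht)]; simpa using ht), mul_zero]
    simp_rw [step1]
    rw [lintegral_lintegral_swap]
    · refine lintegral_congr fun t => ?_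
      have hlm : Measurable fun x : Fin n → ℝ => lam (n-1) a t (vv x) := by
        have : Continuous fun v => lam (n-1) a t v := by
          unfold lam ee stau tau
          refine Continuous.rpow_const ?_ (fun x => Or.inr (by positivity))
          refine continuous_const.sub (continuous_const.mul (Continuous.div (by fun_prop) (by fun_prop) ?_))
          intro x
          have : (1:ℝ)/2 ≤ max x (1/2) := le_max_right _ _
          linarith
        exact (this.comp vv_cont).measurable
      exact radialE hc ha n t (fun x => g (t, x)) (hg.comp measurable_prodMk_left) hlm
        (hsm.comp (measurable_prodMk_left (x := t)))
    · exact ((hsm.ennreal_ofReal.mul hgS).comp measurable_swap).aemeasurable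

end RY

namespace RY

lemma boxd (n : ℕ) (c : ℝ) (hc : 0 < c) : ∃ C : ℝ, 0 ≤ C ∧ ∀ (i : Fin (n+1)) (a : ℝ), |a| ≤ 1 - c →
    ∃ f : (Fin (n+1) → ℝ) → (Fin (n+1) → ℝ),
      (∀ x y, ‖(f x - x) - (f y - y)‖ ≤ C * |a| * ‖x - y‖) ∧
      (∀ x, 1 ≤ ‖x‖ → f x = x) ∧ (∀ x, ‖x‖ < 1 → ‖f x‖ < 1) ∧
      ∀ g : (Fin (n+1) → ℝ) → ENNReal, Measurable g →
        ∫⁻ x in Metric.ball 0 1, ENNReal.ofReal (1 + a * sg (x i)) * g (f x) =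
          ∫⁻ x in Metric.ball 0 1, g x := by
  obtain ⟨C, hC, H⟩ := box n c hc
  refine ⟨C, hC, fun i a ha => ?_⟩
  obtain ⟨f, f1, f2, f3, f4⟩ := H a ha
  set e := MeasurableEquiv.piFinSuccAbove (fun _ : Fin (n+1) => ℝ) i with he
  have hmp : MeasurePreserving e volume volume := volume_preserving_piFinSuccAbove (fun _ => ℝ) i
  have e1 : ∀ x, (e x).1 = x i := fun x => rfl
  have esub : ∀ x y, e (x - y) = e x - e y := fun x y => rfl
  have enorm : ∀ x, ‖e x‖ = ‖x‖ := by
    intro x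
    refine le_antisymm ?_ ?_
    · rw [Prod.norm_def]
      refine max_le (norm_le_pi_norm x i) ((pi_norm_le_iff_of_nonneg (norm_nonneg _)).2 fun j => ?_)
      exact norm_le_pi_norm x _
    · refine (pi_norm_le_iff_of_nonneg (norm_nonneg _)).2 fun j => ?_
      rcases Fin.eq_self_or_eq_succAbove i j with rfl | ⟨k, rfl⟩
      · exact norm_fst_le (e x)
      · exact (norm_le_pi_norm (e x).2 k).trans (norm_snd_le (e x))
  have hf : Continuous f := disp_cont f _ f1
  have hball : e ⁻¹' (Metric.ball 0 1) = Metric.ball 0 1 := by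
    ext x; simp [enorm]
  refine ⟨fun x => e.symm (f (e x)), ?_, ?_, ?_, ?_⟩
  · intro x y
    rw [← enorm, esub, esub, esub, e.apply_symm_apply, e.apply_symm_apply, ← enorm (x - y), esub]
    exact f1 _ _
  · intro x hx
    show e.symm (f (e x)) = x
    rw [f2 _ (by rwa [enorm]), e.symm_apply_apply]
  · intro x hx
    show ‖e.symm (f (e x))‖ < 1
    rw [← enorm, e.apply_symm_apply]
    exact f3 _ (by rwa [enorm])
  · intro g hg
    have h := f4 (fun z => g (e.symm z)) (hg.comp e.symm.measurable)
    rw [← hmp.setLIntegral_comp_preimage_emb e.measurableEmbedding,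
      ← hmp.setLIntegral_comp_preimage_emb e.measurableEmbedding, hball] at h
    simp only [e.symm_apply_apply] at h
    exact h

end RY

namespace RY

lemma diag_lint {d : ℕ} (D b : Fin d → ℝ) (hD : ∀ k, D k ≠ 0) : ∃ κ : ENNReal,
    ∀ G : (Fin d → ℝ) → ENNReal, Measurable G →
      ∫⁻ x : Fin d → ℝ, G (fun k => D k * x k + b k) = κ * ∫⁻ x, G x := by
  have hdet : (Matrix.diagonal D).det ≠ 0 := by
    rw [Matrix.det_diagonal]; exact Finset.prod_ne_zero_iff.2 fun k _ => hD k
  have h := Real.map_matrix_volume_pi_eq_smul_volume_pi hdet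
  refine ⟨ENNReal.ofReal |(Matrix.diagonal D).det⁻¹|, fun G hG => ?_⟩
  have h2 : ∫⁻ x, G (x + b) ∂(Measure.map (Matrix.toLin' (Matrix.diagonal D)) volume) =
      ∫⁻ x : Fin d → ℝ, G (fun k => D k * x k + b k) := by
    rw [lintegral_map (by fun_prop) (LinearMap.continuous_on_pi _).measurable]
    refine lintegral_congr fun x => ?_
    congr 1
    funext k
    simp [Matrix.mulVec_diagonal]
  rw [← h2, h, lintegral_smul_measure, lintegral_add_right_eq_self, smul_eq_mul]

lemma ceil_meas {d : ℕ} (F : (Fin d → ℤ) → ENNReal) (φ : (Fin d → ℝ) → (Fin d → ℤ))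
    (hφ : ∀ k, Measurable fun x => φ x k) : Measurable fun x => F (φ x) :=
  (measurable_of_countable F).comp (measurable_pi_lambda _ hφ)

lemma ae_nonint (d : ℕ) : ∀ᵐ y : Fin d → ℝ, ∀ k, ∀ n : ℤ, y k ≠ n := by
  rw [ae_all_iff]; intro k
  rw [ae_all_iff]; intro n
  exact Measure.ae_eval_ne (μ := fun _ : Fin d => (volume : Measure ℝ)) k (n : ℝ)

/-- average of neighbouring values in direction `i` -/
noncomputable def avg {d : ℕ} (i : Fin d) (q : (Fin d → ℤ) → ℝ) (p : Fin d → ℤ) : ℝ :=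
  (q (Function.update p i (2 * p i - 1)) + q (Function.update p i (2 * p i))) / 2

lemma unit_step (n : ℕ) (θ : ℝ) (hθ : 0 < θ) : ∃ C : ℝ, 0 ≤ C ∧
    ∀ (i : Fin (n+1)) (q : (Fin (n+1) → ℤ) → ℝ) (m M : ℝ), θ ≤ m → M ≤ 1 / θ →
    (∀ p, m ≤ q p ∧ q p ≤ M) →
    ∃ Ψ : (Fin (n+1) → ℝ) → (Fin (n+1) → ℝ),
      (∀ x y, ‖(Ψ x - x) - (Ψ y - y)‖ ≤ C * (M - m) * ‖x - y‖) ∧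
      (∀ x k, ⌈Ψ x k⌉ = ⌈x k⌉) ∧
      ∀ g : (Fin (n+1) → ℝ) → ENNReal, Measurable g →
        ∫⁻ y, ENNReal.ofReal (q (Function.update (fun k => ⌈y k⌉) i ⌈2 * y i⌉)) * g (Ψ y) =
        ∫⁻ y, ENNReal.ofReal (avg i q (fun k => ⌈y k⌉)) * g y := by
  obtain ⟨C, hC, H⟩ := boxd n (θ ^ 2) (by positivity)
  refine ⟨C / θ, by positivity, fun i q m M hm hM hq => ?_⟩
  set a : (Fin (n+1) → ℤ) → ℝ := fun p =>
    (q (Function.update p i (2 * p i)) - q (Function.update p i (2 * p i - 1))) /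
    (q (Function.update p i (2 * p i)) + q (Function.update p i (2 * p i - 1))) with ha_def
  have ha : ∀ p, |a p| ≤ 1 - θ ^ 2 := by
    intro p
    simp only [ha_def]
    obtain ⟨h1, h2⟩ := hq (Function.update p i (2 * p i))
    obtain ⟨h3, h4⟩ := hq (Function.update p i (2 * p i - 1))
    set u := q (Function.update p i (2 * p i))
    set v := q (Function.update p i (2 * p i - 1))
    have hu : u * θ ≤ 1 := by rw [← le_div_iff₀ hθ]; linarith
    have hv : v * θ ≤ 1 := by rw [← le_div_iff₀ hθ]; linarith
    have hpos : 0 < u + v := by linarith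
    rw [abs_div, abs_of_pos hpos, div_le_iff₀ hpos, abs_le]
    constructor <;> nlinarith
  have ha2 : ∀ p, |a p| ≤ (M - m) / (2 * θ) := by
    intro p
    simp only [ha_def]
    obtain ⟨h1, h2⟩ := hq (Function.update p i (2 * p i))
    obtain ⟨h3, h4⟩ := hq (Function.update p i (2 * p i - 1))
    set u := q (Function.update p i (2 * p i))
    set v := q (Function.update p i (2 * p i - 1))
    have hpos : 0 < u + v := by linarith
    rw [abs_div, abs_of_pos hpos]
    apply div_le_div₀ (by linarith) _ (by linarith) (by linarith)
    rw [abs_le]; constructor <;> linarith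
  choose f f1 f2 f3 f4 using fun p => H i (a p) (ha p)
  -- affine coordinates of the cube
  set A : (Fin (n+1) → ℤ) → (Fin (n+1) → ℝ) → (Fin (n+1) → ℝ) :=
    fun p y k => 2 * y k + (1 - 2 * (p k : ℝ)) with hA
  set B : (Fin (n+1) → ℤ) → (Fin (n+1) → ℝ) → (Fin (n+1) → ℝ) :=
    fun p z k => (z k - (1 - 2 * (p k : ℝ))) / 2 with hB
  have hBA : ∀ p y, B p (A p y) = y := by intro p y; funext k; simp only [hA, hB]; ring
  set W : (Fin (n+1) → ℤ) → (Fin (n+1) → ℝ) → (Fin (n+1) → ℝ) :=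
    fun p y => B p (f p (A p y)) - y with hW
  have hWe : ∀ p y, W p y = (1/2 : ℝ) • (f p (A p y) - A p y) := by
    intro p y; funext k
    simp only [hW, hB, hA, Pi.sub_apply, Pi.smul_apply, smul_eq_mul]; ring
  have hAs : ∀ p x y, A p x - A p y = (2:ℝ) • (x - y) := by
    intro p x y; funext k; simp only [hA, Pi.sub_apply, Pi.smul_apply, smul_eq_mul]; ring
  have hWl : ∀ p x y, ‖W p x - W p y‖ ≤ C * ((M - m) / (2 * θ)) * ‖x - y‖ := by
    intro p x y
    have h1 := f1 p (A p x) (A p y)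
    rw [hWe, hWe, ← smul_sub, norm_smul]
    rw [hAs, norm_smul] at h1
    have h2 : C * |a p| * ‖x - y‖ ≤ C * ((M - m) / (2 * θ)) * ‖x - y‖ := by
      gcongr; exact ha2 p
    norm_num at h1 ⊢
    linarith
  have hin : ∀ (p : Fin (n+1) → ℤ) y, ‖A p y‖ < 1 → ∀ k, ⌈y k⌉ = p k := by
    intro p y h k
    have := (norm_le_pi_norm (A p y) k).trans_lt h
    simp only [hA, Real.norm_eq_abs, abs_lt] at this
    rw [Int.ceil_eq_iff]; constructor <;> linarith
  have hW0 : ∀ (p : Fin (n+1) → ℤ) y, (fun k => ⌈y k⌉) ≠ p → W p y = 0 := by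
    intro p y h
    have : 1 ≤ ‖A p y‖ := by
      by_contra h1
      exact h (funext (hin p y (not_le.1 h1)))
    rw [hWe, f2 p _ this, sub_self, smul_zero]
  have hMm : 0 ≤ M - m := by linarith [(hq 0).1, (hq 0).2]
  set Ψ : (Fin (n+1) → ℝ) → (Fin (n+1) → ℝ) := fun y => y + W (fun k => ⌈y k⌉) y with hΨ
  have hΨl : ∀ x y, ‖(Ψ x - x) - (Ψ y - y)‖ ≤ C / θ * (M - m) * ‖x - y‖ := by
    intro x y
    have e1 : ∀ x, Ψ x - x = W (fun k => ⌈x k⌉) x := by intro x; simp [hΨ]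
    have e2 : C / θ * (M - m) * ‖x - y‖ = C * ((M - m) / (2 * θ)) * ‖x - y‖ +
        C * ((M - m) / (2 * θ)) * ‖x - y‖ := by field_simp; ring
    have e3 : 0 ≤ C * ((M - m) / (2 * θ)) * ‖x - y‖ := by positivity
    rw [e1, e1]
    by_cases h : (fun k => ⌈x k⌉) = (fun k => ⌈y k⌉)
    · rw [h]; linarith [hWl (fun k => ⌈y k⌉) x y]
    · have h1 := hWl (fun k => ⌈x k⌉) x y
      have h2 := hWl (fun k => ⌈y k⌉) x y
      rw [hW0 _ y (Ne.symm h), sub_zero] at h1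
      rw [hW0 _ x h, zero_sub, norm_neg] at h2
      linarith [norm_sub_le (W (fun k => ⌈x k⌉) x) (W (fun k => ⌈y k⌉) y)]
  have hΨB : ∀ y, Ψ y = B (fun k => ⌈y k⌉) (f (fun k => ⌈y k⌉) (A (fun k => ⌈y k⌉) y)) := by
    intro y; simp [hΨ, hW]
  have hΨm : Measurable Ψ := (disp_cont Ψ _ hΨl).measurable
  refine ⟨Ψ, hΨl, ?_, ?_⟩
  · intro x k
    set p : Fin (n+1) → ℤ := fun k => ⌈x k⌉ with hp
    by_cases h : ‖A p x‖ < 1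
    · have h1 := f3 p _ h
      have h2 : A p (Ψ x) = f p (A p x) := by
        rw [hΨB]; funext k; simp only [hA, hB]; ring
      rw [← h2] at h1
      exact hin p _ h1 k
    · have : Ψ x = x := by rw [hΨB, f2 _ _ (not_lt.1 h), hBA]
      rw [this]
  · intro g hg
    have hpart : ∀ G : (Fin (n+1) → ℝ) → ENNReal,
        ∫⁻ y, G y = ∑' p : Fin (n+1) → ℤ, ∫⁻ y in {y | (fun k => ⌈y k⌉) = p}, G y := by
      intro G
      rw [← lintegral_iUnion]
      · have : (⋃ p : Fin (n+1) → ℤ, {y : Fin (n+1) → ℝ | (fun k => ⌈y k⌉) = p}) = Set.univ := by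
          ext y; simp
        rw [this, setLIntegral_univ]
      · intro p
        exact (measurable_pi_lambda (fun y : Fin (n+1) → ℝ => fun k => ⌈y k⌉)
          (fun k => (measurable_pi_apply k).ceil)) (measurableSet_singleton p)
      · intro p p' hne
        refine Set.disjoint_left.2 fun y h1 h2 => hne ?_
        rw [← h1, ← h2]
    rw [hpart, hpart]
    refine tsum_congr fun p => ?_
    have hset : ({y : Fin (n+1) → ℝ | (fun k => ⌈y k⌉) = p} : Set _) =ᵐ[volume]
        A p ⁻¹' (Metric.ball 0 1) := by
      filter_upwards [ae_nonint (n+1)] with y hy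
      apply propext
      show (fun k => ⌈y k⌉) = p ↔ A p y ∈ Metric.ball 0 1
      rw [mem_ball_zero_iff]
      constructor
      · rintro rfl
        rw [pi_norm_lt_iff one_pos]
        intro k
        have h1 := Int.le_ceil (y k)
        have h2 := Int.ceil_lt_add_one (y k)
        have h3 : y k < ⌈y k⌉ := lt_of_le_of_ne h1 (hy k _)
        simp only [hA, Real.norm_eq_abs, abs_lt]
        constructor <;> linarith
      · intro h; exact funext (hin p y h)
    rw [setLIntegral_congr hset, setLIntegral_congr hset]
    have hAm : Measurable (A p) := by
      refine measurable_pi_lambda _ fun k => ?_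
      simp only [hA]; fun_prop
    have hBm : Measurable (B p) := by
      refine measurable_pi_lambda _ fun k => ?_
      simp only [hB]; fun_prop
    have hfm : Measurable (f p) := (disp_cont (f p) _ (f1 p)).measurable
    have hpre : MeasurableSet (A p ⁻¹' (Metric.ball 0 1)) := hAm measurableSet_ball
    obtain ⟨κ, hκ⟩ := diag_lint (fun _ : Fin (n+1) => (2:ℝ)) (fun k => 1 - 2 * (p k : ℝ))
      (fun _ => two_ne_zero)
    have key : ∀ G : (Fin (n+1) → ℝ) → ENNReal, Measurable G →
        ∫⁻ y in A p ⁻¹' (Metric.ball 0 1), G (A p y) = κ * ∫⁻ z in Metric.ball 0 1, G z := by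
      intro G hG
      rw [← lintegral_indicator hpre, ← lintegral_indicator measurableSet_ball,
        ← hκ _ (hG.indicator measurableSet_ball)]
      rfl
    have hmsg : Measurable fun z : Fin (n+1) → ℝ => ENNReal.ofReal (1 + a p * sg (z i)) :=
      (measurable_const.add (measurable_const.mul
        (sg_meas.comp (measurable_pi_apply i)))).ennreal_ofReal
    have hgB : Measurable fun z => g (B p z) := hg.comp hBm
    have E1 : ∫⁻ y in A p ⁻¹' (Metric.ball 0 1),
        ENNReal.ofReal (q (Function.update (fun k => ⌈y k⌉) i ⌈2 * y i⌉)) * g (Ψ y) =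
        ∫⁻ y in A p ⁻¹' (Metric.ball 0 1), (fun z => ENNReal.ofReal (avg i q p) *
          (ENNReal.ofReal (1 + a p * sg (z i)) * g (B p (f p z)))) (A p y) := by
      refine setLIntegral_congr_fun hpre fun y hy => ?_
      have hy1 : ‖A p y‖ < 1 := mem_ball_zero_iff.1 hy
      have hc : (fun k => ⌈y k⌉) = p := funext (hin p y hy1)
      simp only [hΨB, hc]
      rw [← mul_assoc]
      congr 1
      obtain ⟨h1, h2⟩ := hq (Function.update p i (2 * p i))
      obtain ⟨h3, h4⟩ := hq (Function.update p i (2 * p i - 1))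
      rw [← ENNReal.ofReal_mul (by unfold avg; linarith)]
      congr 1
      have hz := (norm_le_pi_norm (A p y) i).trans_lt hy1
      simp only [hA, Real.norm_eq_abs, abs_lt] at hz
      have hpos : q (Function.update p i (2 * p i)) + q (Function.update p i (2 * p i - 1)) ≠ 0 :=
        by linarith
      by_cases hs : 0 < A p y i
      · have hceil : ⌈2 * y i⌉ = 2 * p i := by
          simp only [hA] at hs
          rw [Int.ceil_eq_iff]; push_cast; constructor <;> linarith
        rw [hceil]
        unfold sg avg
        rw [if_pos hs]
        simp only [ha_def]
        field_simp
        ring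
      · have hceil : ⌈2 * y i⌉ = 2 * p i - 1 := by
          simp only [hA] at hs
          rw [Int.ceil_eq_iff]; push_cast; constructor <;> linarith
        rw [hceil]
        unfold sg avg
        rw [if_neg hs]
        simp only [ha_def]
        field_simp
        ring
    have E2 : ∫⁻ y in A p ⁻¹' (Metric.ball 0 1),
        ENNReal.ofReal (avg i q (fun k => ⌈y k⌉)) * g y =
        ∫⁻ y in A p ⁻¹' (Metric.ball 0 1), (fun z => ENNReal.ofReal (avg i q p) *
          g (B p z)) (A p y) := by
      refine setLIntegral_congr_fun hpre fun y hy => ?_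
      have hy1 : ‖A p y‖ < 1 := mem_ball_zero_iff.1 hy
      have hc : (fun k => ⌈y k⌉) = p := funext (hin p y hy1)
      simp only [hc, hBA]
    have hm3 : Measurable fun z => ENNReal.ofReal (1 + a p * sg (z i)) * g (B p (f p z)) :=
      hmsg.mul (hgB.comp hfm)
    have k1 := key (fun z => ENNReal.ofReal (avg i q p) *
          (ENNReal.ofReal (1 + a p * sg (z i)) * g (B p (f p z)))) (measurable_const.mul hm3)
    have k2 := key (fun z => ENNReal.ofReal (avg i q p) * g (B p z)) (measurable_const.mul hgB)
    rw [E1, E2, k1, k2, lintegral_const_mul _ hm3,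
      lintegral_const_mul _ hgB, f4 p _ hgB]

end RY

namespace RY

/-- index of the cell containing `x` in the grid with exponents `s` -/
noncomputable def cell {d : ℕ} (s : Fin d → ℕ) (x : Fin d → ℝ) : Fin d → ℤ :=
  fun k => ⌈(2:ℝ) ^ s k * x k⌉

lemma grid_step (n : ℕ) (θ : ℝ) (hθ : 0 < θ) : ∃ C : ℝ, 0 ≤ C ∧
    ∀ (i : Fin (n+1)) (s : Fin (n+1) → ℕ) (q : (Fin (n+1) → ℤ) → ℝ) (m M : ℝ), θ ≤ m → M ≤ 1 / θ →
    (∀ j k, s j ≤ s k + 1) →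
    (∀ p, m ≤ q p ∧ q p ≤ M) →
    ∃ Φ : (Fin (n+1) → ℝ) → (Fin (n+1) → ℝ),
      (∀ x y, ‖(Φ x - x) - (Φ y - y)‖ ≤ C * (M - m) * ‖x - y‖) ∧
      (∀ x k, ⌈Φ x k⌉ = ⌈x k⌉) ∧
      ∀ g : (Fin (n+1) → ℝ) → ENNReal, Measurable g →
        ∫⁻ y, ENNReal.ofReal (q (cell (Function.update s i (s i + 1)) y)) * g (Φ y) =
        ∫⁻ y, ENNReal.ofReal (avg i q (cell s y)) * g y := by
  obtain ⟨C, hC, H⟩ := unit_step n θ hθ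
  refine ⟨2 * C, by positivity, fun i s q m M hm hM hs hq => ?_⟩
  obtain ⟨Ψ, h1, h2, h3⟩ := H i q m M hm hM hq
  have hMm : 0 ≤ M - m := by linarith [(hq 0).1, (hq 0).2]
  set D : (Fin (n+1) → ℝ) → (Fin (n+1) → ℝ) := fun x k => (2:ℝ) ^ s k * x k with hD
  set D' : (Fin (n+1) → ℝ) → (Fin (n+1) → ℝ) := fun x k => x k / (2:ℝ) ^ s k with hD'
  have hpow : ∀ k, (0:ℝ) < 2 ^ s k := fun k => by positivity
  have hDD : ∀ x, D (D' x) = x := by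
    intro x; funext k; simp only [hD, hD']; have := (hpow k).ne'; field_simp
  have hDD2 : ∀ x, D' (D x) = x := by
    intro x; funext k; simp only [hD, hD']; have := (hpow k).ne'; field_simp
  have hΨm : Measurable Ψ := (disp_cont Ψ _ h1).measurable
  have hD'm : Measurable D' := by
    refine measurable_pi_lambda _ fun k => ?_
    simp only [hD']; fun_prop
  refine ⟨fun x => D' (Ψ (D x)), ?_, ?_, ?_⟩
  · intro x y
    refine (pi_norm_le_iff_of_nonneg (by positivity)).2 fun k => ?_
    have e : ((D' (Ψ (D x)) - x) - (D' (Ψ (D y)) - y)) k =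
        ((Ψ (D x) - D x) - (Ψ (D y) - D y)) k / 2 ^ s k := by
      simp only [Pi.sub_apply, hD, hD']; have := (hpow k).ne'; field_simp
    rw [e, norm_div, Real.norm_of_nonneg (hpow k).le, div_le_iff₀ (hpow k)]
    refine (norm_le_pi_norm _ k).trans ((h1 _ _).trans ?_)
    have h5 : ‖D x - D y‖ ≤ 2 * 2 ^ s k * ‖x - y‖ := by
      refine (pi_norm_le_iff_of_nonneg (by positivity)).2 fun j => ?_
      have e2 : (D x - D y) j = 2 ^ s j * (x - y) j := by
        simp only [Pi.sub_apply, hD]; ring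
      rw [e2, norm_mul, Real.norm_of_nonneg (hpow j).le]
      have h6 : (2:ℝ) ^ s j ≤ 2 * 2 ^ s k := by
        rw [← pow_succ']; exact pow_le_pow_right₀ one_le_two (hs j k)
      exact mul_le_mul h6 (norm_le_pi_norm _ j) (norm_nonneg _) (by positivity)
    calc _ ≤ C * (M - m) * (2 * 2 ^ s k * ‖x - y‖) := by gcongr
      _ = _ := by ring
  · intro x k
    have h4 := h2 (D x) k
    have h5 : (2:ℝ) ^ s k * D' (Ψ (D x)) k = Ψ (D x) k := congrFun (hDD (Ψ (D x))) k
    rw [← h5] at h4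
    have h6 : ⌈(2:ℝ) ^ s k * D' (Ψ (D x)) k⌉ = ⌈(2:ℝ) ^ s k * x k⌉ := h4
    have key : ∀ (u : ℝ) (N : ℤ), ⌈u⌉ ≤ N ↔ ⌈(2:ℝ) ^ s k * u⌉ ≤ 2 ^ s k * N := by
      intro u N
      rw [Int.ceil_le, Int.ceil_le]; push_cast
      exact (mul_le_mul_iff_right₀ (hpow k)).symm
    apply le_antisymm
    · rw [key, h6, ← key]
    · rw [key, ← h6, ← key]
  · intro g hg
    obtain ⟨κ, hκ⟩ := diag_lint (fun k : Fin (n+1) => (2:ℝ) ^ s k) 0 (fun k => (hpow k).ne')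
    simp only [Pi.zero_apply, add_zero] at hκ
    have m1 : Measurable fun y : Fin (n+1) → ℝ =>
        ENNReal.ofReal (q (Function.update (fun k => ⌈y k⌉) i ⌈2 * y i⌉)) := by
      refine ceil_meas (fun p => ENNReal.ofReal (q p))
        (fun y => Function.update (fun k => ⌈y k⌉) i ⌈2 * y i⌉) fun k => ?_
      by_cases hk : k = i
      · subst hk; simp only [Function.update_self]
        exact ((measurable_pi_apply k).const_mul 2).ceil
      · simp only [Function.update_of_ne hk]
        exact (measurable_pi_apply k).ceil
    have m2 : Measurable fun y : Fin (n+1) → ℝ => ENNReal.ofReal (avg i q (fun k => ⌈y k⌉)) :=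
      ceil_meas (fun p => ENNReal.ofReal (avg i q p))
        (fun y k => ⌈y k⌉) fun k => (measurable_pi_apply k).ceil
    have k1 := hκ (fun y => ENNReal.ofReal (q (Function.update (fun k => ⌈y k⌉) i ⌈2 * y i⌉)) *
      g (D' (Ψ y))) (m1.mul ((hg.comp hD'm).comp hΨm))
    have k2 := hκ (fun y => ENNReal.ofReal (avg i q (fun k => ⌈y k⌉)) * g (D' y))
      (m2.mul (hg.comp hD'm))
    rw [h3 (fun y => g (D' y)) (hg.comp hD'm), ← k2] at k1
    have l1 : ∀ y : Fin (n+1) → ℝ, cell (Function.update s i (s i + 1)) y =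
        Function.update (fun k => ⌈(2:ℝ) ^ s k * y k⌉) i ⌈2 * ((2:ℝ) ^ s i * y i)⌉ := by
      intro y; funext k
      unfold cell
      by_cases hk : k = i
      · subst hk; simp only [Function.update_self, pow_succ']; rw [mul_assoc]
      · simp only [Function.update_of_ne hk]
    simp only [l1]
    refine k1.trans (lintegral_congr fun y => ?_)
    have : D' (D y) = y := hDD2 y
    simp only [hD] at this
    rw [this]
    rfl

lemma eu_norm {d : ℕ} (x y : Fin d → ℝ) :
    Real.sqrt (∑ i, (x i - y i) ^ 2) = ‖WithLp.toLp 2 (x - y)‖ := by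
  rw [EuclideanSpace.norm_eq]; simp

lemma eu_lip {d : ℕ} (Φ : (Fin d → ℝ) → (Fin d → ℝ)) (L : ℝ) (hL : 0 ≤ L)
    (h : ∀ x y, ‖(Φ x - x) - (Φ y - y)‖ ≤ L * ‖x - y‖) (x y : Fin d → ℝ) :
    Real.sqrt (∑ i, (Φ x i - Φ y i) ^ 2) ≤ (1 + d * L) * Real.sqrt (∑ i, (x i - y i) ^ 2) := by
  rw [eu_norm, eu_norm]
  have e : Φ x - Φ y = ((Φ x - x) - (Φ y - y)) + (x - y) := by abel
  rw [e, WithLp.toLp_add]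
  refine (norm_add_le _ _).trans ?_
  have h1 : ∀ v : Fin d → ℝ, ‖v‖ ≤ ‖WithLp.toLp 2 v‖ := by
    intro v
    refine (pi_norm_le_iff_of_nonneg (norm_nonneg _)).2 fun j => ?_
    exact PiLp.norm_apply_le (WithLp.toLp 2 v) j
  have h2 : ∀ v : Fin d → ℝ, ‖WithLp.toLp 2 v‖ ≤ d * ‖v‖ := by
    intro v
    rw [EuclideanSpace.norm_eq]
    apply Real.sqrt_le_iff.2 ⟨by positivity, ?_⟩
    calc ∑ i, ‖v i‖ ^ 2 ≤ ∑ i : Fin d, ‖v‖ ^ 2 := by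
          gcongr with i; exact norm_le_pi_norm v i
      _ = d * ‖v‖ ^ 2 := by simp
      _ ≤ (d * d) * ‖v‖ ^ 2 := by
          gcongr
          exact_mod_cast Nat.le_mul_self d
      _ = _ := by ring
  have h3 := h2 ((Φ x - x) - (Φ y - y))
  have h4 := h x y
  have h5 := h1 (x - y)
  have h6 : (d:ℝ) * ‖(Φ x - x) - (Φ y - y)‖ ≤ d * (L * ‖WithLp.toLp 2 (x - y)‖) := by
    gcongr; exact h4.trans (by gcongr)
  linarith

/-- there is a good map carrying the density `(s,q)` to `(s',q')` -/
def Red {d : ℕ} (K : ℝ) (N : ℕ) (s : Fin d → ℕ) (q : (Fin d → ℤ) → ℝ)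
    (s' : Fin d → ℕ) (q' : (Fin d → ℤ) → ℝ) : Prop :=
  ∃ Φ : (Fin d → ℝ) → (Fin d → ℝ), Measurable Φ ∧
    (∀ x y, Real.sqrt (∑ i, (Φ x i - Φ y i) ^ 2) ≤ (1 + K) ^ N * Real.sqrt (∑ i, (x i - y i) ^ 2)) ∧
    (∀ x k, ⌈Φ x k⌉ = ⌈x k⌉) ∧
    ∀ g : (Fin d → ℝ) → ENNReal, Measurable g →
      ∫⁻ y, ENNReal.ofReal (q (cell s y)) * g (Φ y) = ∫⁻ y, ENNReal.ofReal (q' (cell s' y)) * g y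

lemma Red.refl {d : ℕ} (K : ℝ) (s : Fin d → ℕ) (q : (Fin d → ℤ) → ℝ) : Red K 0 s q s q :=
  ⟨fun x => x, measurable_id, fun x y => by simp, fun x k => rfl, fun g hg => rfl⟩

lemma Red.trans {d : ℕ} {K : ℝ} (hK : 0 ≤ K) {N N' : ℕ} {s s' s'' : Fin d → ℕ}
    {q q' q'' : (Fin d → ℤ) → ℝ} (h : Red K N s q s' q') (h' : Red K N' s' q' s'' q'') :
    Red K (N + N') s q s'' q'' := by
  obtain ⟨Φ, a1, a2, a3, a4⟩ := h
  obtain ⟨Φ', b1, b2, b3, b4⟩ := h'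
  refine ⟨fun x => Φ' (Φ x), b1.comp a1, fun x y => ?_, fun x k => by rw [b3, a3], fun g hg => ?_⟩
  · refine (b2 _ _).trans ?_
    rw [pow_add, mul_comm ((1 + K) ^ N), mul_assoc]
    exact mul_le_mul_of_nonneg_left (a2 x y) (by positivity)
  · rw [a4 (fun z => g (Φ' z)) (hg.comp b1), b4 g hg]

lemma reduce (n : ℕ) (θ : ℝ) (hθ : 0 < θ) : ∃ C : ℝ, 0 ≤ C ∧
    ∀ (l : ℕ) (m M : ℝ), θ ≤ m → M ≤ 1 / θ → ∀ (q : (Fin (n+1) → ℤ) → ℝ), 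
    (∀ p, m ≤ q p ∧ q p ≤ M) → ∃ q' : (Fin (n+1) → ℤ) → ℝ,
      Red (C * (M - m)) ((n+1) * l) (fun _ => l) q (fun _ => 0) q' := by
  obtain ⟨C, hC, H⟩ := grid_step n θ hθ
  refine ⟨((n+1 : ℕ):ℝ) * C, by positivity, fun l m M hm hM => ?_⟩
  have level : ∀ l j : ℕ, j ≤ n + 1 → ∀ (q : (Fin (n+1) → ℤ) → ℝ), (∀ p, m ≤ q p ∧ q p ≤ M) →
      ∃ q' : (Fin (n+1) → ℤ) → ℝ, (∀ p, m ≤ q' p ∧ q' p ≤ M) ∧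
        Red (((n+1 : ℕ):ℝ) * C * (M - m)) j (fun _ => l + 1) q
          (fun k => if (k : ℕ) < j then l else l + 1) q' := by
    intro l j
    induction j with
    | zero =>
      intro _ q hq
      exact ⟨q, hq, by simpa using Red.refl _ _ q⟩
    | succ j ih =>
      intro hj q hq
      have hMm : 0 ≤ M - m := by linarith [(hq 0).1, (hq 0).2]
      obtain ⟨q1, hq1, h1⟩ := ih (by omega) q hq
      set i : Fin (n+1) := ⟨j, by omega⟩ with hi
      set s : Fin (n+1) → ℕ := fun k => if (k : ℕ) < j + 1 then l else l + 1 with hs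
      obtain ⟨Φ, c1, c2, c3⟩ := H i s q1 m M hm hM (by
        intro a b; simp only [hs]; split_ifs <;> omega) hq1
      refine ⟨avg i q1, ?_, ?_⟩
      · intro p
        have u1 := hq1 (Function.update p i (2 * p i - 1))
        have u2 := hq1 (Function.update p i (2 * p i))
        unfold avg
        constructor <;> linarith [u1.1, u1.2, u2.1, u2.2]
      · refine h1.trans (by positivity) (N' := 1) ?_
        have hss : Function.update s i (s i + 1) = fun k : Fin (n+1) => if (k : ℕ) < j then l else l + 1 := by
          funext k
          by_cases hk : k = i
          · subst hk; simp [hs, hi]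
          · have : (k : ℕ) ≠ j := fun h => hk (Fin.ext h)
            rw [Function.update_of_ne hk]
            simp only [hs]
            split_ifs <;> omega
        rw [hss] at c3
        refine ⟨Φ, (disp_cont Φ _ c1).measurable, fun x y => ?_, c2, c3⟩
        have := eu_lip Φ (C * (M - m)) (by positivity) c1 x y
        rw [pow_one, mul_assoc]
        exact this
  induction l with
  | zero => intro q _; exact ⟨q, by simpa using Red.refl _ _ q⟩
  | succ l ih =>
    intro q hq
    have hMm : 0 ≤ M - m := by linarith [(hq 0).1, (hq 0).2]
    obtain ⟨q1, hq1, h1⟩ := level l (n+1) le_rfl q hq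
    obtain ⟨q2, h2⟩ := ih q1 hq1
    have e : (fun k : Fin (n+1) => if (k : ℕ) < n + 1 then l else l + 1) = fun _ => l := by
      funext k; rw [if_pos k.2]
    rw [e] at h1
    refine ⟨q2, ?_⟩
    have := h1.trans (by positivity) h2
    rwa [show n + 1 + (n + 1) * l = (n+1) * (l+1) by ring] at this

end RY
namespace RY

lemma pow_bd (d : ℕ) (C X x : ℝ) (hC : 0 ≤ C) (hx : 0 ≤ x) (hX : x ≤ X) :
    (1 + C * x) ^ d ≤ 1 + (C * d * (1 + C * X) ^ (d - 1) + 1) * x := by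
  have h := abs_pow_sub_pow_le (1 + C * x) 1 d
  have h0 : 0 ≤ C * x := by positivity
  have hCX : C * x ≤ C * X := by gcongr
  have e1 : |1 + C * x| = 1 + C * x := abs_of_nonneg (by linarith)
  rw [one_pow, add_sub_cancel_left, abs_of_nonneg h0, e1, abs_one,
    max_eq_left (by linarith)] at h
  have h1 := le_abs_self ((1 + C * x) ^ d - 1)
  have h2 : C * x * d * (1 + C * x) ^ (d - 1) ≤ C * x * d * (1 + C * X) ^ (d - 1) := by gcongr
  nlinarith

end RY

theorem stmt_5 (d : ℕ) (hd : 1 ≤ d) (θ : ℝ) (hθ0 : 0 < θ) (hθ1 : θ < 1) :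
    ∃ Δ : ℝ, 0 < Δ ∧
      ∀ (l : ℕ) (ρ : (Fin d → ℝ) → ℝ),
        (∀ p : Fin d → Fin (2 ^ l), ∀ x ∈ dyadicCube (2 ^ l) p, ∀ y ∈ dyadicCube (2 ^ l) p,
          ρ x = ρ y) →
        (∫ x in unitCube d, ρ x) = 1 →
        (∀ x ∈ unitCube d, θ ≤ ρ x ∧ ρ x ≤ 1 / θ) →
        ∃ f : (Fin d → ℝ) → (Fin d → ℝ),
          (∀ x ∈ unitCube d, ∀ y ∈ unitCube d,
            eudist (f x) (f y) ≤
              (1 + Δ * (sSup (ρ '' unitCube d) - sInf (ρ '' unitCube d))) ^ l *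
                eudist x y) ∧
          Measure.map f
              ((volume.restrict (unitCube d)).withDensity fun x => ENNReal.ofReal (ρ x)) =
            volume.restrict (unitCube d) := by
  obtain ⟨n, rfl⟩ : ∃ n, d = n + 1 := ⟨d - 1, by omega⟩
  obtain ⟨C, hC, H⟩ := RY.reduce n θ hθ0
  refine ⟨C * (n+1 : ℕ) * (1 + C * (1 / θ)) ^ (n + 1 - 1) + 1, by positivity, ?_⟩
  intro l ρ hconst hint hbd
  set M := sSup (ρ '' unitCube (n+1)) with hMdef
  set m := sInf (ρ '' unitCube (n+1)) with hmdef
  have hne : (ρ '' unitCube (n+1)).Nonempty := ⟨ρ 0, 0, fun i => by simp, rfl⟩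
  have hm : θ ≤ m := le_csInf hne (by rintro _ ⟨x, hx, rfl⟩; exact (hbd x hx).1)
  have hM : M ≤ 1 / θ := csSup_le hne (by rintro _ ⟨x, hx, rfl⟩; exact (hbd x hx).2)
  have hmM : ∀ x ∈ unitCube (n+1), m ≤ ρ x ∧ ρ x ≤ M := by
    intro x hx
    exact ⟨csInf_le ⟨θ, by rintro _ ⟨x, hx, rfl⟩; exact (hbd x hx).1⟩ ⟨x, hx, rfl⟩,
      le_csSup ⟨1 / θ, by rintro _ ⟨x, hx, rfl⟩; exact (hbd x hx).2⟩ ⟨x, hx, rfl⟩⟩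
  have hMm : 0 ≤ M - m := by
    have := hmM 0 (fun i => by simp)
    linarith [this.1, this.2]
  have hK : (0:ℝ) < 2 ^ l := by positivity
  have hKz : (1:ℤ) ≤ 2 ^ l := one_le_pow₀ (by norm_num)
  set q : (Fin (n+1) → ℤ) → ℝ := fun p =>
    ρ (fun k => ((max 1 (min (p k) (2 ^ l)) : ℤ) : ℝ) / 2 ^ l) with hq
  have hqb : ∀ p, m ≤ q p ∧ q p ≤ M := by
    intro p
    apply hmM
    intro k
    have h1 : (1:ℤ) ≤ max 1 (min (p k) (2 ^ l)) := le_max_left _ _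
    have h2 : max 1 (min (p k) (2 ^ l)) ≤ (2:ℤ) ^ l := max_le hKz (min_le_right _ _)
    have h1' : (1:ℝ) ≤ ((max 1 (min (p k) (2 ^ l)) : ℤ) : ℝ) := by exact_mod_cast h1
    have h2' : ((max 1 (min (p k) (2 ^ l)) : ℤ) : ℝ) ≤ 2 ^ l := by exact_mod_cast h2
    exact ⟨by positivity, by rw [div_le_one hK]; exact h2'⟩
  obtain ⟨q', Φ, c1, c2, c3, c4⟩ := H l m M hm hM q hqb
  refine ⟨Φ, ?_, ?_⟩
  · intro x _ y _
    refine (c2 x y).trans ?_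
    unfold eudist
    refine mul_le_mul_of_nonneg_right ?_ (Real.sqrt_nonneg _)
    rw [pow_mul]
    refine pow_le_pow_left₀ (by positivity) ?_ l
    exact RY.pow_bd (n+1) C (1/θ) (M - m) hC hMm (by linarith)
  · set U : Set (Fin (n+1) → ℝ) := {x | ∀ k, ⌈x k⌉ = 1} with hU
    have hUmem : ∀ x, x ∈ U ↔ ∀ k, 0 < x k ∧ x k ≤ 1 := by
      intro x
      simp only [hU, Set.mem_setOf_eq, Int.ceil_eq_iff]
      norm_num
    have hUm : MeasurableSet U := by
      have : U = ⋂ k, {x : Fin (n+1) → ℝ | ⌈x k⌉ = 1} := by ext x; simp [hU]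
      rw [this]
      exact MeasurableSet.iInter fun k => (measurable_pi_apply k).ceil (measurableSet_singleton 1)
    have hUae : unitCube (n+1) =ᵐ[volume] U := by
      filter_upwards [RY.ae_nonint (n+1)] with y hy
      apply propext
      show y ∈ unitCube (n+1) ↔ y ∈ U
      rw [hUmem]
      constructor
      · intro h k
        refine ⟨lt_of_le_of_ne (h k).1 fun h0 => hy k 0 (by rw [← h0]; simp), (h k).2⟩
      · intro h k; exact ⟨(h k).1.le, (h k).2⟩
    have hρq : ∀ x ∈ U, ρ x = q (RY.cell (fun _ => l) x) := by
      intro x hx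
      rw [hUmem] at hx
      have b1 : ∀ k, 1 ≤ ⌈(2:ℝ) ^ l * x k⌉ := fun k =>
        Int.one_le_ceil_iff.2 (mul_pos hK (hx k).1)
      have b2 : ∀ k, ⌈(2:ℝ) ^ l * x k⌉ ≤ 2 ^ l := fun k => by
        rw [Int.ceil_le]; push_cast
        nlinarith [(hx k).2]
      have b3 : ∀ k, (⌈(2:ℝ) ^ l * x k⌉ - 1).toNat < 2 ^ l := fun k => by
        have := b1 k
        have := b2 k
        zify
        rw [Int.toNat_of_nonneg (by omega)]
        omega
      have b4 : ∀ k, (((⌈(2:ℝ) ^ l * x k⌉ - 1).toNat : ℕ) : ℝ) = ⌈(2:ℝ) ^ l * x k⌉ - 1 := fun k => by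
        have h : (((⌈(2:ℝ) ^ l * x k⌉ - 1).toNat : ℕ) : ℤ) = ⌈(2:ℝ) ^ l * x k⌉ - 1 :=
          Int.toNat_of_nonneg (by have := b1 k; omega)
        have h' : ((((⌈(2:ℝ) ^ l * x k⌉ - 1).toNat : ℕ) : ℤ) : ℝ) = ((⌈(2:ℝ) ^ l * x k⌉ - 1 : ℤ) : ℝ) := by
          rw [h]
        push_cast at h'
        exact h'
      refine hconst (fun k => ⟨(⌈(2:ℝ) ^ l * x k⌉ - 1).toNat, b3 k⟩) x ?_ _ ?_
      · intro k
        have h1 := Int.le_ceil ((2:ℝ) ^ l * x k)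
        have h2 := Int.ceil_lt_add_one ((2:ℝ) ^ l * x k)
        simp only [b4]
        push_cast
        rw [div_lt_iff₀ hK, le_div_iff₀ hK]
        constructor <;> linarith
      · intro k
        have e : max 1 (min (RY.cell (fun _ => l) x k) (2 ^ l)) = ⌈(2:ℝ) ^ l * x k⌉ := by
          unfold RY.cell
          rw [min_eq_left (b2 k), max_eq_right (b1 k)]
        simp only [b4, e]
        push_cast
        rw [div_lt_div_iff_of_pos_right hK, div_le_div_iff_of_pos_right hK]
        constructor <;> linarith
    set μ := (volume.restrict (unitCube (n+1))).withDensity fun x => ENNReal.ofReal (ρ x) with hμ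
    set c := ENNReal.ofReal (q' fun _ => 1) with hc
    have main : ∀ S, MeasurableSet S → Measure.map Φ μ S = c * volume.restrict (unitCube (n+1)) S := by
      intro S hS
      have hS' : MeasurableSet (Φ ⁻¹' S) := c1 hS
      rw [Measure.map_apply c1 hS, hμ, withDensity_apply _ hS', Measure.restrict_congr_set hUae,
        Measure.restrict_restrict hS', Measure.restrict_apply hS]
      have e1 : ∫⁻ x in Φ ⁻¹' S ∩ U, ENNReal.ofReal (ρ x) =
          ∫⁻ x, ENNReal.ofReal (q (RY.cell (fun _ => l) x)) * (S ∩ U).indicator 1 (Φ x) := by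
        rw [← lintegral_indicator (hS'.inter hUm)]
        refine lintegral_congr fun x => ?_
        have hUU : Φ x ∈ U ↔ x ∈ U := by simp only [hU, Set.mem_setOf_eq, c3]
        by_cases hx : x ∈ Φ ⁻¹' S ∩ U
        · rw [Set.indicator_of_mem hx, Set.indicator_of_mem (show Φ x ∈ S ∩ U from
            ⟨hx.1, hUU.2 hx.2⟩), hρq x hx.2]
          simp
        · rw [Set.indicator_of_notMem hx, Set.indicator_of_notMem (show Φ x ∉ S ∩ U from
            fun h => hx ⟨h.1, hUU.1 h.2⟩), mul_zero]
      rw [e1, c4 _ (measurable_one.indicator (hS.inter hUm))]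
      have e2 : ∀ y, ENNReal.ofReal (q' (RY.cell (fun _ => 0) y)) * (S ∩ U).indicator 1 y =
          (S ∩ U).indicator (fun _ => c) y := by
        intro y
        by_cases hy : y ∈ S ∩ U
        · rw [Set.indicator_of_mem hy, Set.indicator_of_mem hy]
          have : RY.cell (fun _ => 0) y = fun _ => 1 := by
            funext k
            unfold RY.cell
            rw [pow_zero, one_mul]; exact hy.2 k
          rw [this]; simp [hc]
        · rw [Set.indicator_of_notMem hy, Set.indicator_of_notMem hy, mul_zero]
      simp only [e2]
      rw [lintegral_indicator (hS.inter hUm), setLIntegral_const]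
    have hvol : volume (unitCube (n+1)) = 1 := by
      have : unitCube (n+1) = Set.Icc (0 : Fin (n+1) → ℝ) 1 := by
        ext x
        simp only [unitCube, Set.mem_setOf_eq, Set.mem_Icc, Pi.le_def, Pi.zero_apply, Pi.one_apply]
        exact forall_and
      rw [this, Real.volume_Icc_pi]; simp
    have hcm : MeasurableSet (unitCube (n+1)) := by
      have : unitCube (n+1) = Set.Icc (0 : Fin (n+1) → ℝ) 1 := by
        ext x
        simp only [unitCube, Set.mem_setOf_eq, Set.mem_Icc, Pi.le_def, Pi.zero_apply, Pi.one_apply]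
        exact forall_and
      rw [this]; exact measurableSet_Icc
    have hc1 : c = 1 := by
      have h1 := main Set.univ MeasurableSet.univ
      rw [Measure.map_apply c1 MeasurableSet.univ, Set.preimage_univ, hμ,
        withDensity_apply _ MeasurableSet.univ, Measure.restrict_univ, Measure.restrict_apply_univ,
        hvol, mul_one, ← ofReal_integral_eq_lintegral_ofReal (integrable_of_integral_eq_one hint),
        hint, ENNReal.ofReal_one] at h1
      · exact h1.symm
      · rw [Filter.EventuallyLE, ae_restrict_iff' hcm]
        exact Filter.Eventually.of_forall fun x hx => hθ0.le.trans (hbd x hx).1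
    refine Measure.ext fun S hS => ?_
    rw [main S hS, hc1, one_mul]
end
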